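/- arXiv:1008.4908 — 2 statements merged into one kernel-verified Lean document; each statement's English description precedes it below -/
import Mathlib

section
/- The integral group homology of Γ is: H₀(Γ; Z) ≅ Z, H₁(Γ; Z) ≅ ker(𝒟), H₂(Γ; Z) ≅ Z^q, H_j(Γ; Z) ≅ (Z/N)³ for every odd j ≥ 3, and H_j(Γ; Z) = 0 for every even j ≥ 4, where 𝒟 : (Z/N)³ → (Z/N)^q is the linear map 𝒟(x₁, x₂, x₃) = (δ₁(j)x₁ + δ₂(j)x₂ + δ₃(j)x₃)_{j=1,…,q}. -/
namespace Stmt6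

open Finsupp in
/-- The `n`-th differential of the (inhomogeneous) bar complex computing the homology of the
group `G` with trivial coefficients in the commutative ring `R`.  The module of `n`-chains is
the free `R`-module on `n`-tuples of elements of `G`, and on a basis element
`(g₁, …, g_{n+1})` the differential is
`(g₂,…,g_{n+1}) + ∑ᵢ (-1)ⁱ (g₁,…,gᵢgᵢ₊₁,…,g_{n+1}) + (-1)^{n+1} (g₁,…,g_n)`. -/
noncomputable def barDiff (R : Type) [CommRing R] (G : Type*) [Group G] (n : ℕ) :
    ((Fin (n + 1) → G) →₀ R) →ₗ[R] ((Fin n → G) →₀ R) :=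
  Finsupp.lift ((Fin n → G) →₀ R) R (Fin (n + 1) → G) fun c =>
    Finsupp.single (fun j : Fin n => c j.succ) (1 : R)
      + ∑ i : Fin n, Finsupp.single
          (fun j : Fin n => if (j : ℕ) < (i : ℕ) then c (Fin.castSucc j)
            else if (j : ℕ) = (i : ℕ) then c (Fin.castSucc i) * c i.succ
            else c j.succ) ((-1 : R) ^ ((i : ℕ) + 1))
      + Finsupp.single (fun j : Fin n => c (Fin.castSucc j)) ((-1 : R) ^ (n + 1))

/-- The submodule of `k`-cycles of the bar complex of `G` (with trivial coefficients `R`). -/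
noncomputable def barCycles (R : Type) [CommRing R] (G : Type*) [Group G] :
    (k : ℕ) → Submodule R ((Fin k → G) →₀ R)
  | 0 => ⊤
  | (k + 1) => LinearMap.ker (barDiff R G k)

/-- The submodule of `k`-boundaries of the bar complex of `G`. -/
noncomputable def barBoundaries (R : Type) [CommRing R] (G : Type*) [Group G] (k : ℕ) :
    Submodule R ((Fin k → G) →₀ R) :=
  LinearMap.range (barDiff R G k)

/-- Group homology `H_k(G; R)` with trivial coefficients, defined via the bar complex as the
image of the `k`-cycles in the quotient of the `k`-chains by the `k`-boundaries
(i.e. as `Z_k / B_k`). -/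
noncomputable def barHomology (R : Type) [CommRing R] (G : Type*) [Group G] (k : ℕ) :=
  ↥(Submodule.map (barBoundaries R G k).mkQ (barCycles R G k))

noncomputable instance (R : Type) [CommRing R] (G : Type*) [Group G] (k : ℕ) :
    AddCommGroup (barHomology R G k) :=
  inferInstanceAs (AddCommGroup ↥(Submodule.map (barBoundaries R G k).mkQ (barCycles R G k)))

noncomputable instance (R : Type) [CommRing R] (G : Type*) [Group G] (k : ℕ) :
    Module R (barHomology R G k) :=
  inferInstanceAs (Module R ↥(Submodule.map (barBoundaries R G k).mkQ (barCycles R G k)))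

/-- The relators of the presentation
`Γ = ⟨σ₁, σ₂, σ₃ ∣ σᵢ^N = 1 (i = 1,2,3), σ₁^{δ₁(j)} σ₂^{δ₂(j)} σ₃^{δ₃(j)} = 1 (0 ≤ j ≤ q)⟩`,
where `N = q² + q + 1` and `δ i : Fin (q+1) → ZMod N` are the three ordered difference sets
(exponentiation by `δ ∈ ZMod N` means exponentiation by the representative `δ.val`).
The generators `σ₁, σ₂, σ₃` correspond to `0, 1, 2 : Fin 3`. -/
def singerRels (q : ℕ) (δ : Fin 3 → Fin (q + 1) → ZMod (q ^ 2 + q + 1)) :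
    Set (FreeGroup (Fin 3)) :=
  {r | (∃ i : Fin 3, r = FreeGroup.of i ^ (q ^ 2 + q + 1)) ∨
    (∃ j : Fin (q + 1),
      r = FreeGroup.of 0 ^ (δ 0 j).val * FreeGroup.of 1 ^ (δ 1 j).val *
        FreeGroup.of 2 ^ (δ 2 j).val)}

/-- The panel-regular `Ã₂`-lattice
`Γ = ⟨σ₁, σ₂, σ₃ ∣ σᵢ^N = 1, σ₁^{δ₁(j)} σ₂^{δ₂(j)} σ₃^{δ₃(j)} = 1 for all j⟩`. -/
def SingerLattice (q : ℕ) (δ : Fin 3 → Fin (q + 1) → ZMod (q ^ 2 + q + 1)) :=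
  PresentedGroup (singerRels q δ)

instance (q : ℕ) (δ : Fin 3 → Fin (q + 1) → ZMod (q ^ 2 + q + 1)) :
    Group (SingerLattice q δ) := by
  unfold SingerLattice; infer_instance

/-- The linear map `𝒟 : (ZMod N)³ → (ZMod N)^q` given by
`𝒟(x₁, x₂, x₃) = (δ₁(j)x₁ + δ₂(j)x₂ + δ₃(j)x₃)_{j = 1, …, q}`. -/
noncomputable def diffMap (q : ℕ) (δ : Fin 3 → Fin (q + 1) → ZMod (q ^ 2 + q + 1)) :
    (Fin 3 → ZMod (q ^ 2 + q + 1)) →ₗ[ZMod (q ^ 2 + q + 1)] (Fin q → ZMod (q ^ 2 + q + 1)) :=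
  Matrix.mulVecLin (Matrix.of fun (j : Fin q) (i : Fin 3) => δ i j.succ)

/-- `Δ ⊆ ZMod N` is a planar difference set of order `q` if it has `q + 1` elements and every
nonzero element of `ZMod N` is uniquely a difference of two elements of `Δ`. -/
def IsPlanarDifferenceSet (q : ℕ) (Δ : Set (ZMod (q ^ 2 + q + 1))) : Prop :=
  Δ.ncard = q + 1 ∧ ∀ x : ZMod (q ^ 2 + q + 1), x ≠ 0 →
    ∃! de : ZMod (q ^ 2 + q + 1) × ZMod (q ^ 2 + q + 1),
      (de.1 ∈ Δ ∧ de.2 ∈ Δ) ∧ de.1 - de.2 = x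

section partA1
open CategoryTheory

/-- cycles of an elementary chain complex -/
def cyc {R : Type} [CommRing R] {M : ℕ → Type} [∀ n, AddCommGroup (M n)] [∀ n, Module R (M n)] (d : ∀ n, M (n+1) →ₗ[R] M n) :
    (k : ℕ) → Submodule R (M k)
  | 0 => ⊤
  | (k+1) => LinearMap.ker (d k)

/-- homology of an elementary chain complex -/
abbrev hom {R : Type} [CommRing R] {M : ℕ → Type} [∀ n, AddCommGroup (M n)] [∀ n, Module R (M n)] (d : ∀ n, M (n+1) →ₗ[R] M n) (k : ℕ) : Type :=
  ↥(Submodule.map (LinearMap.range (d k)).mkQ (cyc d k))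

theorem sc_hom {R : Type} [CommRing R] {M M' : Type} [AddCommGroup M] [AddCommGroup M']
    [Module R M] [Module R M'] (S : ShortComplex (ModuleCat R))
    (e : S.X₂ ≃ₗ[R] M) (d : M' →ₗ[R] M) (Z : Submodule R M)
    (hZ : ∀ x, e x ∈ Z ↔ S.g.hom x = 0)
    (hB : ∀ x, e x ∈ LinearMap.range d ↔ x ∈ LinearMap.range S.f.hom) :
    Nonempty (S.homology ≃+ ↥(Submodule.map (LinearMap.range d).mkQ Z)) := by
  let φ : LinearMap.ker S.g.hom →ₗ[R] ↥(Submodule.map (LinearMap.range d).mkQ Z) :=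
    LinearMap.codRestrict _ ((LinearMap.range d).mkQ ∘ₗ e.toLinearMap ∘ₗ (LinearMap.ker S.g.hom).subtype)
      (fun x => ⟨e x, (hZ x).2 x.2, rfl⟩)
  have hs : Function.Surjective φ := by
    rintro ⟨_, y, hy, rfl⟩
    refine ⟨⟨e.symm y, ?_⟩, ?_⟩
    · rw [LinearMap.mem_ker, ← hZ]; simpa using hy
    · apply Subtype.ext
      change (Submodule.Quotient.mk (e (e.symm y)) : M ⧸ LinearMap.range d) = Submodule.Quotient.mk y
      rw [e.apply_symm_apply]
  have hk : LinearMap.range S.moduleCatToCycles = LinearMap.ker φ := by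
    ext x
    rw [LinearMap.mem_ker, ← Subtype.coe_inj]
    have h1 : (φ x : M ⧸ LinearMap.range d) = Submodule.Quotient.mk (e x) := rfl
    rw [h1, Submodule.coe_zero, Submodule.Quotient.mk_eq_zero, hB]
    constructor
    · rintro ⟨y, rfl⟩; exact ⟨y, rfl⟩
    · rintro ⟨y, hy⟩; exact ⟨y, Subtype.ext hy⟩
  exact ⟨((S.moduleCatHomologyIso.toLinearEquiv ≪≫ₗ (Submodule.quotEquivOfEq _ _ hk)) ≪≫ₗ
    φ.quotKerEquivOfSurjective hs).toAddEquiv⟩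

theorem complex_hom {R : Type} [CommRing R] (K : ChainComplex (ModuleCat R) ℕ) {M : ℕ → Type} [∀ n, AddCommGroup (M n)] [∀ n, Module R (M n)]
    (d : ∀ n, M (n+1) →ₗ[R] M n) (e : ∀ n, K.X n ≃ₗ[R] M n)
    (h : ∀ n x, e n ((K.d (n+1) n).hom x) = d n (e (n+1) x)) (n : ℕ) :
    Nonempty (K.homology n ≃+ hom d n) := by
  have hB : ∀ n x, e n x ∈ LinearMap.range (d n) ↔ x ∈ LinearMap.range (K.d (n+1) n).hom := by
    intro n x
    constructor
    · rintro ⟨y, hy⟩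
      refine ⟨(e (n+1)).symm y, (e n).injective ?_⟩
      rw [h, ← hy]; simp
    · rintro ⟨y, rfl⟩
      exact ⟨e (n+1) y, (h n y).symm⟩
  cases n with
  | zero =>
    have hh := sc_hom (K.sc' 1 0 0) (e 0) (d 0) (cyc d 0) (by
      intro x
      have : K.d 0 0 = 0 := K.shape _ _ (by simp)
      have h2 : (K.d 0 0).hom x = 0 := by rw [this]; rfl
      exact ⟨fun _ => h2, fun _ => trivial⟩) (hB 0)
    obtain ⟨f⟩ := hh
    exact ⟨((ShortComplex.homologyMapIso (K.isoSc' 1 0 0 (by simp) (by simp))).toLinearEquiv.toAddEquiv).trans f⟩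
  | succ n =>
    have hh := sc_hom (K.sc' (n+2) (n+1) n) (e (n+1)) (d (n+1)) (cyc d (n+1)) (by
      intro x
      have := h n x
      change d n (e (n+1) x) = 0 ↔ (K.d (n+1) n).hom x = 0
      rw [← this]
      exact (e n).map_eq_zero_iff) (hB (n+1))
    obtain ⟨f⟩ := hh
    exact ⟨((ShortComplex.homologyMapIso (K.isoSc' (n+2) (n+1) n (by simp) (by simp))).toLinearEquiv.toAddEquiv).trans f⟩

theorem barDiff_eq (G : Type) [Group G] (n : ℕ) :
    (groupHomology.inhomogeneousChains.d (Rep.trivial ℤ G ℤ) n).hom = barDiff ℤ G n := by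
  refine Finsupp.lhom_ext fun g a => ?_
  refine (groupHomology.inhomogeneousChains.d_single (A := Rep.trivial ℤ G ℤ) n g a).trans ?_
  rw [Fin.sum_univ_castSucc, ← add_assoc]
  simp only [barDiff, Finsupp.lift_apply]
  rw [Finsupp.sum_single_index (by simp), smul_add, smul_add, Finset.smul_sum]
  congr 1
  · congr 1
    · simp
    · refine Finset.sum_congr rfl fun i _ => ?_
      rw [Finsupp.smul_single, Finsupp.smul_single]
      congr 1
      · funext j
        simp only [Fin.contractNth, Fin.val_castSucc]
        split_ifs with h1 h2
        · rfl
        · have : j = i := Fin.ext h2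
          subst this; rfl
        · rfl
      · simp [mul_comm]
  · rw [Finsupp.smul_single, Finsupp.smul_single]
    congr 1
    · funext j
      simp [Fin.contractNth]
    · simp [mul_comm]

theorem bar_groupHomology (G : Type) [Group G] (n : ℕ) :
    Nonempty (groupHomology (Rep.trivial ℤ G ℤ) n ≃+ barHomology ℤ G n) := by
  have hh := complex_hom (groupHomology.inhomogeneousChains (Rep.trivial ℤ G ℤ))
    (M := fun n => (Fin n → G) →₀ ℤ) (fun n => barDiff ℤ G n) (fun n => LinearEquiv.refl ℤ _) (by
      intro n x
      rw [groupHomology.inhomogeneousChains.d_def, barDiff_eq]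
      rfl) n
  obtain ⟨f⟩ := hh
  cases n with
  | zero => exact ⟨f⟩
  | succ n => exact ⟨f⟩

end partA1

section partA2
open CategoryTheory

theorem rep_exact {R G : Type} [CommRing R] [Group G] (S : ShortComplex (Rep.{0} R G))
    (h : ∀ x : S.X₂, S.g.hom x = 0 → ∃ y : S.X₁, S.f.hom y = x) : S.Exact := by
  apply (forget₂ (Rep.{0} R G) (ModuleCat R)).reflects_exact_of_faithful
  rw [ShortComplex.moduleCat_exact_iff]
  intro x hx
  exact h x hx

theorem rep_res {R G : Type} [CommRing R] [Group G] (K : ChainComplex (Rep.{0} R G) ℕ) (A : Rep.{0} R G)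
    (hp : ∀ n, Projective (K.X n)) (ε : K.X 0 ⟶ A) (h0 : K.d 1 0 ≫ ε = 0)
    (hs : Function.Surjective ε.hom)
    (he0 : ∀ x : K.X 0, ε.hom x = 0 → ∃ y : K.X 1, (K.d 1 0).hom y = x)
    (he : ∀ n, ∀ x : K.X (n+1), (K.d (n+1) n).hom x = 0 → ∃ y : K.X (n+2), (K.d (n+2) (n+1)).hom y = x) :
    ∃ P : ProjectiveResolution A, P.complex = K := by
  let π := (K.toSingle₀Equiv A).symm ⟨ε, h0⟩
  have hπ : π.f 0 = ε := ChainComplex.toSingle₀Equiv_symm_apply_f_zero ε h0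
  have hq : QuasiIso π := by
    refine ⟨fun m => ?_⟩
    cases m with
    | zero =>
      rw [ChainComplex.quasiIsoAt₀_iff, ShortComplex.quasiIso_iff_of_zeros' _ ?_ rfl rfl]
      · constructor
        · apply rep_exact
          intro x hx
          change (π.f 0).hom x = 0 at hx
          rw [hπ] at hx
          exact he0 x hx
        · change Epi (π.f 0)
          rw [hπ]
          exact (Rep.epi_iff_surjective ε).2 hs
      · exact K.shape _ _ (by simp)
    | succ m =>
      rw [quasiIsoAt_iff_exactAt' (hL := ChainComplex.exactAt_succ_single_obj ..),
          HomologicalComplex.exactAt_iff' _ (m + 2) (m + 1) m (by simp) (by simp)]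
      exact rep_exact _ (he m)
  exact ⟨{ complex := K, projective := hp, π := π, quasiIso := hq }, rfl⟩

end partA2

section partA3
open CategoryTheory

/-- augmentation of the group ring -/
noncomputable def aug (R G : Type) [CommRing R] [Group G] : MonoidAlgebra R G →ₐ[R] R :=
  MonoidAlgebra.lift R R G 1

@[simp] theorem aug_single {R G : Type} [CommRing R] [Group G] (g : G) (r : R) :
    aug R G (MonoidAlgebra.single g r) = r := by
  simp [aug]

/-- the `R[G]`-linear differential attached to values on a basis -/
noncomputable abbrev DD {R G : Type} [CommRing R] [Group G] {α : ℕ → Type}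
    (d : ∀ n, α (n+1) → (α n →₀ MonoidAlgebra R G)) (n : ℕ) :
    (α (n+1) →₀ MonoidAlgebra R G) →ₗ[MonoidAlgebra R G] (α n →₀ MonoidAlgebra R G) :=
  Finsupp.linearCombination (MonoidAlgebra R G) (d n)

/-- the total augmentation -/
noncomputable def epsL (R G : Type) [CommRing R] [Group G] (α : Type) :
    (α →₀ MonoidAlgebra R G) →ₗ[R] R :=
  Finsupp.lsum R (fun _ => (aug R G).toLinearMap)

/-- coordinatewise augmentation -/
noncomputable def augF (R G : Type) [CommRing R] [Group G] (α : Type) :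
    (α →₀ MonoidAlgebra R G) →ₗ[R] (α →₀ R) :=
  Finsupp.mapRange.linearMap (aug R G).toLinearMap

/-- tensored differential -/
noncomputable def DB {R G : Type} [CommRing R] [Group G] {α : ℕ → Type}
    (d : ∀ n, α (n+1) → (α n →₀ MonoidAlgebra R G)) (n : ℕ) :
    (α (n+1) →₀ R) →ₗ[R] (α n →₀ R) :=
  Finsupp.linearCombination R (fun a => augF R G (α n) (d n a))

theorem free_rho {R G : Type} [CommRing R] [Group G] {α : Type} (g : G) (x : α →₀ MonoidAlgebra R G) :
    Representation.free R G α g x = MonoidAlgebra.single g (1:R) • x := by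
  induction x using Finsupp.induction_linear with
  | zero => simp
  | add x y hx hy => rw [map_add, hx, hy, smul_add]
  | single a z =>
    induction z using MonoidAlgebra.induction_linear with
    | zero => simp
    | add x y hx hy => rw [Finsupp.single_add, map_add, hx, hy, smul_add]
    | single h r => simp

theorem freeLift_eq {R G : Type} [CommRing R] [Group G] {α β : Type}
    (d : α → (β →₀ MonoidAlgebra R G)) (x : α →₀ MonoidAlgebra R G) :
    Representation.freeLift (Representation.free R G β) d x
      = Finsupp.linearCombination (MonoidAlgebra R G) d x := by
  induction x using Finsupp.induction_linear with
  | zero => simp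
  | add x y hx hy => rw [map_add, hx, hy, map_add]
  | single a z =>
    induction z using MonoidAlgebra.induction_linear with
    | zero => simp
    | add x y hx hy => rw [Finsupp.single_add, map_add, hx, hy, map_add]
    | single h r =>
      rw [Representation.freeLift_single_single, free_rho, Finsupp.linearCombination_single, ← smul_assoc]
      simp

theorem freeLift_eps {R G : Type} [CommRing R] [Group G] {α : Type}
    (x : α →₀ MonoidAlgebra R G) :
    Representation.freeLift (Representation.trivial R G R) (fun _ => 1) x
      = epsL R G α x := by
  induction x using Finsupp.induction_linear with
  | zero => simp
  | add x y hx hy => rw [map_add, hx, hy, map_add]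
  | single a z =>
    induction z using MonoidAlgebra.induction_linear with
    | zero => simp
    | add x y hx hy => rw [Finsupp.single_add, map_add, hx, hy, map_add]
    | single h r =>
      rw [Representation.freeLift_single_single]
      simp [epsL]

theorem DB_aug {R G : Type} [CommRing R] [Group G] {α : ℕ → Type}
    (d : ∀ n, α (n+1) → (α n →₀ MonoidAlgebra R G)) (n : ℕ) (x : α (n+1) →₀ MonoidAlgebra R G) :
    augF R G (α n) (DD d n x) = DB d n (augF R G (α (n+1)) x) := by
  induction x using Finsupp.induction_linear with
  | zero => simp
  | add x y hx hy => simp only [map_add, hx, hy]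
  | single a z =>
    have h1 : ∀ (z : MonoidAlgebra R G) (y : α n →₀ MonoidAlgebra R G), augF R G (α n) (z • y) = aug R G z • augF R G (α n) y := by
      intro z y; ext b; simp [augF]
    simp [DD, h1, DB]
    simp [augF]

open scoped TensorProduct MonoidalCategory
set_option linter.unusedSimpArgs false

theorem coinv_eq {R G : Type} [CommRing R] [Group G] {α : Type} [DecidableEq α]
    (r : R) (x : α →₀ MonoidAlgebra R G) :
    DFunLike.coe (F := ((Representation.trivial R G R).tprod (Representation.free R G α)).Coinvariants →ₗ[R] α →₀ R)
      (Rep.coinvariantsTensorFreeToFinsupp (Rep.trivial R G R) α) (Representation.Coinvariants.mk _ (r ⊗ₜ x))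
      = r • augF R G α x := by
  induction x using Finsupp.induction_linear with
  | zero => simp
  | add x y hx hy => rw [TensorProduct.tmul_add, map_add, map_add, hx, hy, map_add, smul_add]
  | single a z =>
    induction z using MonoidAlgebra.induction_linear with
    | zero => simp
    | add x y hx hy => rw [Finsupp.single_add, TensorProduct.tmul_add, map_add, map_add, hx, hy, map_add, smul_add]
    | single h s =>
      refine (Rep.coinvariantsTensorFreeToFinsupp_mk_tmul_single (Rep.trivial R G R) r a h s).trans ?_
      simp [augF, mul_comm]

end partA3

section partA4
open CategoryTheory
open scoped TensorProduct MonoidalCategory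

/-- chain complex of free representations -/
noncomputable def freeC {R G : Type} [CommRing R] [Group G] {α : ℕ → Type}
    (d : ∀ n, α (n+1) → (α n →₀ MonoidAlgebra R G))
    (hdd : ∀ n x, DD d n (DD d (n+1) x) = 0) : ChainComplex (Rep.{0} R G) ℕ :=
  ChainComplex.of (fun n => Rep.free R G (α n)) (fun n => Rep.freeLift R G _ (d n)) (fun n => by
    apply Rep.free_ext
    intro i
    change Representation.freeLift (Representation.free R G _) (d n)
      (Representation.freeLift (Representation.free R G _) (d (n+1)) _) = 0
    rw [freeLift_eq, freeLift_eq]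
    exact hdd n _)

theorem freeC_d {R G : Type} [CommRing R] [Group G] {α : ℕ → Type}
    (d : ∀ n, α (n+1) → (α n →₀ MonoidAlgebra R G))
    (hdd : ∀ n x, DD d n (DD d (n+1) x) = 0) (n : ℕ) :
    (freeC d hdd).d (n+1) n = Rep.freeLift R G _ (d n) := by
  exact ChainComplex.of_d (fun n => Rep.free R G (α n)) (fun n => Rep.freeLift R G _ (d n)) n

theorem freeC_homology {R G : Type} [CommRing R] [Group G] {α : ℕ → Type}
    (d : ∀ n, α (n+1) → (α n →₀ MonoidAlgebra R G)) [Nonempty (α 0)]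
    (hdd : ∀ n x, DD d n (DD d (n+1) x) = 0)
    (he0 : ∀ x, epsL R G (α 0) (DD d 0 x) = 0)
    (hx0 : ∀ x, epsL R G (α 0) x = 0 → ∃ y, DD d 0 y = x)
    (hx : ∀ n x, DD d n x = 0 → ∃ y, DD d (n+1) y = x) (n : ℕ) :
    Nonempty (groupHomology (Rep.trivial R G R) n ≃+ hom (M := fun n => α n →₀ R) (DB d) n) := by
  classical
  have hd : ∀ n (x : α (n+1) →₀ MonoidAlgebra R G), ((freeC d hdd).d (n+1) n).hom x = DD d n x := by
    intro n x
    rw [freeC_d]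
    exact freeLift_eq (d n) x
  obtain ⟨P, hP⟩ := rep_res (freeC d hdd) (Rep.trivial R G R)
    (fun n => inferInstanceAs (Projective (Rep.free R G (α n))))
    (Rep.freeLift R G (Rep.trivial R G R) (fun _ => (1 : R)))
    (by
      rw [freeC_d]
      apply Rep.free_ext
      intro i
      change Representation.freeLift (Representation.trivial R G R) (fun _ => (1 : R))
        (Representation.freeLift (Representation.free R G _) (d 0) _) = 0
      rw [freeLift_eq, freeLift_eps]
      exact he0 _)
    (by
      intro r
      obtain ⟨a⟩ : Nonempty (α 0) := inferInstance
      refine ⟨Finsupp.single a (MonoidAlgebra.single 1 r), ?_⟩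
      refine (freeLift_eps _).trans ?_
      simp [epsL])
    (by
      intro x h
      obtain ⟨y, hy⟩ := hx0 x ((freeLift_eps x).symm.trans h)
      exact ⟨y, (hd 0 y).trans hy⟩)
    (by
      intro n x h
      obtain ⟨y, hy⟩ := hx n x ((hd n x).symm.trans h)
      exact ⟨y, (hd (n+1) y).trans hy⟩)
  have i1 := (groupHomologyIso (Rep.trivial R G R) n P).toLinearEquiv.toAddEquiv
  rw [hP] at i1
  let K := (freeC d hdd).coinvariantsTensorObj (Rep.trivial R G R)
  let e : ∀ n, K.X n ≃ₗ[R] (α n →₀ R) :=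
    fun n => Rep.coinvariantsTensorFreeLEquiv (Rep.trivial R G R) (α n)
  let mkk : ∀ n, (R ⊗[R] (α n →₀ MonoidAlgebra R G)) →ₗ[R] K.X n := fun n =>
    Representation.Coinvariants.mk ((Representation.trivial R G R).tprod (Representation.free R G (α n)))
  have hmkk : ∀ n, Function.Surjective (mkk n) := fun n =>
    Representation.Coinvariants.mk_surjective _
  have hem : ∀ n r x, e n (mkk n (r ⊗ₜ x)) = r • augF R G (α n) x := fun n r x => coinv_eq r x
  have hKd : ∀ n r x, (K.d (n+1) n).hom (mkk (n+1) (r ⊗ₜ x)) = mkk n (r ⊗ₜ DD d n x) := by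
    intro n r x
    rw [← hd]
    rfl
  obtain ⟨i2⟩ := complex_hom K (M := fun n => α n →₀ R) (DB d) e (by
      intro n x
      obtain ⟨x, rfl⟩ := hmkk _ x
      have : ((e n).toLinearMap ∘ₗ (K.d (n+1) n).hom) ∘ₗ mkk (n+1)
          = (DB d n ∘ₗ (e (n+1)).toLinearMap) ∘ₗ mkk (n+1) := by
        apply TensorProduct.ext'
        intro r x
        change e n ((K.d (n+1) n).hom (mkk (n+1) (r ⊗ₜ x))) = DB d n (e (n+1) (mkk (n+1) (r ⊗ₜ x)))
        rw [hKd, hem, hem, map_smul, DB_aug]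
      exact LinearMap.congr_fun this x) n
  exact ⟨i1.trans i2⟩

theorem bar_of_res {G : Type} [Group G] {α : ℕ → Type}
    (d : ∀ n, α (n+1) → (α n →₀ MonoidAlgebra ℤ G)) [Nonempty (α 0)]
    (hdd : ∀ n x, DD d n (DD d (n+1) x) = 0)
    (he0 : ∀ x, epsL ℤ G (α 0) (DD d 0 x) = 0)
    (hx0 : ∀ x, epsL ℤ G (α 0) x = 0 → ∃ y, DD d 0 y = x)
    (hx : ∀ n x, DD d n x = 0 → ∃ y, DD d (n+1) y = x) (n : ℕ) :
    Nonempty (barHomology ℤ G n ≃+ hom (M := fun n => α n →₀ ℤ) (DB d) n) := by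
  obtain ⟨f⟩ := freeC_homology d hdd he0 hx0 hx n
  obtain ⟨g⟩ := bar_groupHomology G n
  exact ⟨g.symm.trans f⟩

end partA4

section partB1
section words
variable {ι A : Type} [AddCommGroup A]

/-- planar difference family, in function form -/
structure PDF (f : ι → A) : Prop where
  inj : Function.Injective f
  ex : ∀ x : A, x ≠ 0 → ∃ p : ι × ι, f p.1 - f p.2 = x
  uniq : ∀ a b c d : ι, a ≠ b → f a - f b = f c - f d → a = c ∧ b = d

/-- a run of the rewriting process on the word `s` -/
structure Run (D : ℕ → ι → A) (s : ℕ → A) (i i' : ℕ → ι) : Prop where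
  ne : ∀ n, i n ≠ i' n
  zero : D 0 (i 0) - D 0 (i' 0) = s 0
  succ : ∀ n, D (n+1) (i (n+1)) - D (n+1) (i' (n+1)) = s (n+1) - D (n+1) (i n)

theorem Run.unique {D : ℕ → ι → A} (hD : ∀ n, PDF (D n)) {s : ℕ → A} {i i' j j' : ℕ → ι}
    (h : Run D s i i') (h' : Run D s j j') : i = j ∧ i' = j' := by
  have : ∀ n, i n = j n ∧ i' n = j' n := by
    intro n
    induction n with
    | zero => exact (hD 0).uniq _ _ _ _ (h.ne 0) (h.zero.trans h'.zero.symm)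
    | succ n ih =>
      refine (hD (n+1)).uniq _ _ _ _ (h.ne _) ?_
      rw [h.succ, h'.succ, ih.1]
  exact ⟨funext fun n => (this n).1, funext fun n => (this n).2⟩

/-- admissible words -/
def Val (D : ℕ → ι → A) (s : ℕ → A) : Prop := ∀ n i, s (n+1) ≠ D (n+1) i

/-- shift of a sequence -/
def sh {B : Type} (D : ℕ → B) : ℕ → B := fun n => D (n+1)

theorem Run.exists {D : ℕ → ι → A} (hD : ∀ n, PDF (D n)) {s : ℕ → A} (hs : Val D s)
    (h0 : s 0 ≠ 0) : ∃ i i', Run D s i i' := by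
  classical
  have hne : ∀ n x (p : ι × ι), x ≠ 0 → D n p.1 - D n p.2 = x → p.1 ≠ p.2 := by
    intro n x p hx hp he
    apply hx; rw [← hp, he, sub_self]
  have : Nonempty (ι × ι) := ⟨((hD 0).ex _ h0).choose⟩
  choose! P hP using fun n => (hD n).ex
  let p : ℕ → ι × ι := fun n => Nat.rec (P 0 (s 0)) (fun n r => P (n+1) (s (n+1) - D (n+1) r.1)) n
  have h1 : ∀ n, s (n+1) - D (n+1) (p n).1 ≠ 0 := fun n => sub_ne_zero.2 (hs n _)
  refine ⟨fun n => (p n).1, fun n => (p n).2, ?_, ?_, ?_⟩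
  · intro n
    cases n with
    | zero => exact hne 0 _ _ h0 (hP 0 _ h0)
    | succ n => exact hne (n+1) _ _ (h1 n) (hP (n+1) _ (h1 n))
  · exact hP 0 _ h0
  · intro n; exact hP (n+1) _ (h1 n)

theorem Run.cross {D : ℕ → ι → A} {s : ℕ → A} (hs : Val D s)
    {i i' : ℕ → ι} (h : Run D s i i') (n : ℕ) : i' (n+1) ≠ i n := by
  intro he
  have := h.succ n
  rw [he] at this
  exact hs n _ (sub_left_injective this).symm

/-- output of a run -/
def out (D : ℕ → ι → A) (i i' : ℕ → ι) : ℕ → A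
  | 0 => D 1 (i' 0)
  | (n+1) => D (n+2) (i' n) - D (n+2) (i n) + D (n+2) (i' (n+1))

theorem out_val {D : ℕ → ι → A} (hD : ∀ n, PDF (D n)) {s : ℕ → A} (hs : Val D s)
    {i i' : ℕ → ι} (h : Run D s i i') : Val (sh D) (out D i i') := by
  intro n a ha
  have h1 : D (n+2) (i' n) - D (n+2) (i n) = D (n+2) a - D (n+2) (i' (n+1)) := by
    change D (n+2) (i' n) - D (n+2) (i n) + D (n+2) (i' (n+1)) = D (n+2) a at ha
    rw [← ha]; abel
  have := (hD (n+2)).uniq _ _ _ _ (h.ne n).symm h1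
  exact h.cross hs n this.2.symm

open Classical in
/-- the transition map -/
noncomputable def TT (D : ℕ → ι → A) (x : (ℕ → A) × ℤ) : (ℕ → A) × ℤ :=
  if x.1 0 = 0 then (sh x.1, x.2 - 2)
  else if h : ∃ p : (ℕ → ι) × (ℕ → ι), Run D x.1 p.1 p.2 then
    (out D h.choose.1 h.choose.2, x.2 + 1)
  else x

theorem TT_zero (D : ℕ → ι → A) (x : (ℕ → A) × ℤ) (h : x.1 0 = 0) :
    TT D x = (sh x.1, x.2 - 2) := by
  simp [TT, h]

theorem TT_run {D : ℕ → ι → A} (hD : ∀ n, PDF (D n)) (x : (ℕ → A) × ℤ) {i i' : ℕ → ι}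
    (h : Run D x.1 i i') : TT D x = (out D i i', x.2 + 1) := by
  have h0 : x.1 0 ≠ 0 := by
    rw [← h.zero]; exact sub_ne_zero.2 fun e => h.ne 0 ((hD 0).inj e)
  have he : ∃ p : (ℕ → ι) × (ℕ → ι), Run D x.1 p.1 p.2 := ⟨(i, i'), h⟩
  obtain ⟨e1, e2⟩ := Run.unique hD he.choose_spec h
  rw [TT, if_neg h0, dif_pos he, e1, e2]

theorem TT_val {D : ℕ → ι → A} (hD : ∀ n, PDF (D n)) (x : (ℕ → A) × ℤ) (hx : Val D x.1) :
    Val (sh D) (TT D x).1 := by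
  by_cases h : x.1 0 = 0
  · rw [TT_zero D x h]
    intro n i; exact hx (n+1) i
  · obtain ⟨i, i', hr⟩ := Run.exists hD hx h
    rw [TT_run hD x hr]
    exact out_val hD hx hr

theorem TT_height {D : ℕ → ι → A} (hD : ∀ n, PDF (D n)) (x : (ℕ → A) × ℤ) (hx : Val D x.1)
    [Decidable (x.1 0 = 0)] :
    (TT D x).2 = x.2 + if x.1 0 = 0 then -2 else 1 := by
  by_cases h : x.1 0 = 0
  · rw [TT_zero D x h, if_pos h]; rfl
  · obtain ⟨i, i', hr⟩ := Run.exists hD hx h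
    rw [TT_run hD x hr, if_neg h]

/-- change of the first letter -/
def subz (a : A) (x : (ℕ → A) × ℤ) : (ℕ → A) × ℤ := (Function.update x.1 0 (x.1 0 - a), x.2)

@[simp] theorem subz_zero' (a : A) (x : (ℕ → A) × ℤ) : (subz a x).1 0 = x.1 0 - a := by
  simp [subz]
@[simp] theorem subz_succ (a : A) (x : (ℕ → A) × ℤ) (n : ℕ) : (subz a x).1 (n+1) = x.1 (n+1) := by
  simp [subz]
@[simp] theorem subz_two (a : A) (x : (ℕ → A) × ℤ) : (subz a x).2 = x.2 := rfl
theorem word_ext {x y : (ℕ → A) × ℤ} (h0 : x.1 0 = y.1 0) (h1 : ∀ n, x.1 (n+1) = y.1 (n+1))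
    (h2 : x.2 = y.2) : x = y := by
  refine Prod.ext (funext fun n => ?_) h2
  cases n with
  | zero => exact h0
  | succ n => exact h1 n
theorem subz_val {D : ℕ → ι → A} (a : A) {x : (ℕ → A) × ℤ} (hx : Val D x.1) : Val D (subz a x).1 := by
  intro n i; rw [subz_succ]; exact hx n i
theorem subz_subz (a b : A) (x : (ℕ → A) × ℤ) : subz a (subz b x) = subz (b + a) x := by
  apply word_ext <;> simp [sub_sub]
theorem subz_0 (x : (ℕ → A) × ℤ) : subz 0 x = x := by
  apply word_ext <;> simp

theorem TT_triple {D : ℕ → ι → A} (hD : ∀ n, PDF (D n)) (hper : ∀ n, D (n+3) = D n)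
    (x : (ℕ → A) × ℤ) (hx : Val D x.1) (j : ι) :
    TT (sh (sh D)) (subz (D 2 j) (TT (sh D) (subz (D 1 j) (TT D (subz (D 0 j) x))))) = x := by
  have hD1 : ∀ n, PDF (sh D n) := fun n => hD (n+1)
  have hD2 : ∀ n, PDF (sh (sh D) n) := fun n => hD (n+2)
  by_cases h : x.1 0 = D 0 j
  · rw [TT_zero D _ (by simp [h])]
    -- type A
    have hv : Val (sh D) (subz (D 1 j) (sh x.1, x.2 - 2)).1 := subz_val _ (fun n i => hx (n+1) i)
    obtain ⟨i, i', hr⟩ := Run.exists hD1 hv (by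
      simpa [sh, sub_ne_zero] using hx 0 j)
    rw [show (subz (D 0 j) x).2 - 2 = x.2 - 2 from rfl,
      show sh (subz (D 0 j) x).1 = sh x.1 by funext n; simp [sh]]
    rw [TT_run hD1 _ hr]
    have hr0 := hr.zero
    have hrs := hr.succ
    have hcr := hr.cross hv
    simp only [subz_zero', subz_succ, sh] at hr0 hrs
    have hr2 : Run (sh (sh D)) (subz (D 2 j) (out (sh D) i i', x.2 - 2 + 1)).1 i' (fun n => Nat.casesOn n j i) := by
      refine ⟨?_, ?_, ?_⟩
      · intro n
        cases n with
        | zero =>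
          intro he
          change i' 0 = j at he
          rw [he] at hr0
          exact hx 0 (i 0) (sub_left_injective hr0.symm)
        | succ n => exact hcr n
      · simp [out, sh]
      · intro n
        simp only [sh, subz_succ, out]
        abel
    rw [subz_two, TT_run hD2 _ hr2]
    apply word_ext
    · simp [out, sh, hper, h]
    · intro n
      cases n with
      | zero =>
        simp only [out, sh]
        rw [hper]
        simp only [zero_add] at hr0 ⊢
        rw [sub_eq_iff_eq_add.1 hr0.symm]
        abel
      | succ n =>
        have := hrs n
        simp only [out, sh]
        rw [hper, sub_eq_iff_eq_add.1 this.symm]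
        abel
    · simp only [subz_two]; ring
  · have hv : Val D (subz (D 0 j) x).1 := subz_val _ hx
    obtain ⟨i, i', hr⟩ := Run.exists hD hv (by simpa [sub_ne_zero] using h)
    rw [TT_run hD _ hr]
    have hr0 := hr.zero
    have hrs := hr.succ
    have hcr := hr.cross hv
    simp only [subz_zero', subz_succ] at hr0 hrs
    by_cases hj : i' 0 = j
    · rw [TT_zero (sh D) _ (by simp [out, hj])]
      have hr2 : Run (sh (sh D)) (subz (D 2 j) (sh (subz (D 1 j) (out D i i', (subz (D 0 j) x).2 + 1)).1,
          (subz (D 1 j) (out D i i', (subz (D 0 j) x).2 + 1)).2 - 2)).1 (fun n => i' (n+1)) i := by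
        refine ⟨hcr, ?_, ?_⟩
        · simp only [subz_zero', sh, subz_succ, out, hj]
          simp only [zero_add]
          abel
        · intro n
          simp only [sh, subz_succ, out]
          abel
      rw [TT_run hD2 _ hr2]
      apply word_ext
      · simp only [out, sh]
        rw [hper, sub_eq_iff_eq_add.1 hr0.symm, hj]; abel
      · intro n
        simp only [out, sh]
        rw [hper, sub_eq_iff_eq_add.1 (hrs n).symm]; abel
      · simp only [subz_two]; ring
    · have hr2 : Run (sh D) (subz (D 1 j) (out D i i', (subz (D 0 j) x).2 + 1)).1 i'
          (fun n => Nat.casesOn n j i) := by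
        refine ⟨?_, ?_, ?_⟩
        · intro n
          cases n with
          | zero => exact hj
          | succ n => exact hcr n
        · simp [out, sh]
        · intro n
          simp only [sh, subz_succ, out]
          abel
      rw [TT_run hD1 _ hr2, TT_zero _ _ (by simp [out, sh])]
      refine Prod.ext (funext fun n => ?_) ?_
      · simp only [sh, subz_succ, out]
        rw [hper]
        cases n with
        | zero =>
          change D 0 j - D 0 (i' 0) + D 0 (i 0) = x.1 0
          rw [sub_eq_iff_eq_add.1 hr0.symm]
          abel
        | succ n =>
          rw [sub_eq_iff_eq_add.1 (hrs n).symm]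
          abel
      · simp only [subz_two]; ring

end words

end partB1

section partB2
theorem pds_card (q : ℕ) (hq : 2 ≤ q) (f : Fin (q+1) → ZMod (q^2+q+1)) : ∃ c, ∀ i, c ≠ f i := by
  by_contra hcon
  push Not at hcon
  have hs : Function.Surjective f := fun c => by
    obtain ⟨i, hi⟩ := hcon c; exact ⟨i, hi.symm⟩
  have := Fintype.card_le_of_surjective f hs
  rw [ZMod.card, Fintype.card_fin] at this
  nlinarith

theorem pds_PDF (q : ℕ) (f : Fin (q+1) → ZMod (q^2+q+1)) (hinj : Function.Injective f)
    (h : IsPlanarDifferenceSet q (Set.range f)) : PDF f := by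
  refine ⟨hinj, ?_, ?_⟩
  · intro x hx
    obtain ⟨⟨a, b⟩, ⟨⟨⟨i, hi⟩, ⟨j, hj⟩⟩, hab⟩, _⟩ := h.2 x hx
    refine ⟨(i, j), ?_⟩
    simp only at hi hj hab ⊢
    rw [hi, hj, hab]
  · intro a b c d hab he
    have hne : f a - f b ≠ 0 := sub_ne_zero.2 fun e => hab (hinj e)
    have := (h.2 _ hne).unique (y₁ := (f a, f b)) (y₂ := (f c, f d)) ⟨⟨⟨a, rfl⟩, ⟨b, rfl⟩⟩, rfl⟩
      ⟨⟨⟨c, rfl⟩, ⟨d, rfl⟩⟩, he.symm⟩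
    exact ⟨hinj (Prod.ext_iff.1 this).1, hinj (Prod.ext_iff.1 this).2⟩

/-- generators of the lattice -/
def sg (q : ℕ) (δ : Fin 3 → Fin (q + 1) → ZMod (q ^ 2 + q + 1)) (k : Fin 3) : SingerLattice q δ :=
  PresentedGroup.of k

/-- periodic extension of the three difference sets -/
def per {q : ℕ} (δ : Fin 3 → Fin (q + 1) → ZMod (q ^ 2 + q + 1)) (n : ℕ) :
    Fin (q + 1) → ZMod (q ^ 2 + q + 1) := δ ⟨n % 3, Nat.mod_lt _ (by norm_num)⟩

theorem per_per {q : ℕ} (δ : Fin 3 → Fin (q + 1) → ZMod (q ^ 2 + q + 1)) (n : ℕ) :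
    per δ (n+3) = per δ n := by
  unfold per
  congr 2
  simp

section act
variable {ι A : Type} [AddCommGroup A]

/-- points acted upon -/
abbrev FF (D : ℕ → ι → A) : Type := {x : (ℕ → A) × ℤ // Val D x.1}

/-- transition as a map -/
noncomputable def tF {D : ℕ → ι → A} (hD : ∀ n, PDF (D n)) (x : FF D) : FF (sh D) :=
  ⟨TT D x.1, TT_val hD x.1 x.2⟩

/-- first letter change as a permutation -/
def sF (D : ℕ → ι → A) (a : A) : Equiv.Perm (FF D) where
  toFun x := ⟨subz (-a) x.1, subz_val _ x.2⟩
  invFun x := ⟨subz a x.1, subz_val _ x.2⟩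
  left_inv x := by
    apply Subtype.ext
    simp only [subz_subz]; rw [neg_add_cancel, subz_0]
  right_inv x := by
    apply Subtype.ext
    simp only [subz_subz]; rw [add_neg_cancel, subz_0]

theorem sF_add (D : ℕ → ι → A) (a b : A) : sF D (a + b) = sF D a * sF D b := by
  ext1 x
  apply Subtype.ext
  change subz (-(a+b)) x.1 = subz (-a) (subz (-b) x.1)
  rw [subz_subz]; congr 1; abel

theorem sF_zero (D : ℕ → ι → A) : sF D 0 = 1 := by
  ext1 x
  apply Subtype.ext
  change subz (-0) x.1 = x.1
  rw [neg_zero, subz_0]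

theorem sF_nsmul (D : ℕ → ι → A) (a : A) (n : ℕ) : sF D (n • a) = sF D a ^ n := by
  induction n with
  | zero => rw [zero_smul, sF_zero, pow_zero]
  | succ n ih => rw [succ_nsmul, sF_add, ih, pow_succ]

theorem sh3 {D : ℕ → ι → A} (hper : ∀ n, D (n+3) = D n) : sh (sh (sh D)) = D :=
  funext fun n => hper n

theorem triple0 {D : ℕ → ι → A} (hD : ∀ n, PDF (D n)) (hper : ∀ n, D (n+3) = D n) (o : ι)
    (h0 : ∀ n, D n o = 0) (x : (ℕ → A) × ℤ) (hx : Val D x.1) :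
    TT (sh (sh D)) (TT (sh D) (TT D x)) = x := by
  have := TT_triple hD hper x hx o
  simpa only [h0, subz_0] using this

/-- transition as an equivalence -/
noncomputable def tE {D : ℕ → ι → A} (hD : ∀ n, PDF (D n)) (hper : ∀ n, D (n+3) = D n) (o : ι)
    (h0 : ∀ n, D n o = 0) : FF D ≃ FF (sh D) where
  toFun := tF hD
  invFun x := ⟨TT (sh (sh D)) (TT (sh D) x.1), by
    have h2 := TT_val (D := sh (sh D)) (fun n => hD (n+2)) _ (TT_val (D := sh D) (fun n => hD (n+1)) _ x.2)
    rwa [sh3 hper] at h2⟩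
  left_inv x := Subtype.ext (triple0 hD hper o h0 x.1 x.2)
  right_inv x := by
    apply Subtype.ext
    have := triple0 (D := sh D) (fun n => hD (n+1)) (fun n => hper (n+1)) o (fun n => h0 (n+1)) x.1 x.2
    rw [sh3 hper] at this
    exact this

end act

theorem heights (q : ℕ) (hq : 2 ≤ q) (δ : Fin 3 → Fin (q + 1) → ZMod (q ^ 2 + q + 1))
    (hinj : ∀ i, Function.Injective (δ i)) (h0 : ∀ i, δ i 0 = 0)
    (hpds : ∀ i, IsPlanarDifferenceSet q (Set.range (δ i))) :
    ∃ (z : Fin 3 → SingerLattice q δ → ZMod (q^2+q+1)) (h : Fin 3 → SingerLattice q δ → ℤ),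
      (∀ k g, z k (g * sg q δ k) = z k g - 1) ∧ (∀ k g, h k (g * sg q δ k) = h k g) ∧
      (∀ k g, h (k+1) g = h k g + if z k g = 0 then -2 else 1) := by
  have hN : NeZero (q^2+q+1) := ⟨by positivity⟩
  let D := per δ
  have hD : ∀ n, PDF (D n) := fun n => pds_PDF q _ (hinj _) (hpds _)
  have hper : ∀ n, D (n+3) = D n := per_per δ
  have hD0 : ∀ n, D n 0 = 0 := fun n => h0 _
  let t0 := tE hD hper 0 hD0
  let t1 := tE (D := sh D) (fun n => hD (n+1)) (fun n => hper (n+1)) 0 (fun n => hD0 (n+1))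
  have ht2 : ∀ x, TT (sh (sh D)) (t1 (t0 x)).1 = x.1 := fun x => triple0 hD hper 0 hD0 x.1 x.2
  let S : ZMod (q^2+q+1) → Fin 3 → Equiv.Perm (FF D) := fun a =>
    ![sF D a, (t0.trans (sF (sh D) a)).trans t0.symm,
      ((t0.trans t1).trans (sF (sh (sh D)) a)).trans (t0.trans t1).symm]
  have hS : ∀ a k (n : ℕ), S (n • a) k = S a k ^ n := by
    intro a k n
    fin_cases k
    · exact sF_nsmul D a n
    · change (t0.trans (sF (sh D) (n • a))).trans t0.symm
        = (t0.symm.permCongr (sF (sh D) a)) ^ n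
      rw [sF_nsmul, ← Equiv.permCongrHom_coe, ← map_pow]
      rfl
    · change ((t0.trans t1).trans (sF (sh (sh D)) (n • a))).trans (t0.trans t1).symm
        = ((t0.trans t1).symm.permCongr (sF (sh (sh D)) a)) ^ n
      rw [sF_nsmul, ← Equiv.permCongrHom_coe, ← map_pow]
      rfl
  have hS0 : ∀ k, S 0 k = 1 := fun k => by simpa using hS 0 k 0
  have hSv : ∀ (a : ZMod (q^2+q+1)) k, S 1 k ^ a.val = S a k := by
    intro a k
    rw [← hS, nsmul_one, ZMod.natCast_zmod_val]
  have ht2' : ∀ u, (t0.symm (t1.symm u)).1 = TT (sh (sh D)) u.1 := by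
    intro u
    rw [← ht2]; simp
  have htri : ∀ j, S (δ 0 j) 0 * S (δ 1 j) 1 * S (δ 2 j) 2 = 1 := by
    intro j
    rw [← inv_inj, inv_one]
    ext1 x
    apply Subtype.ext
    change (t0.symm (t1.symm ((sF (sh (sh D)) (δ 2 j)).symm (t1 (t0 (t0.symm
      ((sF (sh D) (δ 1 j)).symm (t0 ((sF D (δ 0 j)).symm x))))))))).1 = x.1
    rw [Equiv.apply_symm_apply, ht2']
    exact TT_triple hD hper x.1 x.2 j
  let φ : SingerLattice q δ →* Equiv.Perm (FF D) := PresentedGroup.toGroup (f := S 1) (by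
    rintro r (⟨i, rfl⟩ | ⟨j, rfl⟩)
    · rw [map_pow, FreeGroup.lift_apply_of, ← hS, nsmul_one, CharP.cast_eq_zero, hS0]
    · simp only [map_mul, map_pow, FreeGroup.lift_apply_of, hSv]
      exact htri j)
  have hφ : ∀ k, φ (sg q δ k) = S 1 k := fun k => PresentedGroup.toGroup.of _
  choose c hc using fun n => pds_card q hq (D n)
  let x0 : FF D := ⟨(c, 0), fun n i => hc (n+1) i⟩
  let w : SingerLattice q δ → FF D := fun g => φ g⁻¹ x0
  have hw : ∀ k g, w (g * sg q δ k) = (S 1 k).symm (w g) := by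
    intro k g
    change φ (g * sg q δ k)⁻¹ x0 = (S 1 k)⁻¹ (φ g⁻¹ x0)
    rw [mul_inv_rev, map_mul, map_inv φ (sg q δ k), hφ]; rfl
  refine ⟨fun k g => ![(w g).1.1 0, (t0 (w g)).1.1 0, (t1 (t0 (w g))).1.1 0] k,
    fun k g => ![(w g).1.2, (t0 (w g)).1.2, (t1 (t0 (w g))).1.2] k, ?_, ?_, ?_⟩
  · intro k g
    change ![(w (g * sg q δ k)).1.1 0, (t0 (w (g * sg q δ k))).1.1 0,
      (t1 (t0 (w (g * sg q δ k)))).1.1 0] k = ![(w g).1.1 0, (t0 (w g)).1.1 0,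
      (t1 (t0 (w g))).1.1 0] k - 1
    rw [hw]
    fin_cases k
    · exact subz_zero' 1 (w g).1
    · change (t0 (t0.symm ((sF (sh D) 1).symm (t0 (w g))))).1.1 0 = (t0 (w g)).1.1 0 - 1
      rw [Equiv.apply_symm_apply]
      exact subz_zero' 1 (t0 (w g)).1
    · change (t1 (t0 (t0.symm (t1.symm ((sF (sh (sh D)) 1).symm (t1 (t0 (w g)))))))).1.1 0
        = (t1 (t0 (w g))).1.1 0 - 1
      rw [Equiv.apply_symm_apply, Equiv.apply_symm_apply]
      exact subz_zero' 1 (t1 (t0 (w g))).1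
  · intro k g
    change ![(w (g * sg q δ k)).1.2, (t0 (w (g * sg q δ k))).1.2,
      (t1 (t0 (w (g * sg q δ k)))).1.2] k = ![(w g).1.2, (t0 (w g)).1.2,
      (t1 (t0 (w g))).1.2] k
    rw [hw]
    fin_cases k
    · rfl
    · change (t0 (t0.symm ((sF (sh D) 1).symm (t0 (w g))))).1.2 = (t0 (w g)).1.2
      rw [Equiv.apply_symm_apply]
      rfl
    · change (t1 (t0 (t0.symm (t1.symm ((sF (sh (sh D)) 1).symm (t1 (t0 (w g)))))))).1.2
        = (t1 (t0 (w g))).1.2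
      rw [Equiv.apply_symm_apply, Equiv.apply_symm_apply]
      rfl
  · intro k g
    fin_cases k
    · exact TT_height hD (w g).1 (w g).2
    · exact TT_height (D := sh D) (fun n => hD (n+1)) (t0 (w g)).1 (t0 (w g)).2
    · have := TT_height (D := sh (sh D)) (fun n => hD (n+2)) (t1 (t0 (w g))).1 (t1 (t0 (w g))).2
      rw [ht2] at this
      exact this

end partB2

section partC1
set_option linter.unusedSectionVars false

section gr
variable {G : Type} [Group G]

/-- integral group ring -/
abbrev ZG (G : Type) [Group G] := MonoidAlgebra ℤ G

/-- group elements in the group ring -/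
noncomputable def gg (g : G) : ZG G := MonoidAlgebra.single g 1

theorem gg_mul (g h : G) : gg (g * h) = gg g * gg h := by simp [gg]
theorem gg_one : gg (1 : G) = 1 := rfl
theorem gg_pow (g : G) (n : ℕ) : gg (g ^ n) = gg g ^ n := by simp [gg, MonoidAlgebra.single_pow]
theorem aux_single (g : G) (r : ℤ) : (MonoidAlgebra.single g r : ZG G) = r • gg g := by
  simp [gg, MonoidAlgebra.smul_single]

theorem lin_ext {V : Type*} [AddCommGroup V] {F F' : ZG G →ₗ[ℤ] V}
    (h : ∀ g, F (gg g) = F' (gg g)) : F = F' := by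
  apply LinearMap.ext
  intro x
  induction x using MonoidAlgebra.induction_linear with
  | zero => simp
  | add x y hx hy => rw [map_add, map_add, hx, hy]
  | single g r => rw [aux_single, map_smul, map_smul, h]

/-- linear extension of a map on the group -/
noncomputable def LL {V : Type*} [AddCommGroup V] (f : G → V) : ZG G →ₗ[ℤ] V :=
  (Finsupp.linearCombination ℤ f).comp (MonoidAlgebra.coeffLinearEquiv ℤ).toLinearMap

@[simp] theorem LL_gg {V : Type*} [AddCommGroup V] (f : G → V) (g : G) : LL f (gg g) = f g := by
  simp [LL, gg, MonoidAlgebra.coeffLinearEquiv]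

/-- geometric sum -/
noncomputable def geo (s : G) (m : ℕ) : ZG G := ∑ i ∈ Finset.range m, gg s ^ i

theorem geo_mul (s : G) (m : ℕ) : geo s m * (gg s - 1) = gg (s ^ m) - 1 := by
  rw [gg_pow, geo, geom_sum_mul]

theorem mul_geo (s : G) (m : ℕ) : (gg s - 1) * geo s m = gg (s ^ m) - 1 := by
  rw [gg_pow, geo, mul_geom_sum]

theorem geo_succ (s : G) (m : ℕ) : geo s (m+1) = geo s m + gg (s ^ m) := by
  rw [geo, Finset.sum_range_succ, gg_pow]; rfl

variable {N : ℕ} [NeZero N] {s : G} {z : G → ZMod N}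

theorem z_pow (hz : ∀ g, z (g * s) = z g - 1) (g : G) (m : ℕ) : z (g * s ^ m) = z g - m := by
  induction m with
  | zero => simp
  | succ m ih => rw [pow_succ, ← mul_assoc, hz, ih]; push_cast; ring

/-- exponent of `g` relative to the transversal `z = 0` -/
def ex (z : G → ZMod N) (g : G) : ℕ := (-z g).val
/-- representative -/
def rp (s : G) (z : G → ZMod N) (g : G) : G := g * (s ^ ex z g)⁻¹

theorem rp_ex (s : G) (z : G → ZMod N) (g : G) : rp s z g * s ^ ex z g = g := by simp [rp]

theorem z_rp (hz : ∀ g, z (g * s) = z g - 1) (g : G) : z (rp s z g) = 0 := by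
  have := z_pow hz (rp s z g) (ex z g)
  rw [rp_ex, ex, ZMod.natCast_zmod_val] at this
  linear_combination - this

theorem ex_of (hz : ∀ g, z (g * s) = z g - 1) {g : G} (hg : z g = 0) {m : ℕ} (hm : m < N) :
    ex z (g * s ^ m) = m := by
  rw [ex, z_pow hz, hg, zero_sub, neg_neg, ZMod.val_natCast_of_lt hm]

theorem rp_of (hz : ∀ g, z (g * s) = z g - 1) {g : G} (hg : z g = 0) {m : ℕ} (hm : m < N) :
    rp s z (g * s ^ m) = g := by
  rw [rp, ex_of hz hg hm]; simp

theorem rp_cases (hz : ∀ g, z (g * s) = z g - 1) (g : G) :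
    ∃ g0 m, m < N ∧ z g0 = 0 ∧ g = g0 * s ^ m :=
  ⟨rp s z g, ex z g, ZMod.val_lt _, z_rp hz g, (rp_ex s z g).symm⟩

theorem ann_norm (hz : ∀ g, z (g * s) = z g - 1) (hs : s ^ N = 1) (b : ZG G)
    (hb : b * geo s N = 0) : ∃ c, c * (gg s - 1) = b := by
  classical
  let H : ZG G →ₗ[ℤ] ZG G := LL fun g => gg (rp s z g) * geo s (ex z g)
  let R : ZG G →ₗ[ℤ] ZG G := LL fun g => if z g = 0 then gg g else 0
  have key : LinearMap.id = (LinearMap.mulRight ℤ (gg s - 1)).comp H +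
      R.comp (LinearMap.mulRight ℤ (geo s N)) := by
    apply lin_ext
    intro g
    obtain ⟨g0, m, hm, h0, rfl⟩ := rp_cases hz g
    simp only [LinearMap.id_apply, LinearMap.add_apply, LinearMap.comp_apply, LinearMap.mulRight_apply]
    have h1 : R (gg (g0 * s ^ m) * geo s N) = gg g0 := by
      have : gg (g0 * s ^ m) * geo s N = gg g0 * geo s N := by
        have e : ∀ i, gg (s ^ i) * geo s N = geo s N := by
          intro i
          induction i with
          | zero => simp [gg_one]
          | succ i ih =>
            rw [pow_succ, gg_mul, mul_assoc]
            have := mul_geo s N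
            rw [hs, gg_one, sub_self, sub_mul, one_mul, sub_eq_zero] at this
            rw [this, ih]
        rw [gg_mul, mul_assoc, e]
      rw [this, geo, Finset.mul_sum, map_sum, Finset.sum_eq_single 0]
      · simp [R, h0]
      · intro i hi hi0
        rw [← gg_pow, ← gg_mul]
        simp only [R, LL_gg, z_pow hz, h0, zero_sub, neg_eq_zero]
        rw [if_neg]
        intro hh
        rw [ZMod.natCast_eq_zero_iff] at hh
        have := Nat.le_of_dvd (Nat.pos_of_ne_zero hi0) hh
        simp at hi; omega
      · intro h; simp at h; exact absurd h (NeZero.ne N)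
    rw [h1]
    simp only [H, LL_gg, rp_of hz h0 hm, ex_of hz h0 hm]
    rw [mul_assoc, geo_mul, mul_sub, ← gg_mul]; simp
  have := LinearMap.congr_fun key b
  simp only [LinearMap.id_apply, LinearMap.add_apply, LinearMap.comp_apply,
    LinearMap.mulRight_apply, hb, map_zero, add_zero] at this
  exact ⟨_, this.symm⟩

theorem ann_sub (hz : ∀ g, z (g * s) = z g - 1) (hs : s ^ N = 1) (b : ZG G)
    (hb : b * (gg s - 1) = 0) : ∃ c, c * geo s N = b := by
  classical
  let H : ZG G →ₗ[ℤ] ZG G := LL fun g => gg (rp s z g) * geo s (ex z g)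
  let R : ZG G →ₗ[ℤ] ZG G := LL fun g => if ex z g + 1 = N then gg (rp s z g) else 0
  have key : LinearMap.id = H.comp (LinearMap.mulRight ℤ (gg s - 1)) +
      (LinearMap.mulRight ℤ (geo s N)).comp R := by
    apply lin_ext
    intro g
    obtain ⟨g0, m, hm, h0, rfl⟩ := rp_cases hz g
    simp only [LinearMap.id_apply, LinearMap.add_apply, LinearMap.comp_apply, LinearMap.mulRight_apply]
    rw [mul_sub, mul_one, map_sub, ← gg_mul, mul_assoc, ← pow_succ]
    simp only [H, R, LL_gg, rp_of hz h0 hm, ex_of hz h0 hm]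
    by_cases hm' : m + 1 = N
    · have e0 : ex z g0 = 0 := by simpa using ex_of hz h0 (Nat.pos_of_ne_zero (NeZero.ne N))
      have e1 : geo s N = geo s m + gg (s ^ m) := by rw [← geo_succ, hm']
      rw [if_pos hm', e1, hm', hs, mul_one, e0, mul_add, ← gg_mul, geo, Finset.sum_range_zero]
      simp
    · rw [if_neg hm', rp_of hz h0 (by omega), ex_of hz h0 (by omega), geo_succ, mul_add, ← gg_mul]
      simp
  have := LinearMap.congr_fun key b
  simp only [LinearMap.id_apply, LinearMap.add_apply, LinearMap.comp_apply,
    LinearMap.mulRight_apply, hb, map_zero, zero_add] at this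
  exact ⟨_, this.symm⟩

end gr

end partC1

section partC2
theorem comb {G J : Type} [Group G] [Fintype J] {N : ℕ} [NeZero N] (s : Fin 3 → G)
    (δ : Fin 3 → J → ZMod N) (hinj : ∀ k, Function.Injective (δ k))
    (z : Fin 3 → G → ZMod N) (h : Fin 3 → G → ℤ)
    (hz : ∀ k g, z k (g * s k) = z k g - 1) (hh : ∀ k g, h k (g * s k) = h k g)
    (hs : ∀ k g, h (k+1) g = h k g + if z k g = 0 then -2 else 1)
    (rel : ∀ k j, s (k+1) ^ (δ (k+1) j).val * s (k+1+1) ^ (δ (k+1+1) j).val * s k ^ (δ k j).val = 1)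
    (y : Fin 3 → G → J → ℤ) (hsum : ∀ k g, ∑ j, y k g j = 0)
    (hshift : ∀ k g j, y (k+1) (g * s (k+1) ^ (δ (k+1) j).val) j = y k g j)
    (hfin : {p : Fin 3 × G × J | y p.1 p.2.1 p.2.2 ≠ 0}.Finite) :
    ∀ k g j, y k g j = 0 := by
  classical
  have hhp : ∀ k g (n : ℕ), h k (g * s k ^ n) = h k g := by
    intro k g n
    induction n with
    | zero => simp
    | succ n ih => rw [pow_succ, ← mul_assoc, hh, ih]
  have hzv : ∀ k g j, z k (g * s k ^ (δ k j).val) = z k g - δ k j := by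
    intro k g j; rw [z_pow (hz k), ZMod.natCast_zmod_val]
  have k3 : ∀ k : Fin 3, k + 1 + 1 + 1 = k := by decide
  let mv : Fin 3 → G → J → G := fun k g j => g * s (k+1) ^ (δ (k+1) j).val
  have tri : ∀ k g j, (if z k g = 0 then (-2:ℤ) else 1) + (if z (k+1) (mv k g j) = 0 then -2 else 1)
      + (if z (k+1+1) (mv (k+1) (mv k g j) j) = 0 then -2 else 1) = 0 := by
    intro k g j
    have h1 := hs k g
    have h2 : h (k+1) (mv k g j) = _ := hhp (k+1) g _
    have h3 := hs (k+1) (mv k g j)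
    have h4 : h (k+1+1) (mv (k+1) (mv k g j) j) = _ := hhp (k+1+1) (mv k g j) _
    have h5 := hs (k+1+1) (mv (k+1) (mv k g j) j)
    rw [k3] at h5
    have h6 := hhp k (mv (k+1) (mv k g j) j) (δ k j).val
    have h7 : mv (k+1) (mv k g j) j * s k ^ (δ k j).val = g := by
      have := rel k j
      simp only [mv]
      rw [mul_assoc, mul_assoc, ← mul_assoc (s (k+1) ^ _), this, mul_one]
    rw [h7] at h6
    linarith
  let Q : Set (Fin 3 × G × J) :=
    {p | y p.1 p.2.1 p.2.2 ≠ 0 ∧ z (p.1+1) (mv p.1 p.2.1 p.2.2) = 0}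
  have hQf : Q.Finite := hfin.subset fun p hp => hp.1
  have hQe : Q = ∅ := by
    by_contra hne
    obtain ⟨⟨k, g, j⟩, hp, hmax⟩ := Set.exists_max_image Q (fun p => h p.1 p.2.1) hQf
      (Set.nonempty_iff_ne_empty.2 hne)
    obtain ⟨hp1, hp2⟩ := hp
    simp only at hp1 hp2 hmax
    obtain ⟨j', hj', hy'⟩ : ∃ j', j' ≠ j ∧ y k g j' ≠ 0 := by
      by_contra hcon
      push Not at hcon
      apply hp1
      rw [← hsum k g, Finset.sum_eq_single j]
      · intro b _ hb; exact hcon b hb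
      · simp
    have hz' : z (k+1) (mv k g j') ≠ 0 := by
      have e1 : z (k+1) (mv k g j) = _ := hzv (k+1) g j
      have e2 : z (k+1) (mv k g j') = _ := hzv (k+1) g j'
      intro e3
      apply hj'
      apply hinj (k+1)
      rw [hp2] at e1; rw [e3] at e2
      rw [eq_comm, sub_eq_zero] at e1 e2
      rw [← e1, ← e2]
    have t1 := tri k g j
    have t2 := tri k g j'
    rw [if_pos hp2] at t1
    rw [if_neg hz'] at t2
    have hk0 : z k g ≠ 0 := by
      intro e; rw [if_pos e] at t1; split_ifs at t1 <;> norm_num at t1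
    rw [if_neg hk0] at t2
    have hz2 : z (k+1+1) (mv (k+1) (mv k g j') j') = 0 := by
      by_contra e; rw [if_neg e] at t2; norm_num at t2
    have hy2 : y (k+1) (mv k g j') j' ≠ 0 := by
      rw [show y (k+1) (mv k g j') j' = y k g j' from hshift k g j']; exact hy'
    have := hmax ⟨k+1, mv k g j', j'⟩ ⟨hy2, hz2⟩
    have e4 : h (k+1) (mv k g j') = _ := hhp (k+1) g _
    simp only at this
    rw [e4, hs, if_neg hk0] at this
    linarith
  intro k g j
  by_contra hy
  have hy1 : y (k+1) (mv k g j) j ≠ 0 := by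
    rw [show y (k+1) (mv k g j) j = y k g j from hshift k g j]; exact hy
  have hy2 : y (k+1+1) (mv (k+1) (mv k g j) j) j ≠ 0 := by
    rw [show y (k+1+1) (mv (k+1) (mv k g j) j) j = y (k+1) (mv k g j) j from hshift (k+1) _ j]
    exact hy1
  have h7 : mv (k+1+1) (mv (k+1) (mv k g j) j) j = g := by
    have := rel k j
    simp only [mv]
    rw [k3, mul_assoc, mul_assoc, ← mul_assoc (s (k+1) ^ _), this, mul_one]
  have t := tri k g j
  have m1 : (k, g, j) ∉ Q := by rw [hQe]; exact Set.notMem_empty _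
  have m2 : (k+1, mv k g j, j) ∉ Q := by rw [hQe]; exact Set.notMem_empty _
  have m3 : (k+1+1, mv (k+1) (mv k g j) j, j) ∉ Q := by rw [hQe]; exact Set.notMem_empty _
  have n1 : ¬ z (k+1) (mv k g j) = 0 := fun e => m1 ⟨hy, e⟩
  have n2 : ¬ z (k+1+1) (mv (k+1) (mv k g j) j) = 0 := fun e => m2 ⟨hy1, e⟩
  have n3 : ¬ z k g = 0 := fun e => m3 ⟨hy2, by
    change z (k+1+1+1) (mv (k+1+1) (mv (k+1) (mv k g j) j) j) = 0
    rw [h7, k3, e]⟩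
  rw [if_neg n1, if_neg n2, if_neg n3] at t
  norm_num at t

end partC2

section partC3
section res
variable {G J : Type} [Group G]

/-- `Fin 3 → G`-data: first differential -/
noncomputable def d0 (s : Fin 3 → G) : Fin 3 ⊕ Fin 3 → (Fin 3 →₀ ZG G)
  | .inl k => Finsupp.single (k+1) 1 - Finsupp.single k 1
  | .inr k => Finsupp.single k (gg (s k) - 1)

/-- boundary of a triangle -/
noncomputable def dT (s : Fin 3 → G) (a : Fin 3 → ℕ) : Fin 3 ⊕ Fin 3 →₀ ZG G :=
  Finsupp.single (.inl 0) 1 + Finsupp.single (.inr 1) (geo (s 1) (a 1)) +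
    (Finsupp.single (.inl 1) (gg (s 1) ^ a 1) +
      Finsupp.single (.inr 2) (gg (s 1) ^ a 1 * geo (s 2) (a 2))) +
    (Finsupp.single (.inl 2) (gg (s 1) ^ a 1 * gg (s 2) ^ a 2) +
      Finsupp.single (.inr 0) (gg (s 1) ^ a 1 * gg (s 2) ^ a 2 * geo (s 0) (a 0)))

/-- second differential -/
noncomputable def d1 (s : Fin 3 → G) (a : J → Fin 3 → ℕ) (N : ℕ) :
    J ⊕ Fin 3 → (Fin 3 ⊕ Fin 3 →₀ ZG G)
  | .inl j => dT s (a j)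
  | .inr k => Finsupp.single (.inr k) (geo (s k) N)

/-- third differential -/
noncomputable def d2 (s : Fin 3 → G) (J : Type) (k : Fin 3) : (J ⊕ Fin 3 →₀ ZG G) :=
  Finsupp.single (.inr k) (gg (s k) - 1)

/-- higher differentials -/
noncomputable def d3 (s : Fin 3 → G) (N n : ℕ) (k : Fin 3) : (Fin 3 →₀ ZG G) :=
  Finsupp.single k (if Even n then geo (s k) N else gg (s k) - 1)

/-- cells -/
@[reducible] def cell (J : Type) : ℕ → Type
  | 0 => Fin 3
  | 1 => Fin 3 ⊕ Fin 3
  | 2 => J ⊕ Fin 3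
  | (_ + 3) => Fin 3

/-- the whole resolution -/
noncomputable def rd (s : Fin 3 → G) (a : J → Fin 3 → ℕ) (N : ℕ) :
    ∀ n, cell J (n+1) → (cell J n →₀ ZG G)
  | 0 => d0 s
  | 1 => d1 s a N
  | 2 => d2 s J
  | (n + 3) => d3 s N n

variable (s : Fin 3 → G) (a : J → Fin 3 → ℕ) (N : ℕ)

theorem lc_zero {A B : Type} (f : A → (B →₀ ZG G)) {M : Type*} [AddCommGroup M] [Module (ZG G) M]
    (F : (B →₀ ZG G) →ₗ[ZG G] M)
    (h : ∀ a, F (f a) = 0) (x : A →₀ ZG G) : F (Finsupp.linearCombination (ZG G) f x) = 0 := by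
  rw [Finsupp.linearCombination_apply, map_finsuppSum]
  apply Finset.sum_eq_zero
  intro i _
  simp [h]

theorem d01 (hs : ∀ k, s k ^ N = 1)
    (rel : ∀ j, s 1 ^ a j 1 * s 2 ^ a j 2 * s 0 ^ a j 0 = 1) (x : J ⊕ Fin 3) :
    Finsupp.linearCombination (ZG G) (d0 s) (d1 s a N x) = 0 := by
  rcases x with j | k
  · have h3 : gg (s 1) ^ a j 1 * gg (s 2) ^ a j 2 * gg (s 0) ^ a j 0 = (1 : ZG G) := by
      rw [← gg_pow, ← gg_pow, ← gg_pow, ← gg_mul, ← gg_mul, rel, gg_one]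
    simp only [d1, dT, map_add, Finsupp.linearCombination_single, d0, smul_sub, Finsupp.smul_single,
      smul_eq_mul, mul_one, mul_assoc, geo_mul]
    simp only [gg_pow, mul_sub, Finsupp.single_sub, mul_one, ← mul_assoc, h3]
    simp only [show (0 : Fin 3) + 1 = 1 from rfl, show (1 : Fin 3) + 1 = 2 from rfl,
      show (2 : Fin 3) + 1 = 0 from rfl]
    abel
  · simp only [d1, d0, Finsupp.linearCombination_single, Finsupp.smul_single, smul_eq_mul, geo_mul,
      hs, gg_one, sub_self, Finsupp.single_zero]

theorem d12 (hs : ∀ k, s k ^ N = 1) (k : Fin 3) :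
    Finsupp.linearCombination (ZG G) (d1 s a N) (d2 s J k) = 0 := by
  simp [d1, d2, -Finsupp.single_sub, mul_geo, hs, gg_one]

theorem d23 (hs : ∀ k, s k ^ N = 1) (k : Fin 3) :
    Finsupp.linearCombination (ZG G) (d2 s J) (d3 s N 0 k) = 0 := by
  simp [d3, d2, -Finsupp.single_sub, geo_mul, hs, gg_one]

theorem d34 (hs : ∀ k, s k ^ N = 1) (n : ℕ) (k : Fin 3) :
    Finsupp.linearCombination (ZG G) (d3 s N n) (d3 s N (n+1) k) = 0 := by
  by_cases h : Even n
  · simp [d3, h, -Finsupp.single_sub, mul_geo, hs, gg_one, Nat.even_add_one]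
  · simp [d3, h, -Finsupp.single_sub, geo_mul, hs, gg_one, Nat.even_add_one]

theorem rd_dd (hs : ∀ k, s k ^ N = 1)
    (rel : ∀ j, s 1 ^ a j 1 * s 2 ^ a j 2 * s 0 ^ a j 0 = 1) (n : ℕ) (x) :
    DD (rd s a N) n (DD (rd s a N) (n+1) x) = 0 := by
  match n with
  | 0 => exact lc_zero (d1 s a N) _ (d01 s a N hs rel) x
  | 1 => exact lc_zero (d2 s J) _ (d12 s a N hs) x
  | 2 => exact lc_zero (d3 s N 0) _ (d23 s N hs) x
  | (n + 3) => exact lc_zero (d3 s N (n+1)) _ (d34 s N hs n) x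

theorem epsL_single {α : Type} (k : α) (x : ZG G) :
    epsL ℤ G α (Finsupp.single k x) = aug ℤ G x := by simp [epsL]

theorem aug_gg (g : G) : aug ℤ G (gg g) = 1 := aug_single g 1

theorem rd_e0 (x) : epsL ℤ G (Fin 3) (DD (rd s a N) 0 x) = 0 := by
  change epsL ℤ G (Fin 3) (Finsupp.linearCombination (ZG G) (d0 s) x) = 0
  rw [Finsupp.linearCombination_apply, map_finsuppSum]
  apply Finset.sum_eq_zero
  rintro (k | k) _
  · simp [d0, smul_sub, epsL_single]
  · simp only [d0, Finsupp.smul_single, smul_eq_mul, epsL_single, map_mul, map_sub, aug_gg, map_one, sub_self, mul_zero]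

end res

end partC3

section partC4
set_option linter.unusedSectionVars false
set_option linter.unusedSimpArgs false

section ex
variable {G J : Type} [Group G]

theorem diag_apply {B : Type} (e : Fin 3 → B) (he : Function.Injective e) (c : Fin 3 → ZG G)
    (x : Fin 3 →₀ ZG G) (k : Fin 3) :
    Finsupp.linearCombination (ZG G) (fun k => Finsupp.single (e k) (c k)) x (e k) = x k * c k := by
  classical
  rw [Finsupp.linearCombination_apply, Finsupp.sum_fintype _ _ (by simp), Finsupp.finsetSum_apply,
    Finset.sum_eq_single k]
  · simp
  · intro b _ hb
    simp [Finsupp.single_apply, he.ne hb]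
  · simp

theorem diag_apply' {B : Type} (e : Fin 3 → B) (c : Fin 3 → ZG G)
    (x : Fin 3 →₀ ZG G) (b : B) (hb : ∀ k, e k ≠ b) :
    Finsupp.linearCombination (ZG G) (fun k => Finsupp.single (e k) (c k)) x b = 0 := by
  classical
  rw [Finsupp.linearCombination_apply, Finsupp.sum_fintype _ _ (by simp), Finsupp.finsetSum_apply]
  apply Finset.sum_eq_zero
  intro k _
  simp [Finsupp.single_apply, hb k]

variable (s : Fin 3 → G) {N : ℕ} [NeZero N] {z : Fin 3 → G → ZMod N}

theorem ex3 (hz : ∀ k g, z k (g * s k) = z k g - 1) (hs : ∀ k, s k ^ N = 1) (n : ℕ)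
    (x : Fin 3 →₀ ZG G) (hx : Finsupp.linearCombination (ZG G) (d3 s N n) x = 0) :
    ∃ y, Finsupp.linearCombination (ZG G) (d3 s N (n+1)) y = x := by
  have hk : ∀ k, ∃ c, c * (if Even (n+1) then geo (s k) N else gg (s k) - 1) = x k := by
    intro k
    have h1 := diag_apply (G := G) id Function.injective_id
      (fun k => if Even n then geo (s k) N else gg (s k) - 1) x k
    have h2 := DFunLike.congr_fun hx k
    have h3 := h1.symm.trans h2
    by_cases h : Even n
    · simp only [h, Nat.even_add_one, if_true, if_false, not_true, not_false_iff] at h3 ⊢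
      exact ann_norm (hz k) (hs k) _ h3
    · simp only [h, Nat.even_add_one, if_true, if_false, not_true, not_false_iff] at h3 ⊢
      exact ann_sub (hz k) (hs k) _ h3
  choose c hc using hk
  refine ⟨Finsupp.equivFunOnFinite.symm c, ?_⟩
  ext1 k
  refine (diag_apply (G := G) id Function.injective_id
      (fun k => if Even (n+1) then geo (s k) N else gg (s k) - 1) _ k).trans ?_
  simpa using hc k

theorem ex2 (hz : ∀ k g, z k (g * s k) = z k g - 1) (hs : ∀ k, s k ^ N = 1)
    (x : Fin 3 →₀ ZG G) (hx : Finsupp.linearCombination (ZG G) (d2 s J) x = 0) :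
    ∃ y, Finsupp.linearCombination (ZG G) (d3 s N 0) y = x := by
  have hk : ∀ k, ∃ c, c * geo (s k) N = x k := by
    intro k
    have h1 := diag_apply (G := G) (Sum.inr : Fin 3 → J ⊕ Fin 3) Sum.inr_injective
      (fun k => gg (s k) - 1) x k
    have h2 := DFunLike.congr_fun hx (.inr k)
    exact ann_sub (hz k) (hs k) _ (h1.symm.trans h2)
  choose c hc using hk
  refine ⟨Finsupp.equivFunOnFinite.symm c, ?_⟩
  ext1 k
  refine (diag_apply (G := G) id Function.injective_id
      (fun k => if Even 0 then geo (s k) N else gg (s k) - 1) _ k).trans ?_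
  simpa using hc k

theorem coeff_mul_gg (x : ZG G) (g h : G) : (x * gg g).coeff h = x.coeff (h * g⁻¹) := by
  simp [gg]

theorem d1_apply [Fintype J] (a : J → Fin 3 → ℕ) (x : J ⊕ Fin 3 →₀ ZG G) (b : Fin 3 ⊕ Fin 3) :
    Finsupp.linearCombination (ZG G) (d1 s a N) x b =
      ∑ j, x (.inl j) * dT s (a j) b + ∑ k, x (.inr k) * (Finsupp.single (.inr k) (geo (s k) N) : _ →₀ ZG G) b := by
  rw [Finsupp.linearCombination_apply, Finsupp.sum_fintype _ _ (by simp), Finsupp.finsetSum_apply,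
    Fintype.sum_sum_type]
  rfl

theorem ex1 [Fintype J]
    (δ : Fin 3 → J → ZMod N) (hinj : ∀ k, Function.Injective (δ k))
    (h : Fin 3 → G → ℤ)
    (hz : ∀ k g, z k (g * s k) = z k g - 1) (hh : ∀ k g, h k (g * s k) = h k g)
    (hst : ∀ k g, h (k+1) g = h k g + if z k g = 0 then -2 else 1)
    (hs : ∀ k, s k ^ N = 1)
    (rel : ∀ k j, s (k+1) ^ (δ (k+1) j).val * s (k+1+1) ^ (δ (k+1+1) j).val * s k ^ (δ k j).val = 1)
    (x : J ⊕ Fin 3 →₀ ZG G)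
    (hx : Finsupp.linearCombination (ZG G) (d1 s (fun j k => (δ k j).val) N) x = 0) :
    ∃ y, Finsupp.linearCombination (ZG G) (d2 s J) y = x := by
  classical
  let Y : Fin 3 → J → ZG G := fun k j => x (.inl j) *
    ![1, gg (s 1 ^ (δ 1 j).val), gg (s 1 ^ (δ 1 j).val * s 2 ^ (δ 2 j).val)] k
  have hY : ∀ k j, Y (k+1) j = Y k j * gg (s (k+1) ^ (δ (k+1) j).val) := by
    intro k j
    fin_cases k
    · simp [Y]
    · simp [Y, gg_mul, mul_assoc]
    · have r0 := rel 0 j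
      simp only [Fin.isValue, zero_add, show (1 : Fin 3) + 1 = 2 from rfl] at r0
      simp [Y, mul_assoc, ← gg_mul]
      rw [← mul_assoc (s 1 ^ _), r0]; simp [gg_one]
  have hYs : ∀ k, ∑ j, Y k j = 0 := by
    intro k
    have := DFunLike.congr_fun hx (.inl k)
    rw [d1_apply] at this
    have h2 : ∑ k', x (.inr k') * (Finsupp.single (.inr k') (geo (s k') N) : Fin 3 ⊕ Fin 3 →₀ ZG G) (.inl k) = 0 := by
      simp
    rw [h2, add_zero, Finsupp.zero_apply] at this
    rw [← this]
    apply Finset.sum_congr rfl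
    intro j _
    fin_cases k <;> simp [Y, dT, gg_pow, gg_mul, Finsupp.single_apply]
  have hxT : ∀ j, x (.inl j) = 0 := by
    have := comb s δ hinj z h hz hh hst rel (fun k g j => (Y k j).coeff g) ?_ ?_ ?_
    · intro j
      have h0 : (Y 0 j).coeff = 0 := by ext g; exact this 0 g j
      rw [MonoidAlgebra.coeff_eq_zero] at h0
      simpa [Y] using h0
    · intro k g
      have := congrArg (fun u : ZG G => u.coeff g) (hYs k)
      simpa [MonoidAlgebra.coeff_sum, Finsupp.finsetSum_apply] using this
    · intro k g j
      simp only [hY, coeff_mul_gg, mul_inv_cancel_right]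
    · refine ((Set.finite_univ (α := Fin 3 × J)).biUnion
        (t := fun p => (fun g => (p.1, g, p.2)) '' (Y p.1 p.2).coeff.support)
        fun p _ => (Finset.finite_toSet _).image _).subset ?_
      rintro ⟨k, g, j⟩ hp
      simp only [Set.mem_iUnion]
      exact ⟨(k, j), Set.mem_univ _, g, by simpa using hp, rfl⟩
  have hk : ∀ k, ∃ c, c * (gg (s k) - 1) = x (.inr k) := by
    intro k
    have := DFunLike.congr_fun hx (.inr k)
    rw [d1_apply] at this
    simp only [hxT, zero_mul, Finset.sum_const_zero, zero_add] at this
    rw [Finset.sum_eq_single k (by intro b _ hb; simp [Finsupp.single_apply, hb]) (by simp)] at this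
    simp only [Finsupp.single_eq_same] at this
    exact ann_norm (hz k) (hs k) _ this
  choose c hc using hk
  refine ⟨Finsupp.equivFunOnFinite.symm c, ?_⟩
  ext1 b
  rcases b with j | k
  · rw [hxT]
    exact diag_apply' (G := G) (Sum.inr : Fin 3 → J ⊕ Fin 3) (fun k => gg (s k) - 1) _ (.inl j) (by simp)
  · refine (diag_apply (G := G) (Sum.inr : Fin 3 → J ⊕ Fin 3) Sum.inr_injective
      (fun k => gg (s k) - 1) _ k).trans ?_
    simpa using hc k
end ex

end partC4

section partC5
set_option linter.unusedSectionVars false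
set_option linter.unusedSimpArgs false

section ex0
variable (q : ℕ) (δ : Fin 3 → Fin (q + 1) → ZMod (q ^ 2 + q + 1))

theorem sg_ind {P : SingerLattice q δ → Prop} (h1 : P 1) (hm : ∀ g h, P g → P h → P (g * h))
    (hi : ∀ g, P g → P g⁻¹) (hg : ∀ k, P (sg q δ k)) (g : SingerLattice q δ) : P g := by
  let K : Subgroup (PresentedGroup (singerRels q δ)) :=
    { carrier := {x | P x}
      mul_mem' := fun {a b} ha hb => hm a b ha hb
      one_mem' := h1
      inv_mem' := fun {a} ha => hi a ha }
  have : K = ⊤ := by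
    rw [eq_top_iff, ← PresentedGroup.closure_range_of (singerRels q δ), Subgroup.closure_le]
    rintro _ ⟨k, rfl⟩
    exact hg k
  have h2 : (g : PresentedGroup (singerRels q δ)) ∈ K := by rw [this]; trivial
  exact h2

theorem sg_pow (k : Fin 3) : sg q δ k ^ (q^2+q+1) = 1 :=
  PresentedGroup.one_of_mem (rels := singerRels q δ) (x := FreeGroup.of k ^ (q^2+q+1)) (Or.inl ⟨k, rfl⟩)

theorem sg_tri (j : Fin (q+1)) : sg q δ 0 ^ (δ 0 j).val * sg q δ 1 ^ (δ 1 j).val *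
    sg q δ 2 ^ (δ 2 j).val = 1 :=
  PresentedGroup.one_of_mem (rels := singerRels q δ) (x := FreeGroup.of 0 ^ (δ 0 j).val *
    FreeGroup.of 1 ^ (δ 1 j).val * FreeGroup.of 2 ^ (δ 2 j).val) (Or.inr ⟨j, rfl⟩)

theorem cyc3 {G : Type*} [Group G] {a b c : G} (h : a * b * c = 1) : b * c * a = 1 := by
  rw [mul_assoc] at h
  exact mul_eq_one_comm.1 h

theorem sg_rel (k : Fin 3) (j : Fin (q+1)) : sg q δ (k+1) ^ (δ (k+1) j).val *
    sg q δ (k+1+1) ^ (δ (k+1+1) j).val * sg q δ k ^ (δ k j).val = 1 := by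
  fin_cases k
  · exact cyc3 (sg_tri q δ j)
  · exact cyc3 (cyc3 (sg_tri q δ j))
  · exact sg_tri q δ j

theorem ex00 (x : Fin 3 →₀ ZG (SingerLattice q δ)) (hx : epsL ℤ (SingerLattice q δ) (Fin 3) x = 0) :
    ∃ y, Finsupp.linearCombination (ZG (SingerLattice q δ)) (d0 (sg q δ)) y = x := by
  let R := LinearMap.range (Finsupp.linearCombination (ZG (SingerLattice q δ)) (d0 (sg q δ)))
  have hR : ∀ b, R.mkQ (d0 (sg q δ) b) = 0 := by
    intro b
    rw [Submodule.mkQ_apply, Submodule.Quotient.mk_eq_zero]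
    exact ⟨Finsupp.single b 1, by simp⟩
  let u : Fin 3 → _ ⧸ R := fun k => R.mkQ (Finsupp.single k 1)
  have hu : ∀ k, u (k+1) = u k := by
    intro k
    have := hR (.inl k)
    rw [d0, map_sub, sub_eq_zero] at this
    exact this
  have hu0 : ∀ k, u k = u 0 := by
    intro k
    have h0 := hu 0
    have h1 := hu 1
    fin_cases k
    · rfl
    · exact h0
    · exact h1.trans h0
  have hsu : ∀ g : SingerLattice q δ, gg g • u 0 = u 0 := by
    apply sg_ind
    · rw [gg_one, one_smul]
    · intro g h hg hh; rw [gg_mul, mul_smul, hh, hg]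
    · intro g hg
      rw [← hg, ← mul_smul, ← gg_mul, inv_mul_cancel, gg_one, one_smul, hg]
    · intro k
      rw [← hu0 k]
      have := hR (.inr k)
      rw [d0, show (Finsupp.single k (gg (sg q δ k) - 1) : Fin 3 →₀ ZG (SingerLattice q δ)) =
        (gg (sg q δ k) - 1) • Finsupp.single k 1 by
          rw [Finsupp.smul_single, smul_eq_mul, mul_one], map_smul, sub_smul, one_smul, sub_eq_zero] at this
      exact this
  have hz : ∀ z : ZG (SingerLattice q δ), z • u 0 = aug ℤ _ z • u 0 := by
    intro z
    induction z using MonoidAlgebra.induction_linear with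
    | zero => simp
    | add x y hx hy => rw [add_smul, hx, hy, map_add, add_smul]
    | single g r => rw [aux_single, map_zsmul, aug_gg, smul_assoc, hsu, smul_assoc, one_smul]
  have key : ∀ x : Fin 3 →₀ ZG (SingerLattice q δ), R.mkQ x = epsL ℤ _ (Fin 3) x • u 0 := by
    intro x
    induction x using Finsupp.induction_linear with
    | zero => simp
    | add x y hx hy => rw [map_add, hx, hy, map_add, add_smul]
    | single k z =>
      rw [epsL_single, ← hz, ← hu0 k]
      change _ = z • R.mkQ _
      rw [← map_smul, Finsupp.smul_single, smul_eq_mul, mul_one]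
  have h1 := key x
  rw [hx, zero_smul, Submodule.mkQ_apply, Submodule.Quotient.mk_eq_zero] at h1
  exact h1

/-- affine permutation of a module over a group ring -/
noncomputable def aff {G M : Type} [Group G] [AddCommGroup M] [Module (ZG G) M] (g : G) (D : M) :
    Equiv.Perm M where
  toFun m := D + gg g • m
  invFun m := gg g⁻¹ • (m - D)
  left_inv m := by
    simp only [add_sub_cancel_left]
    rw [← mul_smul, ← gg_mul, inv_mul_cancel, gg_one, one_smul]
  right_inv m := by
    simp only
    rw [← mul_smul, ← gg_mul, mul_inv_cancel, gg_one, one_smul, add_sub_cancel]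

theorem aff_apply {G M : Type} [Group G] [AddCommGroup M] [Module (ZG G) M] (g : G) (D m : M) :
    aff g D m = D + gg g • m := rfl

theorem aff_pow {G M : Type} [Group G] [AddCommGroup M] [Module (ZG G) M] (g : G) (p c m : M)
    (n : ℕ) : (aff g (p + c - gg g • p) ^ n) m = p + geo g n • c - gg (g ^ n) • p + gg (g ^ n) • m := by
  induction n generalizing m with
  | zero => simp [geo, gg_one]
  | succ n ih =>
    rw [pow_succ, Equiv.Perm.mul_apply, ih, aff_apply, geo_succ, pow_succ, gg_mul]
    simp only [smul_add, smul_sub, add_smul, mul_smul]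
    abel


theorem ex01 (h0 : ∀ i, δ i 0 = 0) (x : Fin 3 ⊕ Fin 3 →₀ ZG (SingerLattice q δ))
    (hx : Finsupp.linearCombination (ZG (SingerLattice q δ)) (d0 (sg q δ)) x = 0) :
    ∃ y, Finsupp.linearCombination (ZG (SingerLattice q δ))
      (d1 (sg q δ) (fun j k => (δ k j).val) (q^2+q+1)) y = x := by
  let R := LinearMap.range (Finsupp.linearCombination (ZG (SingerLattice q δ))
      (d1 (sg q δ) (fun j k => (δ k j).val) (q^2+q+1)))
  have hR : ∀ b, R.mkQ (d1 (sg q δ) (fun j k => (δ k j).val) (q^2+q+1) b) = 0 := by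
    intro b
    rw [Submodule.mkQ_apply, Submodule.Quotient.mk_eq_zero]
    exact ⟨Finsupp.single b 1, by simp⟩
  let M := (Fin 3 ⊕ Fin 3 →₀ ZG (SingerLattice q δ)) ⧸ R
  let e : Fin 3 → M := fun k => R.mkQ (Finsupp.single (.inl k) 1)
  let c : Fin 3 → M := fun k => R.mkQ (Finsupp.single (.inr k) 1)
  have hes : ∀ k (z : ZG (SingerLattice q δ)), R.mkQ (Finsupp.single (.inl k) z) = z • e k := by
    intro k z
    change _ = z • R.mkQ _
    rw [← map_smul, Finsupp.smul_single, smul_eq_mul, mul_one]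
  have hcs : ∀ k (z : ZG (SingerLattice q δ)), R.mkQ (Finsupp.single (.inr k) z) = z • c k := by
    intro k z
    change _ = z • R.mkQ _
    rw [← map_smul, Finsupp.smul_single, smul_eq_mul, mul_one]
  have hN : ∀ k, geo (sg q δ k) (q^2+q+1) • c k = 0 := by
    intro k
    rw [← hcs]; exact hR (.inr k)
  have hT : ∀ j, e 0 + geo (sg q δ 1) (δ 1 j).val • c 1 + (gg (sg q δ 1) ^ (δ 1 j).val • e 1 +
      (gg (sg q δ 1) ^ (δ 1 j).val * geo (sg q δ 2) (δ 2 j).val) • c 2) +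
      ((gg (sg q δ 1) ^ (δ 1 j).val * gg (sg q δ 2) ^ (δ 2 j).val) • e 2 +
      (gg (sg q δ 1) ^ (δ 1 j).val * gg (sg q δ 2) ^ (δ 2 j).val * geo (sg q δ 0) (δ 0 j).val) • c 0)
      = 0 := by
    intro j
    have := hR (.inl j)
    simp only [d1, dT, map_add, hes, hcs, one_smul] at this
    exact this
  have hE : e 0 + e 1 + e 2 = 0 := by
    have := hT 0
    simpa [h0, geo] using this
  let p : Fin 3 → M := ![0, e 0, e 0 + e 1]
  have hp : ∀ k, p (k+1) - p k = e k := by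
    intro k
    fin_cases k
    · simp [p]
    · simp [p]
    · change 0 - (e 0 + e 1) = e 2
      rw [← hE]; abel
  let A : Fin 3 → Equiv.Perm M := fun k => aff (sg q δ k) (p k + c k - gg (sg q δ k) • p k)
  have hA : ∀ k n m, (A k ^ n) m = p k + geo (sg q δ k) n • c k - gg (sg q δ k ^ n) • p k
      + gg (sg q δ k ^ n) • m := fun k n m => aff_pow _ _ _ _ _
  have hA1 : ∀ j, A 1 ^ (δ 1 j).val * A 2 ^ (δ 2 j).val * A 0 ^ (δ 0 j).val = 1 := by
    intro j
    ext1 m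
    rw [Equiv.Perm.mul_apply, Equiv.Perm.mul_apply, hA, hA, hA, Equiv.Perm.one_apply]
    have t := hT j
    have rr : sg q δ 1 ^ (δ 1 j).val * sg q δ 2 ^ (δ 2 j).val * sg q δ 0 ^ (δ 0 j).val = 1 := sg_rel q δ 0 j
    have r : gg (sg q δ 1) ^ (δ 1 j).val • gg (sg q δ 2) ^ (δ 2 j).val • gg (sg q δ 0) ^ (δ 0 j).val • m = m := by
      rw [← mul_smul, ← mul_smul, ← gg_pow, ← gg_pow, ← gg_pow, ← gg_mul, ← gg_mul, rr,
        gg_one, one_smul]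
    have r2 : gg (sg q δ 1) ^ (δ 1 j).val • gg (sg q δ 2) ^ (δ 2 j).val • (e 0 + e 1 + e 2) = 0 := by
      rw [hE, smul_zero, smul_zero]
    have p0 : p 0 = 0 := rfl
    have p1 : p 1 = e 0 := rfl
    have p2 : p 2 = e 0 + e 1 := rfl
    simp only [p0, p1, p2, gg_pow, smul_add, smul_sub, mul_smul, smul_zero, r] at t r2 ⊢
    rw [← sub_eq_zero]
    refine Eq.trans ?_ (congrArg₂ (· - ·) t r2 |>.trans (sub_zero _))
    abel
  let φ : SingerLattice q δ →* Equiv.Perm M := PresentedGroup.toGroup (f := A) (by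
    rintro r (⟨i, rfl⟩ | ⟨j, rfl⟩)
    · rw [map_pow, FreeGroup.lift_apply_of]
      ext1 m
      rw [hA, hN, sg_pow, gg_one, Equiv.Perm.one_apply]
      simp
    · simp only [map_mul, map_pow, FreeGroup.lift_apply_of]
      exact cyc3 (cyc3 (hA1 j)))
  have hφ : ∀ k, φ (sg q δ k) = A k := fun k => PresentedGroup.toGroup.of _
  let D : SingerLattice q δ → M := fun g => φ g 0
  have hD : ∀ g m, φ g m = D g + gg g • m := by
    apply sg_ind
    · intro m; simp [D, gg_one]
    · intro g h hg hh m
      simp only [D] at *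
      rw [map_mul, Equiv.Perm.mul_apply, Equiv.Perm.mul_apply, hh, hg, hg (φ h 0), gg_mul, mul_smul,
        smul_add]
      abel
    · intro g hg m
      have e0 : ∀ u, φ g (φ g⁻¹ u) = u := fun u => by
        rw [← Equiv.Perm.mul_apply, ← map_mul, mul_inv_cancel, map_one]; rfl
      apply (φ g).injective
      have e2 := hg (φ g⁻¹ 0)
      rw [e0] at e2
      rw [e0, hg]
      simp only [D] at e2 ⊢
      rw [smul_add, ← add_assoc, ← e2, zero_add, ← mul_smul, ← gg_mul, mul_inv_cancel, gg_one, one_smul]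
    · intro k m
      simp only [D]
      rw [hφ]
      simp [A, aff_apply]
  let S : (Fin 3 →₀ ZG (SingerLattice q δ)) →ₗ[ℤ] M :=
    Finsupp.lsum ℤ fun k => LL fun g => D g + gg g • p k
  have hS : ∀ k g, S (Finsupp.single k (gg g)) = D g + gg g • p k := by
    intro k g; simp [S]
  have hSb : ∀ (b : Fin 3 ⊕ Fin 3) (g : SingerLattice q δ), S (gg g • d0 (sg q δ) b) = gg g • R.mkQ (Finsupp.single b 1) := by
    intro b g
    rcases b with k | k
    · change _ = gg g • e k
      simp only [d0, smul_sub, map_sub, Finsupp.smul_single, smul_eq_mul, mul_one, hS]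
      rw [← hp, smul_sub]; abel
    · change _ = gg g • c k
      rw [d0, Finsupp.smul_single, smul_eq_mul, mul_sub, mul_one, Finsupp.single_sub, map_sub,
        ← gg_mul, hS, hS]
      have : D (g * sg q δ k) = D g + gg g • (p k + c k - gg (sg q δ k) • p k) := by
        have h5 := hD g (φ (sg q δ k) 0)
        rw [← Equiv.Perm.mul_apply, ← map_mul, hφ] at h5
        refine h5.trans ?_
        simp [A, aff_apply]
      rw [this, gg_mul, mul_smul, smul_sub, smul_add]; abel
  have key : ∀ x, S (Finsupp.linearCombination (ZG (SingerLattice q δ)) (d0 (sg q δ)) x) = R.mkQ x := by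
    intro x
    induction x using Finsupp.induction_linear with
    | zero => simp
    | add x y hx hy => rw [map_add, map_add, hx, hy, map_add]
    | single b z =>
      rw [Finsupp.linearCombination_single]
      induction z using MonoidAlgebra.induction_linear with
      | zero => simp
      | add x y hx hy => rw [add_smul, map_add, hx, hy, ← map_add, Finsupp.single_add]
      | single g r =>
        rw [aux_single, smul_assoc, map_zsmul, hSb, ← map_smul, ← map_zsmul, Finsupp.smul_single,
          smul_eq_mul, mul_one, Finsupp.smul_single]
  have h1 := key x
  rw [hx, map_zero, eq_comm, Submodule.mkQ_apply, Submodule.Quotient.mk_eq_zero] at h1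
  exact h1

end ex0

end partC5

section partC6
/-- exponents -/
def av {q : ℕ} (δ : Fin 3 → Fin (q + 1) → ZMod (q ^ 2 + q + 1)) : Fin (q+1) → Fin 3 → ℕ :=
  fun j k => (δ k j).val

theorem bar_sg (q : ℕ) (hq : 2 ≤ q) (δ : Fin 3 → Fin (q + 1) → ZMod (q ^ 2 + q + 1))
    (hinj : ∀ i, Function.Injective (δ i)) (h0 : ∀ i, δ i 0 = 0)
    (hpds : ∀ i, IsPlanarDifferenceSet q (Set.range (δ i))) (n : ℕ) :
    Nonempty (barHomology ℤ (SingerLattice q δ) n ≃+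
      hom (M := fun n => cell (Fin (q+1)) n →₀ ℤ) (DB (rd (sg q δ) (av δ) (q^2+q+1))) n) := by
  obtain ⟨z, h, hz, hh, hst⟩ := heights q hq δ hinj h0 hpds
  have hN : NeZero (q^2+q+1) := ⟨by positivity⟩
  have : Nonempty (cell (Fin (q+1)) 0) := ⟨(0 : Fin 3)⟩
  apply bar_of_res (rd (sg q δ) (av δ) (q^2+q+1))
  · exact rd_dd _ _ _ (sg_pow q δ) (fun j => sg_rel q δ 0 j)
  · exact rd_e0 _ _ _
  · exact ex00 q δ
  · intro n x hx
    match n with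
    | 0 => exact ex01 q δ h0 x hx
    | 1 => exact ex1 (sg q δ) δ hinj h hz hh hst (sg_pow q δ) (sg_rel q δ) x hx
    | 2 => exact ex2 (sg q δ) hz (sg_pow q δ) x hx
    | (n + 3) => exact ex3 (sg q δ) hz (sg_pow q δ) n x hx

end partC6

section partD1
set_option linter.unusedSectionVars false
set_option linter.unusedSimpArgs false

theorem hom_of_surj {M M' A : Type} [AddCommGroup M] [AddCommGroup M'] [AddCommGroup A]
    (d : M' →ₗ[ℤ] M) (Z : Submodule ℤ M) (φ : Z →ₗ[ℤ] A) (hs : Function.Surjective φ)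
    (hk : ∀ z : Z, φ z = 0 ↔ z.1 ∈ LinearMap.range d) :
    Nonempty (↥(Submodule.map (LinearMap.range d).mkQ Z) ≃+ A) := by
  let ψ : Z →ₗ[ℤ] ↥(Submodule.map (LinearMap.range d).mkQ Z) :=
    LinearMap.codRestrict _ ((LinearMap.range d).mkQ ∘ₗ Z.subtype) (fun x => ⟨x, x.2, rfl⟩)
  have hψ : Function.Surjective ψ := by
    rintro ⟨_, y, hy, rfl⟩
    exact ⟨⟨y, hy⟩, rfl⟩
  have hke : LinearMap.ker ψ = LinearMap.ker φ := by
    ext x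
    rw [LinearMap.mem_ker, LinearMap.mem_ker, hk, ← Subtype.coe_inj]
    have h1 : (ψ x : M ⧸ LinearMap.range d) = Submodule.Quotient.mk x.1 := rfl
    rw [h1, Submodule.coe_zero, Submodule.Quotient.mk_eq_zero]
  exact ⟨((ψ.quotKerEquivOfSurjective hψ).symm ≪≫ₗ (Submodule.quotEquivOfEq _ _ hke) ≪≫ₗ
    φ.quotKerEquivOfSurjective hs).toAddEquiv⟩

theorem aug_geo {G : Type} [Group G] (s : G) (m : ℕ) : aug ℤ G (geo s m) = m := by
  simp [geo, aug_gg]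

theorem augF_lc {G A B : Type} [Group G] [Fintype A] (f : A → (B →₀ ZG G)) (x : A →₀ ℤ) (b : B) :
    Finsupp.linearCombination ℤ (fun a => augF ℤ G B (f a)) x b = ∑ a, x a * aug ℤ G (f a b) := by
  rw [Finsupp.linearCombination_apply, Finsupp.sum_fintype _ _ (by simp), Finsupp.finsetSum_apply]
  simp [augF]

section
variable {G : Type} [Group G] (s : Fin 3 → G) {q : ℕ} (a : Fin (q+1) → Fin 3 → ℕ) (N : ℕ)

theorem DB0 (x : Fin 3 ⊕ Fin 3 →₀ ℤ) (k : Fin 3) :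
    (DB (rd s a N) 0 x : Fin 3 →₀ ℤ) k = x (.inl (k+2)) - x (.inl k) := by
  refine (augF_lc (d0 s) x k).trans ?_
  rw [Fintype.sum_sum_type]
  have h1 : ∀ k', aug ℤ G (d0 s (.inr k') k) = 0 := by
    intro k'
    by_cases h : k' = k
    · subst h; simp only [d0, Finsupp.single_eq_same, map_sub, aug_gg, map_one, sub_self]
    · rw [d0, Finsupp.single_eq_of_ne (Ne.symm h), map_zero]
  simp only [h1, mul_zero, Finset.sum_const_zero, add_zero, Fin.sum_univ_three, d0,
    Finsupp.sub_apply, map_sub]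
  fin_cases k <;> simp [Finsupp.single_apply, aug_gg] <;> ring

theorem DB1_l (x : Fin (q+1) ⊕ Fin 3 →₀ ℤ) (k : Fin 3) :
    (DB (rd s a N) 1 x : Fin 3 ⊕ Fin 3 →₀ ℤ) (.inl k) = ∑ j, x (.inl j) := by
  refine (augF_lc (d1 s a N) x _).trans ?_
  rw [Fintype.sum_sum_type]
  have h1 : ∀ k', aug ℤ G (d1 s a N (.inr k') (.inl k)) = 0 := by
    intro k'
    simp [d1]
  have h2 : ∀ j, aug ℤ G (d1 s a N (.inl j) (.inl k)) = 1 := by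
    intro j
    fin_cases k <;> simp [d1, dT, Finsupp.single_apply, aug_gg]
  simp [h1, h2]

theorem DB1_r (x : Fin (q+1) ⊕ Fin 3 →₀ ℤ) (k : Fin 3) :
    (DB (rd s a N) 1 x : Fin 3 ⊕ Fin 3 →₀ ℤ) (.inr k) = ∑ j, x (.inl j) * a j k + x (.inr k) * N := by
  refine (augF_lc (d1 s a N) x _).trans ?_
  rw [Fintype.sum_sum_type]
  have h1 : ∀ k', aug ℤ G (d1 s a N (.inr k') (.inr k)) = if k' = k then (N : ℤ) else 0 := by
    intro k'
    by_cases h : k' = k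
    · subst h; simp [d1, aug_geo]
    · simp [d1, h, Finsupp.single_apply]
  have h2 : ∀ j, aug ℤ G (d1 s a N (.inl j) (.inr k)) = a j k := by
    intro j
    fin_cases k <;> simp [d1, dT, Finsupp.single_apply, aug_gg, aug_geo]
  simp [h1, h2]

theorem DB2 (x : Fin 3 →₀ ℤ) : (DB (rd s a N) 2 x : Fin (q+1) ⊕ Fin 3 →₀ ℤ) = 0 := by
  ext1 b
  refine (augF_lc (d2 s (Fin (q+1))) x _).trans ?_
  apply Finset.sum_eq_zero
  intro k _
  have : aug ℤ G (d2 s (Fin (q+1)) k b) = 0 := by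
    by_cases h : b = .inr k
    · subst h; simp only [d2, Finsupp.single_eq_same, map_sub, aug_gg, map_one, sub_self]
    · rw [d2, Finsupp.single_eq_of_ne h, map_zero]
  rw [this, mul_zero]

theorem DB3 (n : ℕ) (x : Fin 3 →₀ ℤ) (k : Fin 3) :
    (DB (rd s a N) (n+3) x : Fin 3 →₀ ℤ) k = x k * if Even n then (N : ℤ) else 0 := by
  refine (augF_lc (d3 s N n) x _).trans ?_
  rw [Finset.sum_eq_single k]
  · rw [d3, Finsupp.single_eq_same]
    split_ifs
    · rw [aug_geo]
    · rw [map_sub, aug_gg, map_one, sub_self]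
  · intro b _ hb
    rw [d3, Finsupp.single_eq_of_ne (Ne.symm hb), map_zero, mul_zero]
  · simp

theorem H0 : Nonempty (hom (M := fun n => cell (Fin (q+1)) n →₀ ℤ) (DB (rd s a N)) 0 ≃+ ℤ) := by
  let f : (Fin 3 →₀ ℤ) →ₗ[ℤ] ℤ :=
    Finsupp.lapply 0 + Finsupp.lapply 1 + Finsupp.lapply 2
  refine hom_of_surj (DB (rd s a N) 0) ⊤ (f ∘ₗ Submodule.subtype _) ?_ ?_
  · intro n
    exact ⟨⟨Finsupp.single (0 : Fin 3) n, trivial⟩, by simp [f]⟩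
  · rintro ⟨z, _⟩
    change z (0 : Fin 3) + z (1 : Fin 3) + z (2 : Fin 3) = 0 ↔ _
    constructor
    · intro h
      refine ⟨Finsupp.equivFunOnFinite.symm
        (Sum.elim ![- z (0 : Fin 3), - z (0 : Fin 3) - z (1 : Fin 3), 0] 0), ?_⟩
      ext1 k
      refine (DB0 s a N _ k).trans ?_
      change Fin 3 at k
      fin_cases k <;> simp
      omega
    · rintro ⟨y, rfl⟩
      have e0 := DB0 s a N y 0
      have e1 := DB0 s a N y 1
      have e2 := DB0 s a N y 2
      rw [e0, e1, e2, show (1 : Fin 3) + 2 = 0 from rfl, show (2 : Fin 3) + 2 = 1 from rfl,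
        zero_add]
      ring

theorem Hodd [NeZero N] (m : ℕ) (hm : Even m) :
    Nonempty (hom (M := fun n => cell (Fin (q+1)) n →₀ ℤ) (DB (rd s a N)) (m+3) ≃+ (Fin 3 → ZMod N)) := by
  have hc : cyc (M := fun n => cell (Fin (q+1)) n →₀ ℤ) (DB (rd s a N)) (m+3) = ⊤ := by
    rw [eq_top_iff]
    intro x _
    change DB (rd s a N) (m+2) x = 0
    match m, hm with
    | 0, _ => exact DB2 s a N x
    | (m+1), hm =>
      ext1 k
      refine (DB3 s a N m x k).trans ?_
      rw [Nat.even_add_one] at hm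
      rw [if_neg hm, mul_zero]; rfl
  unfold hom
  rw [hc]
  let f : (Fin 3 →₀ ℤ) →ₗ[ℤ] (Fin 3 → ZMod N) :=
    LinearMap.pi fun k => (Int.castAddHom (ZMod N)).toIntLinearMap ∘ₗ Finsupp.lapply k
  refine hom_of_surj (DB (rd s a N) (m+3)) ⊤ (f ∘ₗ Submodule.subtype _) ?_ ?_
  · intro v
    refine ⟨⟨Finsupp.equivFunOnFinite.symm fun k => ((v k).val : ℤ), trivial⟩, ?_⟩
    ext k
    simp [f]
  · rintro ⟨z, _⟩
    constructor
    · intro h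
      have h1 : ∀ k, ((z k : ℤ) : ZMod N) = 0 := fun k => congrFun h k
      have h2 : ∀ k, ∃ y, z k = y * N := fun k => by
        obtain ⟨y, hy⟩ := (ZMod.intCast_zmod_eq_zero_iff_dvd _ _).1 (h1 k)
        exact ⟨y, by rw [hy, mul_comm]⟩
      choose y hy using h2
      refine ⟨Finsupp.equivFunOnFinite.symm y, ?_⟩
      ext1 k
      refine (DB3 s a N m _ k).trans ?_
      rw [if_pos hm]
      simp [hy k]
    · rintro ⟨y, rfl⟩
      ext k
      change (((DB (rd s a N) (m+3) y : Fin 3 →₀ ℤ) k : ℤ) : ZMod N) = 0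
      rw [DB3, if_pos hm]; simp

theorem Heven [NeZero N] (m : ℕ) (hm : Odd m) :
    Subsingleton (hom (M := fun n => cell (Fin (q+1)) n →₀ ℤ) (DB (rd s a N)) (m+3)) := by
  have hc : cyc (M := fun n => cell (Fin (q+1)) n →₀ ℤ) (DB (rd s a N)) (m+3) = ⊥ := by
    rw [eq_bot_iff]
    intro x hx
    change DB (rd s a N) (m+2) x = 0 at hx
    obtain ⟨m, rfl⟩ : ∃ m', m = m' + 1 := ⟨m - 1, by have := hm.pos; omega⟩
    have hm' : Even m := by
      rw [Nat.odd_add_one, Nat.not_odd_iff_even] at hm; exact hm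
    have : x = 0 := by
      ext1 k
      have h2 := (DB3 s a N m x k).symm.trans (DFunLike.congr_fun hx k)
      rw [if_pos hm'] at h2
      simpa [NeZero.ne N] using h2
    rw [this]; exact Submodule.zero_mem _
  unfold hom
  rw [hc, Submodule.map_bot]
  infer_instance

end

end partD1

section partD2
set_option linter.unusedSectionVars false
set_option linter.unusedSimpArgs false

theorem enough_zmod (N : ℕ) [NeZero N] : HasEnoughRootsOfUnity (Multiplicative (ZMod N)) N where
  prim := ⟨Multiplicative.ofAdd 1, by
    rw [IsPrimitiveRoot.iff_orderOf, orderOf_ofAdd_eq_addOrderOf, ZMod.addOrderOf_one]⟩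
  cyc := by
    have : IsCyclic (Multiplicative (ZMod N))ˣ :=
      isCyclic_of_surjective (toUnits : Multiplicative (ZMod N) ≃* _).toMonoidHom
        (toUnits : Multiplicative (ZMod N) ≃* _).surjective
    infer_instance

theorem exists_dual (N : ℕ) [NeZero N] (B : Type) [AddCommGroup B] [Module (ZMod N) B] [Finite B] :
    Nonempty (B ≃+ (B →ₗ[ZMod N] ZMod N)) := by
  have he : Monoid.exponent (Multiplicative B) ∣ N := by
    apply Monoid.exponent_dvd_of_forall_pow_eq_one
    intro b
    apply Multiplicative.toAdd.injective
    change N • (Multiplicative.toAdd b) = 0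
    rw [← Nat.cast_smul_eq_nsmul (ZMod N), CharP.cast_eq_zero, zero_smul]
  have := enough_zmod N
  have := HasEnoughRootsOfUnity.of_dvd (Multiplicative (ZMod N)) he
  obtain ⟨e⟩ := CommGroup.monoidHom_mulEquiv_of_hasEnoughRootsOfUnity (Multiplicative B)
    (Multiplicative (ZMod N))
  let f : (B →ₗ[ZMod N] ZMod N) ≃+ Additive (Multiplicative B →* (Multiplicative (ZMod N))ˣ) :=
    { toFun := fun l => Additive.ofMul
        ((toUnits : Multiplicative (ZMod N) ≃* _).toMonoidHom.comp
          (AddMonoidHom.toMultiplicative l.toAddMonoidHom))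
      invFun := fun m => AddMonoidHom.toZModLinearMap N
        (AddMonoidHom.toMultiplicative.symm
          ((toUnits : Multiplicative (ZMod N) ≃* _).symm.toMonoidHom.comp m.toMul))
      left_inv := by
        intro l
        ext b
        simp
      right_inv := by
        intro m
        apply Additive.toMul.injective
        ext b
        simp
      map_add' := by
        intro l l'
        apply Additive.toMul.injective
        ext b
        simp }
  exact ⟨((f.trans (MulEquiv.toAdditive e)).trans (AddEquiv.additiveMultiplicative B)).symm⟩

theorem coker_ker (N : ℕ) [NeZero N] {q : ℕ} (A : Matrix (Fin q) (Fin 3) (ZMod N)) :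
    Nonempty (((Fin 3 → ZMod N) ⧸ LinearMap.range A.vecMulLinear) ≃+ LinearMap.ker A.mulVecLin) := by
  obtain ⟨e⟩ := exists_dual N ((Fin 3 → ZMod N) ⧸ LinearMap.range A.vecMulLinear)
  let W := LinearMap.range A.vecMulLinear
  let E := (dotProductEquiv (ZMod N) (Fin 3))
  have hW : ∀ x, E x ∈ W.dualAnnihilator ↔ x ∈ LinearMap.ker A.mulVecLin := by
    intro x
    rw [Submodule.mem_dualAnnihilator, LinearMap.mem_ker, Matrix.mulVecLin_apply]
    have h1 : ∀ n, E x (A.vecMulLinear n) = n ⬝ᵥ (A.mulVec x) := by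
      intro n
      rw [Matrix.dotProduct_mulVec, dotProduct_comm]; rfl
    constructor
    · intro h
      apply dotProduct_eq_zero
      intro n
      rw [dotProduct_comm, ← h1]
      exact h _ ⟨n, rfl⟩
    · rintro h _ ⟨n, rfl⟩
      rw [h1, h, dotProduct_zero]
  let e2 : LinearMap.ker A.mulVecLin ≃ₗ[ZMod N] W.dualAnnihilator :=
    E.ofSubmodules _ _ (by
      ext y
      rw [Submodule.mem_map_equiv, ← hW, LinearEquiv.apply_symm_apply])
  exact ⟨e.trans ((W.dualQuotEquivDualAnnihilator.toAddEquiv).trans e2.symm.toAddEquiv)⟩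

section
variable {G : Type} [Group G] (s : Fin 3 → G) {q : ℕ}

theorem H1 (N : ℕ) [NeZero N] (δ : Fin 3 → Fin (q+1) → ZMod N) (h0 : ∀ i, δ i 0 = 0)
    (a : Fin (q+1) → Fin 3 → ℕ) (ha : ∀ j k, (a j k : ZMod N) = δ k j)  :
    Nonempty (hom (M := fun n => cell (Fin (q+1)) n →₀ ℤ) (DB (rd s a N)) 1 ≃+
      LinearMap.ker (Matrix.mulVecLin (Matrix.of fun (j : Fin q) (i : Fin 3) => δ i j.succ))) := by
  set A : Matrix (Fin q) (Fin 3) (ZMod N) := Matrix.of fun (j : Fin q) (i : Fin 3) => δ i j.succ with hA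
  obtain ⟨e⟩ := coker_ker N A
  let f : (Fin 3 ⊕ Fin 3 →₀ ℤ) →ₗ[ℤ] (Fin 3 → ZMod N) :=
    LinearMap.pi fun k => (Int.castAddHom (ZMod N)).toIntLinearMap ∘ₗ Finsupp.lapply (.inr k)
  have hf : ∀ x k, f x k = ((x (.inr k) : ℤ) : ZMod N) := fun _ _ => rfl
  let p : (Fin 3 → ZMod N) →ₗ[ℤ] ((Fin 3 → ZMod N) ⧸ LinearMap.range A.vecMulLinear) :=
    (LinearMap.range A.vecMulLinear).mkQ.toAddMonoidHom.toIntLinearMap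
  have hp : ∀ x, p x = 0 ↔ x ∈ LinearMap.range A.vecMulLinear := fun x =>
    Submodule.Quotient.mk_eq_zero _
  have key : Nonempty (hom (M := fun n => cell (Fin (q+1)) n →₀ ℤ) (DB (rd s a N)) 1 ≃+
      ((Fin 3 → ZMod N) ⧸ LinearMap.range A.vecMulLinear)) := by
    refine hom_of_surj (DB (rd s a N) 1) (LinearMap.ker (DB (rd s a N) 0))
      (p ∘ₗ f ∘ₗ Submodule.subtype _) ?_ ?_
    · intro v
      obtain ⟨v, rfl⟩ := Submodule.Quotient.mk_surjective _ v
      refine ⟨⟨Finsupp.equivFunOnFinite.symm (Sum.elim 0 fun k => ((v k).val : ℤ)), ?_⟩, ?_⟩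
      · rw [LinearMap.mem_ker]
        ext1 k
        refine (DB0 s a N _ k).trans ?_
        simp
      · change p (f _) = p v
        congr 1
        ext k
        rw [hf]
        simp
    · rintro ⟨z, hz⟩
      have hz0 : ∀ k, z (.inl (k+2)) = z (.inl k) := fun k => by
        have := (DB0 s a N z k).symm.trans (DFunLike.congr_fun hz k)
        exact sub_eq_zero.1 this
      have hz1 : ∀ k, z (.inl k) = z (.inl 0) := by
        intro k
        have e1 := hz0 1
        have e2 := hz0 2
        rw [show (1 : Fin 3) + 2 = 0 from rfl] at e1
        rw [show (2 : Fin 3) + 2 = 1 from rfl] at e2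
        fin_cases k
        · rfl
        · exact e1.symm
        · exact e2.symm.trans e1.symm
      change p (f z) = 0 ↔ _
      rw [hp]
      constructor
      · rintro ⟨n, hn⟩
        have hn' : ∀ k, ((z (.inr k) : ℤ) : ZMod N) = ∑ j, n j * δ k j.succ := fun k =>
          (congrFun hn k).symm
        let y0 : Fin (q+1) → ℤ := Fin.cons (z (.inl 0) - ∑ j, ((n j).val : ℤ)) fun j => ((n j).val : ℤ)
        have h2 : ∀ k, ∃ y, z (.inr k) - ∑ j, y0 j * a j k = y * N := fun k => by
          have : ((z (.inr k) - ∑ j, y0 j * a j k : ℤ) : ZMod N) = 0 := by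
            push_cast
            rw [hn', Fin.sum_univ_succ]
            simp [ha, h0, y0]
          obtain ⟨y, hy⟩ := (ZMod.intCast_zmod_eq_zero_iff_dvd _ _).1 this
          exact ⟨y, by rw [hy, mul_comm]⟩
        choose y hy using h2
        refine ⟨Finsupp.equivFunOnFinite.symm (Sum.elim y0 y), ?_⟩
        ext1 k
        rcases k with k | k
        · refine (DB1_l s a N _ k).trans ?_
          rw [hz1 k]
          simp [Fin.sum_univ_succ, y0]
        · refine (DB1_r s a N _ k).trans ?_
          have := hy k
          simp only [Finsupp.equivFunOnFinite_symm_apply_apply, Sum.elim_inl, Sum.elim_inr]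
          linarith
      · rintro ⟨y, rfl⟩
        refine ⟨fun j => ((y (.inl j.succ) : ℤ) : ZMod N), ?_⟩
        ext k
        rw [hf]
        have := DB1_r s a N y k
        rw [this, Fin.sum_univ_succ]
        simp [ha, h0, hA, Matrix.vecMul, dotProduct]
  obtain ⟨e'⟩ := key
  exact ⟨e'.trans e⟩

theorem H2 (N : ℕ) [NeZero N] (a : Fin (q+1) → Fin 3 → ℕ) (ha : ∀ k, a 0 k = 0)  :
    Nonempty (hom (M := fun n => cell (Fin (q+1)) n →₀ ℤ) (DB (rd s a N)) 2 ≃+ (Fin q → ℤ)) := by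
  let Z : Submodule ℤ (Fin (q+1) ⊕ Fin 3 →₀ ℤ) := LinearMap.ker (DB (rd s a N) 1)
  have hZ : ∀ z, z ∈ Z ↔ (∑ j, z (.inl j) = 0) ∧
      ∀ k, ∑ j, z (.inl j) * a j k + z (.inr k) * N = 0 := by
    intro z
    constructor
    · intro h
      exact ⟨(DB1_l s a N z 0).symm.trans (DFunLike.congr_fun h _),
        fun k => (DB1_r s a N z k).symm.trans (DFunLike.congr_fun h _)⟩
    · rintro ⟨h1, h2⟩
      change DB (rd s a N) 1 z = 0
      ext1 k
      rcases k with k | k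
      · exact (DB1_l s a N z k).trans h1
      · exact (DB1_r s a N z k).trans (h2 k)
  let f : Z →ₗ[ℤ] (Fin q → ℤ) :=
    (LinearMap.pi fun j => Finsupp.lapply (Sum.inl (Fin.succ j))) ∘ₗ Z.subtype
  have hf : Function.Injective f := by
    rw [injective_iff_map_eq_zero]
    rintro ⟨z, hz⟩ h
    have h' : ∀ j : Fin q, z (.inl j.succ) = 0 := fun j => congrFun h j
    obtain ⟨h1, h2⟩ := (hZ z).1 hz
    have h3 : ∀ j, z (.inl j) = 0 := by
      intro j
      refine Fin.cases ?_ h' j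
      simpa [Fin.sum_univ_succ, h'] using h1
    apply Subtype.ext
    ext k
    rcases k with k | k
    · exact h3 k
    · simpa [h3, NeZero.ne N] using h2 k
  let g : (Fin q → ℤ) →ₗ[ℤ] Z :=
    { toFun := fun n => ⟨Finsupp.equivFunOnFinite.symm
        (Sum.elim (Fin.cons (- ∑ j, N * n j) fun j => N * n j) fun k => - ∑ j, n j * a j.succ k), by
          rw [hZ]
          refine ⟨by simp [Fin.sum_univ_succ], fun k => ?_⟩
          simp only [Finsupp.equivFunOnFinite_symm_apply_apply, Sum.elim_inl, Sum.elim_inr,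
            Fin.sum_univ_succ, Fin.cons_zero, Fin.cons_succ, ha, Nat.cast_zero, mul_zero, zero_add,
            neg_mul, Finset.sum_mul]
          rw [add_neg_eq_zero]
          exact Finset.sum_congr rfl fun j _ => by ring⟩
      map_add' := by
        intro n m
        apply Subtype.ext
        ext k
        rcases k with k | k
        · refine Fin.cases ?_ (fun j => ?_) k
          · simp [mul_add, Finset.sum_add_distrib]; ring
          · simp [mul_add]
        · simp [add_mul, Finset.sum_add_distrib]; ring
      map_smul' := by
        intro c m
        apply Subtype.ext
        ext k
        rcases k with k | k
        · refine Fin.cases ?_ (fun j => ?_) k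
          · simp [Finset.mul_sum, mul_left_comm]
          · simp [mul_left_comm]
        · simp [Finset.mul_sum, mul_assoc] }
  have hg : Function.Injective g := by
    rw [injective_iff_map_eq_zero]
    intro n h
    ext j
    have : (N : ℤ) * n j = 0 := DFunLike.congr_fun (congrArg Subtype.val h) (Sum.inl j.succ)
    simpa [NeZero.ne N] using this
  have hfin : Module.Finite ℤ Z := Module.Finite.of_injective f hf
  have hfree : Module.Free ℤ Z := inferInstance
  have hr : Module.finrank ℤ Z = Module.finrank ℤ (Fin q → ℤ) :=
    le_antisymm (LinearMap.finrank_le_finrank_of_injective hf)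
      (LinearMap.finrank_le_finrank_of_injective hg)
  let E := LinearEquiv.ofFinrankEq Z (Fin q → ℤ) hr
  refine hom_of_surj (DB (rd s a N) 2) Z E.toLinearMap E.surjective ?_
  intro z
  rw [LinearEquiv.coe_coe, LinearEquiv.map_eq_zero_iff]
  constructor
  · rintro rfl; exact Submodule.zero_mem _
  · rintro ⟨y, hy⟩
    apply Subtype.ext
    rw [← hy]
    exact DB2 s a N y

end

end partD2

/-- Let `q ≥ 2` be a prime power, `N = q² + q + 1`, and let
`δ₁, δ₂, δ₃ : {0, …, q} → ZMod N` be injections with `δᵢ(0) = 0` whose images are planar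
difference sets of order `q`, and let `Γ` be the panel-regular lattice presented by
`⟨σ₁, σ₂, σ₃ ∣ σᵢ^N = 1, σ₁^{δ₁(j)} σ₂^{δ₂(j)} σ₃^{δ₃(j)} = 1 for all j⟩`.
Then the integral group homology of `Γ` is:  `H₀ ≅ ℤ`, `H₁ ≅ ker 𝒟`, `H₂ ≅ ℤ^q`,
`H_j ≅ (ZMod N)³` for odd `j ≥ 3`, and `H_j = 0` for even `j ≥ 4`. -/
theorem statement6 (q : ℕ) (hq : IsPrimePow q)
    (δ : Fin 3 → Fin (q + 1) → ZMod (q ^ 2 + q + 1))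
    (hinj : ∀ i, Function.Injective (δ i))
    (h0 : ∀ i, δ i 0 = 0)
    (hpds : ∀ i, IsPlanarDifferenceSet q (Set.range (δ i))) :
    Nonempty (barHomology ℤ (SingerLattice q δ) 0 ≃+ ℤ) ∧
    Nonempty (barHomology ℤ (SingerLattice q δ) 1 ≃+ LinearMap.ker (diffMap q δ)) ∧
    Nonempty (barHomology ℤ (SingerLattice q δ) 2 ≃+ (Fin q → ℤ)) ∧
    (∀ j : ℕ, 3 ≤ j → Odd j →
      Nonempty (barHomology ℤ (SingerLattice q δ) j ≃+ (Fin 3 → ZMod (q ^ 2 + q + 1)))) ∧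
    (∀ j : ℕ, 4 ≤ j → Even j → Subsingleton (barHomology ℤ (SingerLattice q δ) j)) := by
  have hq2 : 2 ≤ q := hq.two_le
  have hN : NeZero (q ^ 2 + q + 1) := ⟨by positivity⟩
  have key := bar_sg q hq2 δ hinj h0 hpds
  have ha : ∀ j k, ((av δ j k : ℕ) : ZMod (q ^ 2 + q + 1)) = δ k j := fun j k => by
    simp [av]
  have ha0 : ∀ k, av δ 0 k = 0 := fun k => by simp [av, h0]
  refine ⟨?_, ?_, ?_, ?_, ?_⟩
  · obtain ⟨e⟩ := key 0
    obtain ⟨e'⟩ := H0 (sg q δ) (av δ) (q ^ 2 + q + 1)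
    exact ⟨e.trans e'⟩
  · obtain ⟨e⟩ := key 1
    obtain ⟨e'⟩ := H1 (sg q δ) (q ^ 2 + q + 1) δ h0 (av δ) ha
    exact ⟨e.trans e'⟩
  · obtain ⟨e⟩ := key 2
    obtain ⟨e'⟩ := H2 (sg q δ) (q ^ 2 + q + 1) (av δ) ha0
    exact ⟨e.trans e'⟩
  · intro j hj hodd
    obtain ⟨m, rfl⟩ : ∃ m, j = m + 3 := ⟨j - 3, by omega⟩
    have hm : Even m := by
      rw [Nat.odd_iff] at hodd
      rw [Nat.even_iff]; omega
    obtain ⟨e⟩ := key (m + 3)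
    obtain ⟨e'⟩ := Hodd (sg q δ) (av δ) (q ^ 2 + q + 1) m hm
    exact ⟨e.trans e'⟩
  · intro j hj heven
    obtain ⟨m, rfl⟩ : ∃ m, j = m + 3 := ⟨j - 3, by omega⟩
    have hm : Odd m := by
      rw [Nat.even_iff] at heven
      rw [Nat.odd_iff]; omega
    obtain ⟨e⟩ := key (m + 3)
    have := Heven (sg q δ) (av δ) (q ^ 2 + q + 1) m hm
    exact e.toEquiv.subsingleton

end Stmt6
end

section
/- The rational group homology of Γ is: H₀(Γ; Q) ≅ Q, H₂(Γ; Q) ≅ Q^q, and H_j(Γ; Q) = 0 for every j ∉ {0, 2}. -/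
namespace Stmt7

open Finsupp in
/-- The `n`-th differential of the (inhomogeneous) bar complex computing the homology of the
group `G` with trivial coefficients in the commutative ring `R`.  The module of `n`-chains is
the free `R`-module on `n`-tuples of elements of `G`, and on a basis element
`(g₁, …, g_{n+1})` the differential is
`(g₂,…,g_{n+1}) + ∑ᵢ (-1)ⁱ (g₁,…,gᵢgᵢ₊₁,…,g_{n+1}) + (-1)^{n+1} (g₁,…,g_n)`. -/
noncomputable def barDiff (R : Type) [CommRing R] (G : Type*) [Group G] (n : ℕ) :
    ((Fin (n + 1) → G) →₀ R) →ₗ[R] ((Fin n → G) →₀ R) :=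
  Finsupp.lift ((Fin n → G) →₀ R) R (Fin (n + 1) → G) fun c =>
    Finsupp.single (fun j : Fin n => c j.succ) (1 : R)
      + ∑ i : Fin n, Finsupp.single
          (fun j : Fin n => if (j : ℕ) < (i : ℕ) then c (Fin.castSucc j)
            else if (j : ℕ) = (i : ℕ) then c (Fin.castSucc i) * c i.succ
            else c j.succ) ((-1 : R) ^ ((i : ℕ) + 1))
      + Finsupp.single (fun j : Fin n => c (Fin.castSucc j)) ((-1 : R) ^ (n + 1))

/-- The submodule of `k`-cycles of the bar complex of `G` (with trivial coefficients `R`). -/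
noncomputable def barCycles (R : Type) [CommRing R] (G : Type*) [Group G] :
    (k : ℕ) → Submodule R ((Fin k → G) →₀ R)
  | 0 => ⊤
  | (k + 1) => LinearMap.ker (barDiff R G k)

/-- The submodule of `k`-boundaries of the bar complex of `G`. -/
noncomputable def barBoundaries (R : Type) [CommRing R] (G : Type*) [Group G] (k : ℕ) :
    Submodule R ((Fin k → G) →₀ R) :=
  LinearMap.range (barDiff R G k)

/-- Group homology `H_k(G; R)` with trivial coefficients, defined via the bar complex as the
image of the `k`-cycles in the quotient of the `k`-chains by the `k`-boundaries
(i.e. as `Z_k / B_k`). -/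
noncomputable def barHomology (R : Type) [CommRing R] (G : Type*) [Group G] (k : ℕ) :=
  ↥(Submodule.map (barBoundaries R G k).mkQ (barCycles R G k))

noncomputable instance (R : Type) [CommRing R] (G : Type*) [Group G] (k : ℕ) :
    AddCommGroup (barHomology R G k) :=
  inferInstanceAs (AddCommGroup ↥(Submodule.map (barBoundaries R G k).mkQ (barCycles R G k)))

noncomputable instance (R : Type) [CommRing R] (G : Type*) [Group G] (k : ℕ) :
    Module R (barHomology R G k) :=
  inferInstanceAs (Module R ↥(Submodule.map (barBoundaries R G k).mkQ (barCycles R G k)))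

/-- The relators of the presentation
`Γ = ⟨σ₁, σ₂, σ₃ ∣ σᵢ^N = 1 (i = 1,2,3), σ₁^{δ₁(j)} σ₂^{δ₂(j)} σ₃^{δ₃(j)} = 1 (0 ≤ j ≤ q)⟩`,
where `N = q² + q + 1` and `δ i : Fin (q+1) → ZMod N` are the three ordered difference sets
(exponentiation by `δ ∈ ZMod N` means exponentiation by the representative `δ.val`).
The generators `σ₁, σ₂, σ₃` correspond to `0, 1, 2 : Fin 3`. -/
def singerRels (q : ℕ) (δ : Fin 3 → Fin (q + 1) → ZMod (q ^ 2 + q + 1)) :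
    Set (FreeGroup (Fin 3)) :=
  {r | (∃ i : Fin 3, r = FreeGroup.of i ^ (q ^ 2 + q + 1)) ∨
    (∃ j : Fin (q + 1),
      r = FreeGroup.of 0 ^ (δ 0 j).val * FreeGroup.of 1 ^ (δ 1 j).val *
        FreeGroup.of 2 ^ (δ 2 j).val)}

/-- The panel-regular `Ã₂`-lattice
`Γ = ⟨σ₁, σ₂, σ₃ ∣ σᵢ^N = 1, σ₁^{δ₁(j)} σ₂^{δ₂(j)} σ₃^{δ₃(j)} = 1 for all j⟩`. -/
def SingerLattice (q : ℕ) (δ : Fin 3 → Fin (q + 1) → ZMod (q ^ 2 + q + 1)) :=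
  PresentedGroup (singerRels q δ)

instance (q : ℕ) (δ : Fin 3 → Fin (q + 1) → ZMod (q ^ 2 + q + 1)) :
    Group (SingerLattice q δ) := by
  unfold SingerLattice; infer_instance

/-- The linear map `𝒟 : (ZMod N)³ → (ZMod N)^q` given by
`𝒟(x₁, x₂, x₃) = (δ₁(j)x₁ + δ₂(j)x₂ + δ₃(j)x₃)_{j = 1, …, q}`. -/
noncomputable def diffMap (q : ℕ) (δ : Fin 3 → Fin (q + 1) → ZMod (q ^ 2 + q + 1)) :
    (Fin 3 → ZMod (q ^ 2 + q + 1)) →ₗ[ZMod (q ^ 2 + q + 1)] (Fin q → ZMod (q ^ 2 + q + 1)) :=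
  Matrix.mulVecLin (Matrix.of fun (j : Fin q) (i : Fin 3) => δ i j.succ)

/-- `Δ ⊆ ZMod N` is a planar difference set of order `q` if it has `q + 1` elements and every
nonzero element of `ZMod N` is uniquely a difference of two elements of `Δ`. -/
def IsPlanarDifferenceSet (q : ℕ) (Δ : Set (ZMod (q ^ 2 + q + 1))) : Prop :=
  Δ.ncard = q + 1 ∧ ∀ x : ZMod (q ^ 2 + q + 1), x ≠ 0 →
    ∃! de : ZMod (q ^ 2 + q + 1) × ZMod (q ^ 2 + q + 1),
      (de.1 ∈ Δ ∧ de.2 ∈ Δ) ∧ de.1 - de.2 = x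

end Stmt7

namespace Stmt7

section Comb

variable {A J : Type} [AddCommGroup A] (δ : Fin 3 → J → A)

/-- Elementary moves on words. -/
inductive Step : Fin 3 → List A → List A → Prop
  | tri (i : Fin 3) (a c : A) (j j' : J) (w : List A) :
      Step i ((a + δ i j) :: δ (i + 1) j :: (c + δ (i + 1 + 1) j) :: w)
        ((a + δ i j') :: δ (i + 1) j' :: (c + δ (i + 1 + 1) j') :: w)
  | cons (i : Fin 3) (a : A) (w w' : List A) : Step (i + 1) w w' → Step i (a :: w) (a :: w')

/-- Equivalence of words. -/
def Eqv (i : Fin 3) : List A → List A → Prop := Relation.ReflTransGen (Step δ i)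

variable {δ}

lemma Step.symm {i : Fin 3} {x y : List A} (h : Step δ i x y) : Step δ i y x := by
  induction h with
  | tri i a c j j' w => exact Step.tri i a c j' j w
  | cons i a w w' _ ih => exact Step.cons i a _ _ ih

lemma Step.length {i : Fin 3} {x y : List A} (h : Step δ i x y) : x.length = y.length := by
  induction h with
  | tri i a c j j' w => simp
  | cons i a w w' _ ih => simp [ih]

lemma Eqv.refl (i : Fin 3) (x : List A) : Eqv δ i x x := Relation.ReflTransGen.refl

lemma Eqv.of_step {i : Fin 3} {x y : List A} (h : Step δ i x y) : Eqv δ i x y :=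
  Relation.ReflTransGen.single h

lemma Eqv.trans {i : Fin 3} {x y z : List A} (h : Eqv δ i x y) (h' : Eqv δ i y z) :
    Eqv δ i x z := Relation.ReflTransGen.trans h h'

lemma Eqv.symm {i : Fin 3} {x y : List A} (h : Eqv δ i x y) : Eqv δ i y x := by
  induction h with
  | refl => exact Eqv.refl _ _
  | tail _ h ih => exact (Eqv.of_step h.symm).trans ih

lemma Eqv.length {i : Fin 3} {x y : List A} (h : Eqv δ i x y) : x.length = y.length := by
  induction h with
  | refl => rfl
  | tail _ h ih => exact ih.trans h.length

lemma Eqv.cons {i : Fin 3} {x y : List A} (a : A) (h : Eqv δ (i + 1) x y) :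
    Eqv δ i (a :: x) (a :: y) := by
  induction h with
  | refl => exact Eqv.refl _ _
  | tail _ h ih => exact ih.trans (Eqv.of_step (Step.cons _ _ _ _ h))

lemma Step.exists_cons {i : Fin 3} {a : A} {x W : List A} (h : Step δ i (a :: x) W) :
    ∃ b y, W = b :: y := by
  cases h <;> exact ⟨_, _, rfl⟩

lemma Step.add {i : Fin 3} {a b e : A} {x y : List A} (h : Step δ i (a :: x) (b :: y)) :
    Step δ i ((e + a) :: x) ((e + b) :: y) := by
  cases h with
  | tri _ a c j j' w => rw [← add_assoc, ← add_assoc]; exact Step.tri _ _ _ _ _ _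
  | cons _ _ _ _ h => exact Step.cons _ _ _ _ h

lemma Eqv.add {i : Fin 3} {a b : A} (e : A) {x y : List A} (h : Eqv δ i (a :: x) (b :: y)) :
    Eqv δ i ((e + a) :: x) ((e + b) :: y) := by
  generalize hu : a :: x = u at h
  generalize hv : b :: y = v at h
  induction h using Relation.ReflTransGen.head_induction_on generalizing a x with
  | refl => 
    rw [← hv] at hu
    obtain ⟨rfl, rfl⟩ := List.cons.inj hu
    exact Eqv.refl _ _
  | head h _ ih =>
    subst hu
    obtain ⟨c, z, rfl⟩ := h.exists_cons
    exact (Eqv.of_step h.add).trans (ih rfl)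

lemma Eqv.tri (i : Fin 3) (a c : A) (j j' : J) (w : List A) :
    Eqv δ i ((a + δ i j) :: δ (i + 1) j :: (c + δ (i + 1 + 1) j) :: w)
        ((a + δ i j') :: δ (i + 1) j' :: (c + δ (i + 1 + 1) j') :: w) :=
  Eqv.of_step (Step.tri _ _ _ _ _ _)

lemma fin3 (i : Fin 3) : i + 1 + 1 + 1 = i := by
  revert i; decide

/-- The difference set hypotheses. -/
structure DS (δ : Fin 3 → J → A) : Prop where
  ex : ∀ i (a b : A), a ≠ b → ∃ a0 j j', a = a0 + δ i j ∧ b = a0 + δ i j'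
  inj : ∀ i, Function.Injective (δ i)
  uniq : ∀ i j j' k k', j ≠ j' → δ i j - δ i j' = δ i k - δ i k' → j = k ∧ j' = k'

/-- Conclusion of the reduction lemma -/
def Red (δ : Fin 3 → J → A) (i : Fin 3) (a : A) (x : List A) (b : A) (y : List A) : Prop :=
  (a = b ∧ Eqv δ (i + 1) x y) ∨ ∃ a0 j j' c w, a = a0 + δ i j ∧ b = a0 + δ i j' ∧
    Eqv δ (i + 1) x (δ (i + 1) j :: (c + δ (i + 1 + 1) j) :: w) ∧
    Eqv δ (i + 1) y (δ (i + 1) j' :: (c + δ (i + 1 + 1) j') :: w)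

lemma reduction_aux (H : DS δ) (n : ℕ) : ∀ (i : Fin 3) (a : A) (x : List A) (b : A) (y : List A),
    x.length = n → Eqv δ i (a :: x) (b :: y) → Red δ i a x b y := by
  induction n using Nat.strong_induction_on with
  | _ n IH =>
  intro i a x b y hn h
  generalize hu : a :: x = u at h
  generalize hv : b :: y = v at h
  induction h using Relation.ReflTransGen.head_induction_on generalizing a x with
  | refl =>
    rw [← hv] at hu
    obtain ⟨rfl, rfl⟩ := List.cons.inj hu
    exact Or.inl ⟨rfl, Eqv.refl _ _⟩
  | head h _ ih =>
    subst hu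
    have hlen := h.length
    obtain ⟨c, z, rfl⟩ := h.exists_cons
    have ih := ih c z (by simp at hlen; omega) rfl
    cases h with
    | cons _ _ _ _ h =>
      rcases ih with ⟨hab, hxy⟩ | ⟨a0, j, j', c, w, h1, h2, h3, h4⟩
      · exact Or.inl ⟨hab, (Eqv.of_step h).trans hxy⟩
      · exact Or.inr ⟨a0, j, j', c, w, h1, h2, (Eqv.of_step h).trans h3, h4⟩
    | tri _ a0 e j1 j2 x' =>
      rcases ih with ⟨hab, hxy⟩ | ⟨c0, j3, j4, f, w, h1, h2, h3, h4⟩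
      · exact Or.inr ⟨a0, j1, j2, e, x', rfl, hab.symm, Eqv.refl _ _, hxy.symm⟩
      · have key := IH ((e + δ (i + 1 + 1) j2) :: x').length (by simp at hn ⊢; omega)
          (i + 1) _ _ _ _ rfl h3
        have X : ∀ f w, Eqv δ (i + 1 + 1) ((e + δ (i + 1 + 1) j2) :: x') (f :: w) →
            Eqv δ (i + 1) (δ (i + 1) j1 :: (e + δ (i + 1 + 1) j1) :: x')
              (δ (i + 1) j1 :: (δ (i + 1 + 1) j1 - δ (i + 1 + 1) j2 + f) :: w) := by
          intro f w h
          have := (h.add (δ (i + 1 + 1) j1 - δ (i + 1 + 1) j2)).cons (i := i + 1) (δ (i + 1) j1)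
          rwa [show δ (i + 1 + 1) j1 - δ (i + 1 + 1) j2 + (e + δ (i + 1 + 1) j2)
            = e + δ (i + 1 + 1) j1 by abel] at this
        have same : j2 = j3 → Eqv δ (i + 1 + 1) ((e + δ (i + 1 + 1) j2) :: x')
            ((f + δ (i + 1 + 1) j3) :: w) → Red δ i (a0 + δ i j1)
              (δ (i + 1) j1 :: (e + δ (i + 1 + 1) j1) :: x') b y := by
          rintro rfl hE
          have := X _ _ hE
          rw [show δ (i + 1 + 1) j1 - δ (i + 1 + 1) j2 + (f + δ (i + 1 + 1) j2)
            = f + δ (i + 1 + 1) j1 by abel] at this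
          have hac : a0 = c0 := add_right_cancel h1
          exact Or.inr ⟨a0, j1, j4, f, w, rfl, by rw [h2, hac], this, h4⟩
        by_cases hj : j2 = j3
        · rcases key with ⟨-, hE⟩ | ⟨b0, j5, j6, g, w', k1, k2, k3, k4⟩
          · exact same hj hE
          · apply same hj
            subst hj
            have : j5 = j6 := H.inj (i + 1) (add_left_cancel (k1.symm.trans k2))
            subst this
            exact k3.trans k4.symm
        · rcases key with ⟨hE, -⟩ | ⟨b0, j5, j6, g, w', k1, k2, k3, k4⟩
          · exact absurd (H.inj _ hE) hj
          · obtain ⟨rfl, rfl⟩ := H.uniq (i + 1) j2 j3 j5 j6 hj (by rw [k1, k2]; abel)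
            have Y1 := X _ _ k3
            have Y2 := (k4.add (δ (i + 1 + 1) j4 - δ (i + 1 + 1) j3)).cons
              (i := i + 1) (δ (i + 1) j4)
            rw [show δ (i + 1 + 1) j4 - δ (i + 1 + 1) j3 + (f + δ (i + 1 + 1) j3)
              = 0 + (f + δ (i + 1 + 1) j4) by abel, zero_add] at Y2
            have Y2 := h4.trans Y2
            rw [sub_add_cancel] at Y1 Y2
            have hb : b = c0 + δ i j4 := h2
            have Z : ∀ j k d, Eqv δ (i + 1) (δ (i + 1) j :: δ (i + 1 + 1) j :: (d + δ i j) :: w')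
                (δ (i + 1) k :: δ (i + 1 + 1) k :: (d + δ i k) :: w') := by
              intro j k d
              have := Eqv.tri (δ := δ) (i + 1) 0 d j k w'
              rwa [fin3, zero_add, zero_add] at this
            rw [fin3] at Y1 Y2
            by_cases hab : a0 + δ i j1 = b
            · left
              refine ⟨hab, Y1.trans (Eqv.symm (Y2.trans ?_))⟩
              have := Z j4 j1 (g + δ i j3 - δ i j4)
              rw [show g + δ i j3 - δ i j4 + δ i j4 = g + δ i j3 by abel,
                show g + δ i j3 - δ i j4 + δ i j1 = g + δ i j2 by
                  have e1 : a0 = c0 + δ i j3 - δ i j2 := by rw [← h1]; abel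
                  have e2 : δ i j1 = c0 + δ i j4 - a0 := by rw [← hb, ← hab]; abel
                  rw [e2, e1]; abel] at this
              exact this
            · right
              obtain ⟨b0, j5, j6, h5, h6⟩ := H.ex i _ _ hab
              refine ⟨b0, j5, j6, 0, (g + (a0 + δ i j2) - b0) :: w', h5, h6, ?_, ?_⟩
              · have := Z j1 j5 (g + δ i j2 - δ i j1)
                rw [show g + δ i j2 - δ i j1 + δ i j1 = g + δ i j2 by abel,
                  show g + δ i j2 - δ i j1 + δ i j5 = g + (a0 + δ i j2) - b0 by
                    have e1 : δ i j5 = a0 + δ i j1 - b0 := by rw [h5]; abel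
                    rw [e1]; abel] at this
                rw [zero_add]
                exact Y1.trans this
              · have := Z j4 j6 (g + δ i j3 - δ i j4)
                rw [show g + δ i j3 - δ i j4 + δ i j4 = g + δ i j3 by abel,
                  show g + δ i j3 - δ i j4 + δ i j6 = g + (a0 + δ i j2) - b0 by
                    have e1 : δ i j6 = c0 + δ i j4 - b0 := by rw [← hb, h6]; abel
                    rw [e1, h1]; abel] at this
                rw [zero_add]
                exact Y2.trans this

lemma reduction (H : DS δ) {i : Fin 3} {a : A} {x : List A} {b : A} {y : List A}
    (h : Eqv δ i (a :: x) (b :: y)) : Red δ i a x b y :=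
  reduction_aux H _ _ _ _ _ _ rfl h

lemma Eqv.cancel (H : DS δ) {i : Fin 3} {a : A} {x y : List A}
    (h : Eqv δ i (a :: x) (a :: y)) : Eqv δ (i + 1) x y := by
  rcases reduction H h with ⟨-, h⟩ | ⟨b0, j5, j6, g, w', k1, k2, k3, k4⟩
  · exact h
  · have : j5 = j6 := H.inj i (add_left_cancel (k1.symm.trans k2))
    subst this
    exact k3.trans k4.symm

end Comb
end Stmt7

namespace Stmt7
section Comb2

variable {A J : Type} [AddCommGroup A] {δ : Fin 3 → J → A}

lemma central_aux (o : J) (ho : ∀ i, δ i o = 0) (i : Fin 3) (k c : A) (j : J) (w : List A) :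
    Eqv δ i (k :: 0 :: 0 :: c :: w) ((k + δ i j) :: 0 :: 0 :: (c - δ i j) :: w) := by
  have h1 := Eqv.tri (δ := δ) i k 0 o j (c :: w)
  have h2 := (Eqv.tri (δ := δ) (i + 1) 0 (c - δ i j) j o w).cons (i := i) (k + δ i j)
  simp only [ho, add_zero, zero_add, fin3, sub_add_cancel] at h1 h2
  exact h1.trans h2

lemma central (H : DS δ) (o : J) (ho : ∀ i, δ i o = 0) (i : Fin 3) (k l : A) (x : List A) :
    Eqv δ i (k :: 0 :: 0 :: l :: x) ((k + l) :: 0 :: 0 :: 0 :: x) := by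
  by_cases hl : l = 0
  · subst hl; rw [add_zero]; exact Eqv.refl _ _
  · obtain ⟨a0, j, j', h1, h2⟩ := H.ex i l 0 hl
    have e1 := central_aux o ho i k l j x
    have e2 := central_aux o ho i (k + l) 0 j' x
    have : a0 = - δ i j' := by rw [eq_neg_iff_add_eq_zero, ← h2]
    rw [this] at h1
    rw [show k + δ i j = k + l + δ i j' by rw [h1]; abel,
      show l - δ i j = 0 - δ i j' by rw [h1]; abel] at e1
    exact e1.trans e2.symm

/-- multiplication by the Garside element -/
def Dl (w : List A) : List A := 0 :: 0 :: 0 :: w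

lemma Dl_cons (H : DS δ) (o : J) (ho : ∀ i, δ i o = 0) (i : Fin 3) (a : A) (x : List A) :
    Eqv δ i (Dl (a :: x)) (a :: Dl x) := by
  have := central H o ho i 0 a x
  rwa [zero_add] at this

lemma Eqv.dl {i : Fin 3} {x y : List A} (h : Eqv δ i x y) : Eqv δ i (Dl x) (Dl y) := by
  apply Eqv.cons; apply Eqv.cons; apply Eqv.cons; rwa [fin3]

lemma Eqv.dl_iter {i : Fin 3} {x y : List A} (h : Eqv δ i x y) (n : ℕ) :
    Eqv δ i (Dl^[n] x) (Dl^[n] y) := by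
  induction n with
  | zero => exact h
  | succ n ih => simp only [Function.iterate_succ_apply']; exact ih.dl

lemma Dl_iter_cons (H : DS δ) (o : J) (ho : ∀ i, δ i o = 0) (i : Fin 3) (a : A) (x : List A)
    (n : ℕ) : Eqv δ i (Dl^[n] (a :: x)) (a :: Dl^[n] x) := by
  induction n with
  | zero => exact Eqv.refl _ _
  | succ n ih =>
    simp only [Function.iterate_succ_apply']
    exact ih.dl.trans (Dl_cons H o ho i _ _)

lemma Eqv.dl_cancel (H : DS δ) {i : Fin 3} {x y : List A} (h : Eqv δ i (Dl x) (Dl y)) :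
    Eqv δ i x y := by
  have := ((h.cancel H).cancel H).cancel H
  rwa [fin3] at this

lemma Eqv.dl_iter_cancel (H : DS δ) {i : Fin 3} {x y : List A} (n : ℕ)
    (h : Eqv δ i (Dl^[n] x) (Dl^[n] y)) : Eqv δ i x y := by
  induction n with
  | zero => exact h
  | succ n ih =>
    simp only [Function.iterate_succ_apply'] at h
    exact ih (h.dl_cancel H)

lemma length_dl_iter (n : ℕ) (x : List A) : (Dl^[n] x).length = 3 * n + x.length := by
  induction n with
  | zero => simp
  | succ n ih => simp only [Function.iterate_succ_apply']; simp [Dl, ih]; ring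

/-- divisibility by the Garside element -/
def Dvd (δ : Fin 3 → J → A) (i : Fin 3) (w : List A) : Prop :=
  ∃ c x, Eqv δ i w (Dl (c :: x))

lemma join (H : DS δ) (o : J) (ho : ∀ i, δ i o = 0) (m : Fin 3) (c : A) (x : List A) (j j' : J)
    (hj : j ≠ j') (h1 : Dvd δ (m + 1) (0 :: (δ (m + 1 + 1) j + c) :: x))
    (h2 : Dvd δ (m + 1) (0 :: (δ (m + 1 + 1) j' + c) :: x)) : Dvd δ (m + 1 + 1) (c :: x) := by
  have aux : ∀ j, Dvd δ (m + 1) (0 :: (δ (m + 1 + 1) j + c) :: x) →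
      ∃ U, Eqv δ (m + 1) (δ (m + 1) j :: (c + δ (m + 1 + 1) j) :: x) (Dl U) := by
    rintro j ⟨d, u, h⟩
    have := h.add (δ (m + 1) j)
    rw [add_zero] at this
    refine ⟨(δ (m + 1) j + d) :: u, ?_⟩
    rw [add_comm c]
    have e1 := central H o ho (m + 1) (δ (m + 1) j) d u
    have e2 := central H o ho (m + 1) 0 (δ (m + 1) j + d) u
    rw [zero_add] at e2
    exact (this.trans e1).trans e2.symm
  obtain ⟨U, hU⟩ := aux j h1
  obtain ⟨U', hU'⟩ := aux j' h2
  have e1 := (hU.cons (δ m j)).trans (Dl_cons H o ho m (δ m j) U).symm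
  have e2 := (hU'.cons (δ m j')).trans (Dl_cons H o ho m (δ m j') U').symm
  have e3 := Eqv.tri (δ := δ) m 0 c j j' x
  rw [zero_add, zero_add] at e3
  have e4 := ((e1.symm.trans e3).trans e2).dl_cancel H
  rcases reduction H e4 with ⟨h, -⟩ | ⟨b0, j5, j6, g, w', k1, k2, k3, k4⟩
  · exact absurd (H.inj _ h) hj
  · obtain ⟨rfl, rfl⟩ := H.uniq m j j' j5 j6 hj (by rw [k1, k2]; abel)
    have e5 := ((hU.trans k3.dl).trans (Dl_cons H o ho _ _ _)).cancel H
    have e6 := e5.add (- δ (m + 1 + 1) j)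
    rw [show - δ (m + 1 + 1) j + (c + δ (m + 1 + 1) j) = c by abel] at e6
    have e7 := central H o ho (m + 1 + 1) (- δ (m + 1 + 1) j + 0) (g + δ (m + 1 + 1) j) w'
    have e8 := central H o ho (m + 1 + 1) 0 (- δ (m + 1 + 1) j + 0 + (g + δ (m + 1 + 1) j)) w'
    rw [zero_add] at e8
    exact ⟨_, _, (e6.trans e7).trans e8.symm⟩

/-- The setoid on words. -/
def ySetoid (δ : Fin 3 → J → A) : Setoid (List A) where
  r w w' := ∃ a b, Eqv δ 0 (Dl^[a] w) (Dl^[b] w')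
  iseqv := {
    refl := fun w => ⟨0, 0, Eqv.refl _ _⟩
    symm := fun ⟨a, b, h⟩ => ⟨b, a, h.symm⟩
    trans := by
      rintro x y z ⟨a, b, h⟩ ⟨c, d, h'⟩
      refine ⟨c + a, b + d, ?_⟩
      rw [Function.iterate_add_apply, Function.iterate_add_apply]
      refine (h.dl_iter c).trans ?_
      rw [← Function.iterate_add_apply, add_comm c b, Function.iterate_add_apply]
      exact h'.dl_iter b }

/-- The set the group acts on. -/
def Y (δ : Fin 3 → J → A) : Type := Quotient (ySetoid δ)

/-- class of a word -/
def mk (δ : Fin 3 → J → A) (w : List A) : Y δ := Quotient.mk (ySetoid δ) w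

lemma mk_eq {w w' : List A} (h : Eqv δ 0 w w') : mk δ w = mk δ w' :=
  Quotient.sound (s := ySetoid δ) ⟨0, 0, h⟩

lemma mk_dl (w : List A) : mk δ (Dl w) = mk δ w :=
  Quotient.sound (s := ySetoid δ) ⟨0, 1, Eqv.refl _ _⟩

/-- prepend to type `i` -/
def pre : Fin 3 → List A → List A
  | 0, w => w
  | 1, w => 0 :: w
  | 2, w => 0 :: 0 :: w

lemma pre_succ (i : Fin 3) (w : List A) : mk δ (pre (i + 1) w) = mk δ (pre i (0 :: w)) := by
  fin_cases i
  · rfl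
  · rfl
  · exact (mk_dl w).symm

lemma Eqv.pre {i : Fin 3} {x y : List A} (h : Eqv δ i x y) : Eqv δ 0 (pre i x) (pre i y) := by
  fin_cases i
  · exact h
  · exact h.cons 0
  · exact Eqv.cons (i := 0) 0 (Eqv.cons (i := 1) 0 h)

lemma Eqv.pre_cancel (H : DS δ) {i : Fin 3} {x y : List A} (h : Eqv δ 0 (Stmt7.pre i x)
    (Stmt7.pre i y)) : Eqv δ i x y := by
  fin_cases i
  · exact h
  · exact h.cancel H
  · exact (h.cancel H).cancel H

lemma dl_pre (H : DS δ) (o : J) (ho : ∀ i, δ i o = 0) (i : Fin 3) (x : List A) (n : ℕ) :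
    Eqv δ 0 (Dl^[n] (pre i x)) (pre i (Dl^[n] x)) := by
  fin_cases i
  · exact Eqv.refl _ _
  · exact Dl_iter_cons H o ho 0 0 x n
  · exact (Dl_iter_cons H o ho 0 0 (0 :: x) n).trans ((Dl_iter_cons H o ho 1 0 x n).cons 0)

lemma mk_pre_dl (H : DS δ) (o : J) (ho : ∀ i, δ i o = 0) (i : Fin 3) (x : List A) :
    mk δ (pre i (Dl x)) = mk δ (pre i x) := by
  rw [← mk_dl (pre i x)]
  exact mk_eq (dl_pre H o ho i x 1).symm

/-- the action of `σ_i^k` on words -/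
def fw (i : Fin 3) (k : A) (w : List A) : List A :=
  match i with
  | 0 => k :: 0 :: 0 :: w
  | 1 => 0 :: k :: 0 :: w
  | 2 => 0 :: 0 :: k :: w

lemma triple_dl (H : DS δ) (o : J) (ho : ∀ i, δ i o = 0) (a b c : A) (n : ℕ) (w : List A) :
    Eqv δ 0 (Dl^[n] (a :: b :: c :: w)) (a :: b :: c :: Dl^[n] w) :=
  (Dl_iter_cons H o ho 0 a _ n).trans (Eqv.cons a ((Dl_iter_cons H o ho _ b _ n).trans
    (Eqv.cons b (Dl_iter_cons H o ho _ c _ n))))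

/-- the action of `σ_i^k` -/
def f (H : DS δ) (o : J) (ho : ∀ i, δ i o = 0) (i : Fin 3) (k : A) : Y δ → Y δ :=
  Quotient.map (sa := ySetoid δ) (sb := ySetoid δ) (fw i k) (by
    rintro w w' ⟨a, b, h⟩
    have key : ∀ x y z : A, Eqv δ 0 (Dl^[a] (x :: y :: z :: w)) (Dl^[b] (x :: y :: z :: w')) := by
      intro x y z
      refine (triple_dl H o ho x y z a w).trans (Eqv.trans ?_ (triple_dl H o ho x y z b w').symm)
      apply Eqv.cons; apply Eqv.cons; apply Eqv.cons
      exact h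
    refine ⟨a, b, ?_⟩
    fin_cases i <;> exact key _ _ _)

variable (H : DS δ) (o : J) (ho : ∀ i, δ i o = 0)

lemma f_mk (i : Fin 3) (k : A) (w : List A) : f H o ho i k (mk δ w) = mk δ (fw i k w) := rfl

lemma f_pre (i : Fin 3) (k c : A) (x : List A) :
    f H o ho i k (mk δ (pre i (c :: x))) = mk δ (pre i ((k + c) :: x)) := by
  rw [f_mk, ← mk_pre_dl H o ho]
  have key : Eqv δ i (k :: 0 :: 0 :: c :: x) (Dl ((k + c) :: x)) :=
    (central H o ho i k c x).trans (Dl_cons H o ho i (k + c) x).symm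
  have := mk_eq key.pre
  rw [← this]
  fin_cases i <;> rfl

lemma exists_rep (i : Fin 3) (y : Y δ) : ∃ c x, y = mk δ (pre i (c :: x)) := by
  induction y using Quotient.inductionOn with
  | h w =>
  fin_cases i
  · exact ⟨0, 0 :: 0 :: w, (mk_dl w).symm⟩
  · exact ⟨0, 0 :: w, (mk_dl w).symm⟩
  · exact ⟨0, w, (mk_dl w).symm⟩

lemma f_add (i : Fin 3) (k l : A) (y : Y δ) :
    f H o ho i (k + l) y = f H o ho i k (f H o ho i l y) := by
  obtain ⟨c, x, rfl⟩ := exists_rep i y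
  rw [f_pre, f_pre, f_pre, add_assoc]

lemma f_zero (i : Fin 3) (y : Y δ) : f H o ho i 0 y = y := by
  obtain ⟨c, x, rfl⟩ := exists_rep i y
  rw [f_pre, zero_add]

lemma f_rel (j : J) (y : Y δ) :
    f H o ho 0 (δ 0 j) (f H o ho 1 (δ 1 j) (f H o ho 2 (δ 2 j) y)) = y := by
  induction y using Quotient.inductionOn with
  | h w =>
  change f H o ho 0 (δ 0 j) (f H o ho 1 (δ 1 j) (f H o ho 2 (δ 2 j) (mk δ w))) = mk δ w
  rw [f_mk, f_mk, f_mk]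
  change mk δ (δ 0 j :: Dl (δ 1 j :: Dl (δ 2 j :: w))) = mk δ w
  have e1 : Eqv δ 0 (Dl (Dl (δ 0 j :: δ 1 j :: δ 2 j :: w)))
      (δ 0 j :: Dl (δ 1 j :: Dl (δ 2 j :: w))) := by
    refine (Dl_cons H o ho 0 _ _).dl.trans ((Dl_cons H o ho 0 _ _).trans (Eqv.cons _ ?_))
    exact ((Dl_cons H o ho _ _ _).dl)
  rw [← mk_eq e1, mk_dl, mk_dl, ← mk_dl w]
  apply mk_eq
  have := Eqv.tri (δ := δ) 0 0 0 j o w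
  simp only [ho, zero_add] at this
  exact this

/-- norm of the type `i` vertex -/
noncomputable def nrm (i : Fin 3) (y : Y δ) : ℕ :=
  sInf {l | ∃ c x, y = mk δ (pre i (c :: x)) ∧ l = x.length}

lemma nrm_spec (i : Fin 3) (y : Y δ) : ∃ c x, y = mk δ (pre i (c :: x)) ∧ nrm i y = x.length := by
  have : nrm i y ∈ {l | ∃ c x, y = mk δ (pre i (c :: x)) ∧ l = x.length} := by
    apply Nat.sInf_mem
    obtain ⟨c, x, h⟩ := exists_rep i y
    exact ⟨_, c, x, h, rfl⟩
  exact this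

lemma nrm_le {i : Fin 3} {y : Y δ} {c : A} {x : List A} (h : y = mk δ (pre i (c :: x))) :
    nrm i y ≤ x.length := Nat.sInf_le ⟨c, x, h, rfl⟩

lemma nrm_lt (H : DS δ) (o : J) (ho : ∀ i, δ i o = 0) {i : Fin 3} {y : Y δ} {c : A} {x : List A} (h : y = mk δ (pre i (c :: x)))
    (hd : Dvd δ i (c :: x)) : nrm i y < x.length := by
  obtain ⟨d, u, hu⟩ := hd
  have := hu.length
  simp [Dl] at this
  have h2 : y = mk δ (pre i (d :: u)) := by
    rw [h, mk_eq hu.pre, mk_pre_dl H o ho]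
  have := nrm_le h2
  omega

lemma dvd_of_nrm_lt (H : DS δ) (o : J) (ho : ∀ i, δ i o = 0) {i : Fin 3} {y : Y δ} {c : A} {x : List A} (h : y = mk δ (pre i (c :: x)))
    (hn : nrm i y < x.length) : Dvd δ i (c :: x) := by
  obtain ⟨d, u, h1, h2⟩ := nrm_spec i y
  rw [h2] at hn
  rw [h1] at h
  obtain ⟨a, b, hE⟩ := Quotient.exact (s := ySetoid δ) h
  have hE' := ((dl_pre H o ho i _ a).symm.trans (hE.trans (dl_pre H o ho i _ b))).pre_cancel H
  have hl := hE'.length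
  rw [length_dl_iter, length_dl_iter] at hl
  simp only [List.length_cons] at hl
  obtain ⟨e, rfl⟩ : ∃ e, a = b + (1 + e) := ⟨a - b - 1, by omega⟩
  rw [Function.iterate_add_apply] at hE'
  have hE2 := (hE'.dl_iter_cancel H).symm
  rw [Function.iterate_add_apply] at hE2
  cases hw : (Dl^[e] (d :: u)) with
  | nil =>
    have := congrArg List.length hw
    rw [length_dl_iter] at this
    simp at this
  | cons d' u' => rw [hw] at hE2; exact ⟨d', u', hE2⟩

lemma nrm_f (i : Fin 3) (k : A) (y : Y δ) : nrm i (f H o ho i k y) = nrm i y := by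
  have key : ∀ k y, nrm i (f H o ho i k y) ≤ nrm i y := by
    intro k y
    obtain ⟨c, x, h1, h2⟩ := nrm_spec i y
    rw [h2]
    apply nrm_le (c := k + c)
    rw [h1, f_pre]
  apply le_antisymm (key k y)
  have := key (-k) (f H o ho i k y)
  rwa [← f_add, neg_add_cancel, f_zero] at this

theorem gate (y : Fin 3 → Y δ) (j : J)
    (hy : ∀ i, y i = f H o ho (i + 1) (δ (i + 1) j) (y (i + 1))) :
    ∃ i, ∀ j', j' ≠ j → nrm i (y i) < nrm i (f H o ho (i + 1) (δ (i + 1) j') (y (i + 1))) := by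
  obtain ⟨M, hM⟩ := Finite.exists_max (fun i => nrm i (y i))
  obtain ⟨m, rfl⟩ : ∃ m, M = m + 1 + 1 := ⟨M + 1, (fin3 M).symm⟩
  refine ⟨m + 1, fun j' hj' => ?_⟩
  obtain ⟨c, x, h1, h2⟩ := nrm_spec (m + 1 + 1) (y (m + 1 + 1))
  have hle : nrm (m + 1) (y (m + 1)) ≤ x.length := by rw [← h2]; exact hM _
  have rep : ∀ j, f H o ho (m + 1 + 1) (δ (m + 1 + 1) j) (y (m + 1 + 1)) =
      mk δ (pre (m + 1) (0 :: (δ (m + 1 + 1) j + c) :: x)) := by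
    intro j
    rw [h1, f_pre, pre_succ]
  by_contra hcon
  push Not at hcon
  have d1 := dvd_of_nrm_lt H o ho (rep j) (by rw [← hy]; simp; omega)
  have d2 := dvd_of_nrm_lt H o ho (rep j') (by simp; omega)
  have d3 := join H o ho m c x j j' (Ne.symm hj') d1 d2
  have := nrm_lt H o ho h1 d3
  omega

end Comb2
end Stmt7

namespace Stmt7

structure Pres {A J : Type} [AddCommGroup A] (δ : Fin 3 → J → A) {G : Type} [Group G]
    (s : Fin 3 → A → G) : Prop where
  add : ∀ i a b, s i (a + b) = s i a * s i b
  rel : ∀ j, s 0 (δ 0 j) * s 1 (δ 1 j) * s 2 (δ 2 j) = 1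
  gen : ∀ P : Subgroup G, (∀ i a, s i a ∈ P) → P = ⊤
  lift : ∀ (K : Type) [Group K] (f : Fin 3 → A → K), (∀ i a b, f i (a + b) = f i a * f i b) →
    (∀ j, f 0 (δ 0 j) * f 1 (δ 1 j) * f 2 (δ 2 j) = 1) → ∃ φ : G →* K, ∀ i a, φ (s i a) = f i a

theorem inj_of_gate {X Q : Type} (t : Fin 3 → X → Q) (h : X → ℕ)
    (hg : ∀ x, ∃ i, ∀ x', x' ≠ x → t i x' = t i x → h x < h x') (z : X →₀ ℚ)
    (hz : Finsupp.linearCombination ℚ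
      (fun x => ∑ i : Fin 3, Finsupp.single (t i x, i) (1 : ℚ)) z = 0) : z = 0 := by
  classical
  by_contra hne
  obtain ⟨x, hx, hmax⟩ := Finset.exists_max_image z.support h
    (Finsupp.support_nonempty_iff.2 hne)
  obtain ⟨i, hi⟩ := hg x
  have h1 := DFunLike.congr_fun hz (t i x, i)
  rw [Finsupp.linearCombination_apply, Finsupp.sum, Finsupp.finsetSum_apply] at h1
  rw [Finset.sum_eq_single x] at h1
  · simp [Finsupp.finsetSum_apply, Finsupp.single_apply] at h1
    rcases h1 with h1 | h1
    · exact (Finsupp.mem_support_iff.1 hx) h1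
    · exact h1 rfl rfl
  · intro b hb hbx
    have hne : t i b ≠ t i x := fun e => by
      have := hi b hbx e
      have := hmax b hb
      omega
    simp [Finsupp.finsetSum_apply, Finsupp.single_apply]
    right
    rintro k h1 rfl
    exact hne h1
  · intro h; exact absurd hx h

section
variable {A J : Type} [AddCommGroup A] {δ : Fin 3 → J → A} {G : Type} [Group G]
  {s : Fin 3 → A → G}

variable (δ s) in
/-- offsets -/
def uu (i : Fin 3) (j : J) : G := ![1, s 1 (δ 1 j), s 0 (- δ 0 j)] i

variable (δ s) in
/-- panel of type i of a chamber -/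
def pt (i : Fin 3) (x : G × J) : G := x.1 * uu δ s i x.2

theorem Pres.zero (P : Pres δ s) (i) : s i 0 = 1 := by
  have := P.add i 0 0
  simpa using this

theorem Pres.neg (P : Pres δ s) (i a) : s i (-a) = (s i a)⁻¹ := by
  have := P.add i a (-a)
  rw [add_neg_cancel, P.zero] at this
  exact (inv_eq_of_mul_eq_one_right this.symm).symm

theorem pt_succ (P : Pres δ s) (i : Fin 3) (x : G × J) :
    pt δ s (i + 1) x = pt δ s i x * s (i + 1) (δ (i + 1) x.2) := by
  have h := P.rel x.2
  fin_cases i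
  · simp [pt, uu]
  · simp [pt, uu, P.neg, mul_assoc]
    rw [mul_assoc] at h
    exact inv_eq_of_mul_eq_one_right h
  · simp [pt, uu, P.neg]

variable (δ s) in
noncomputable def d2 : (G × J →₀ ℚ) →ₗ[ℚ] (G × Fin 3 →₀ ℚ) :=
  Finsupp.linearCombination ℚ (fun x => ∑ i : Fin 3, Finsupp.single (pt δ s i x, i) (1 : ℚ))

theorem d2_inj (H : DS δ) (o : J) (ho : ∀ i, δ i o = 0) (P : Pres δ s) (y0 : Y δ) (z : G × J →₀ ℚ)
    (hz : d2 δ s z = 0) : z = 0 := by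
  let F : Fin 3 → A → Equiv.Perm (Y δ) := fun i a =>
    { toFun := f H o ho i a
      invFun := f H o ho i (-a)
      left_inv := fun y => by rw [← f_add, neg_add_cancel, f_zero]
      right_inv := fun y => by rw [← f_add, add_neg_cancel, f_zero] }
  obtain ⟨ρ, hρ⟩ := P.lift (Equiv.Perm (Y δ)) F
    (fun i a b => by ext y; exact f_add H o ho ..) (fun j => by ext y; exact f_rel H o ho j y)
  let yy : Fin 3 → G × J → Y δ := fun i x => ρ (pt δ s i x)⁻¹ y0
  have hyy : ∀ x i, yy i x = f H o ho (i+1) (δ (i+1) x.2) (yy (i+1) x) := by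
    intro x i
    have : f H o ho (i+1) (δ (i+1) x.2) (yy (i+1) x) = ρ (s (i+1) (δ (i+1) x.2)) (yy (i+1) x) := by
      rw [hρ]; rfl
    rw [this]
    simp only [yy]
    rw [← Equiv.Perm.mul_apply, ← map_mul, pt_succ P]
    congr 2
    group
  have h2 : ∀ x i, nrm (i+1) (yy (i+1) x) = nrm (i+1) (yy i x) := by
    intro x i
    rw [hyy x i, nrm_f]
  refine inj_of_gate (pt δ s) (fun x => nrm 0 (yy 0 x) + nrm 1 (yy 1 x) + nrm 2 (yy 2 x)) ?_ z hz
  intro x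
  obtain ⟨i, hi⟩ := gate H o ho (fun i => yy i x) x.2 (hyy x)
  refine ⟨i + 1, fun x' hx' ht => ?_⟩
  have hj : x'.2 ≠ x.2 := by
    intro e
    apply hx'
    simp only [pt, e, mul_left_inj] at ht
    exact Prod.ext ht e
  have e1 : yy (i+1) x' = yy (i+1) x := by simp only [yy, ht]
  have l1 := hi _ hj
  rw [← e1, ← hyy] at l1
  have l2 := h2 x (i+1)
  have l2' := h2 x' (i+1)
  rw [e1, ← l2] at l2'
  have key : ∀ x : G × J, nrm 0 (yy 0 x) + nrm 1 (yy 1 x) + nrm 2 (yy 2 x)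
     = nrm i (yy i x) + nrm (i+1) (yy (i+1) x) + nrm (i+1+1) (yy (i+1+1) x) := by
    intro x
    fin_cases i <;> simp <;> ring
  simp only [key, e1]
  omega
end
end Stmt7

namespace Stmt7

section
open Finsupp
section
variable {A J : Type} [AddCommGroup A] [Fintype A] {δ : Fin 3 → J → A} {G : Type} [Group G]
  {s : Fin 3 → A → G}

variable (G) in
/-- translation representation -/
noncomputable def rr (X : Type) : Representation ℚ G (G × X →₀ ℚ) where
  toFun g := Finsupp.lmapDomain ℚ ℚ (fun p => (g * p.1, p.2))
  map_one' := by ext; simp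
  map_mul' g h := by
    refine Finsupp.lhom_ext fun a b => ?_
    simp [Finsupp.mapDomain_single, mul_assoc]

@[simp] theorem rr_single {X : Type} (g h : G) (x : X) (r : ℚ) :
    rr G X g (single (h, x) r) = single (g * h, x) r := by
  simp [rr, Finsupp.mapDomain_single]

/-- Averaged vertex. -/
noncomputable def EE (s : Fin 3 → A → G) (p : G × Fin 3) : G × Fin 3 →₀ ℚ :=
  ∑ a : A, single (p.1 * s p.2 a, p.2) ((Fintype.card A : ℚ)⁻¹)

noncomputable def Ev (s : Fin 3 → A → G) : (G × Fin 3 →₀ ℚ) →ₗ[ℚ] (G × Fin 3 →₀ ℚ) :=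
  linearCombination ℚ (EE s)

noncomputable def d1 (s : Fin 3 → A → G) : (G × Fin 3 →₀ ℚ) →ₗ[ℚ] (G × Fin 3 →₀ ℚ) :=
  linearCombination ℚ (fun p => EE s (p.1, p.2 + 1) - EE s p)

variable (G) in
noncomputable def ep : (G × Fin 3 →₀ ℚ) →ₗ[ℚ] ℚ := linearCombination ℚ (fun _ => (1 : ℚ))

theorem card_ne : (Fintype.card A : ℚ) ≠ 0 := by
  exact_mod_cast Fintype.card_ne_zero

theorem EE_mul (P : Pres δ s) (g : G) (i : Fin 3) (a : A) : EE s (g * s i a, i) = EE s (g, i) := by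
  simp only [EE]
  refine Fintype.sum_equiv (Equiv.addLeft a) _ _ fun b => ?_
  simp [P.add, mul_assoc]

theorem Ev_EE (P : Pres δ s) (p) : Ev s (EE s p) = EE s p := by
  obtain ⟨g, i⟩ := p
  conv_lhs => rw [EE]
  simp only [map_sum, Ev, linearCombination_single, EE_mul P]
  simp [← Nat.cast_smul_eq_nsmul ℚ, smul_smul]

theorem ep_EE (p) : ep G (EE s p) = 1 := by
  simp [EE, ep, linearCombination_single]

theorem ep_Ev (x) : ep G (Ev s x) = ep G x := by
  have : ep G ∘ₗ Ev s = ep G := by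
    refine Finsupp.lhom_ext fun a b => ?_
    simp [Ev, ep_EE]
    simp [ep]
  exact DFunLike.congr_fun this x

theorem Ev_Ev (P : Pres δ s) (x) : Ev s (Ev s x) = Ev s x := by
  have : Ev s ∘ₗ Ev s = Ev s := by
    refine Finsupp.lhom_ext fun a b => ?_
    have h : Ev s (single a b) = b • EE s a := by simp [Ev]
    rw [LinearMap.comp_apply, h, map_smul, Ev_EE P]
  exact DFunLike.congr_fun this x

theorem Ev_d1 (P : Pres δ s) (x) : Ev s (d1 s x) = d1 s x := by
  have : Ev s ∘ₗ d1 s = d1 s := by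
    refine Finsupp.lhom_ext fun a b => ?_
    simp [d1, Ev_EE P]
  exact DFunLike.congr_fun this x

theorem ep_d1 (x) : ep G (d1 s x) = 0 := by
  have : ep G ∘ₗ d1 s = 0 := by
    refine Finsupp.lhom_ext fun a b => ?_
    simp [d1, ep_EE]
  exact DFunLike.congr_fun this x

theorem d1_d2 (P : Pres δ s) (x) : d1 s (d2 δ s x) = 0 := by
  have : d1 s ∘ₗ d2 δ s = 0 := by
    refine Finsupp.lhom_ext fun a b => ?_
    simp only [LinearMap.comp_apply, d2, linearCombination_single, map_smul, map_sum]
    simp only [d1, linearCombination_single, one_smul]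
    have : ∀ i, EE s (pt δ s i a, i + 1) = EE s (pt δ s (i+1) a, i + 1) := fun i => by
      rw [pt_succ P, EE_mul P]
    simp only [this]
    simp [Fin.sum_univ_three]
    right
    abel
  exact DFunLike.congr_fun this x

theorem EE_rr (g : G) (p) : rr G _ g (EE s p) = EE s (g * p.1, p.2) := by
  simp [EE, mul_assoc]

theorem Ev_rr (g : G) (x) : Ev s (rr G _ g x) = rr G _ g (Ev s x) := by
  have : Ev s ∘ₗ rr G _ g = rr G _ g ∘ₗ Ev s := by
    refine Finsupp.lhom_ext fun a b => ?_
    obtain ⟨h, i⟩ := a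
    simp [Ev, EE_rr]
  exact DFunLike.congr_fun this x

theorem d1_rr (g : G) (x) : d1 s (rr G _ g x) = rr G _ g (d1 s x) := by
  have : d1 s ∘ₗ rr G _ g = rr G _ g ∘ₗ d1 s := by
    refine Finsupp.lhom_ext fun a b => ?_
    obtain ⟨h, i⟩ := a
    simp [d1, EE_rr]
  exact DFunLike.congr_fun this x

theorem d2_rr (g : G) (x) : d2 δ s (rr G _ g x) = rr G _ g (d2 δ s x) := by
  have : d2 δ s ∘ₗ rr G _ g = rr G _ g ∘ₗ d2 δ s := by
    refine Finsupp.lhom_ext fun a b => ?_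
    obtain ⟨h, i⟩ := a
    simp [d2, pt, mul_assoc]
  exact DFunLike.congr_fun this x

theorem ep_rr (g : G) (x) : ep G (rr G _ g x) = ep G x := by
  have : ep G ∘ₗ rr G _ g = ep G := by
    refine Finsupp.lhom_ext fun a b => ?_
    obtain ⟨h, i⟩ := a
    simp [ep]
  exact DFunLike.congr_fun this x

theorem exact0 (P : Pres δ s) (y) (h1 : Ev s y = y) (h2 : ep G y = 0) : ∃ u, d1 s u = y := by
  let R := LinearMap.range (d1 s)
  have key1 : ∀ g i, R.mkQ (EE s (g, i + 1)) = R.mkQ (EE s (g, i)) := by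
    intro g i
    rw [← sub_eq_zero, ← map_sub]
    simp only [Submodule.mkQ_apply, Submodule.Quotient.mk_eq_zero]
    exact ⟨single (g, i) 1, by simp [d1]⟩
  have key2 : ∀ g i, R.mkQ (EE s (g, i)) = R.mkQ (EE s (g, 0)) := by
    intro g i
    have k0 := key1 g 0
    have k1 := key1 g 1
    fin_cases i
    · rfl
    · exact k0
    · exact k1.trans k0
  let S : Subgroup G :=
    { carrier := {h | ∀ g, R.mkQ (EE s (g * h, 0)) = R.mkQ (EE s (g, 0))}
      one_mem' := by intro g; rw [mul_one]
      mul_mem' := by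
        intro a b ha hb g
        rw [← mul_assoc, hb, ha]
      inv_mem' := by
        intro a ha g
        have := ha (g * a⁻¹)
        rw [inv_mul_cancel_right] at this
        exact this.symm }
  have hS : S = ⊤ := P.gen S fun i a g => by
    rw [← key2 _ i, EE_mul P, key2]
  have key3 : ∀ g, R.mkQ (EE s (g, 0)) = R.mkQ (EE s (1, 0)) := by
    intro g
    have : g ∈ S := by rw [hS]; trivial
    have := this 1
    rwa [one_mul] at this
  have key4 : R.mkQ ∘ₗ Ev s = (ep G).smulRight (R.mkQ (EE s (1, 0))) := by
    refine Finsupp.lhom_ext fun a b => ?_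
    obtain ⟨g, i⟩ := a
    have : (Ev s) (single (g, i) b) = b • EE s (g, i) := by simp [Ev]
    rw [LinearMap.comp_apply, this, map_smul, key2, key3]
    simp [ep]
  have := DFunLike.congr_fun key4 y
  rw [LinearMap.comp_apply, h1, LinearMap.smulRight_apply, h2, zero_smul] at this
  exact (Submodule.Quotient.mk_eq_zero R).1 this

theorem exact1 (o : J) (ho : ∀ i, δ i o = 0) (P : Pres δ s) (u) (h1 : d1 s u = 0) :
    ∃ v, d2 δ s v = u := by
  let R := LinearMap.range (d2 δ s)
  let W := (G × Fin 3 →₀ ℚ) ⧸ R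
  have hR : ∀ g, R ≤ R.comap (rr G _ g) := by
    rintro g _ ⟨v, rfl⟩
    exact ⟨rr G _ g v, d2_rr g v⟩
  let act : G → W →ₗ[ℚ] W := fun g => R.mapQ R (rr G _ g) (hR g)
  have act_mk : ∀ g x, act g (R.mkQ x) = R.mkQ (rr G _ g x) := fun g x => rfl
  have act_mul : ∀ g h w, act (g * h) w = act g (act h w) := by
    intro g h w
    obtain ⟨x, rfl⟩ := R.mkQ_surjective w
    rw [act_mk, act_mk, act_mk, map_mul]
    rfl
  have act_one : ∀ w, act 1 w = w := by
    intro w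
    obtain ⟨x, rfl⟩ := R.mkQ_surjective w
    rw [act_mk, map_one]
    rfl
  let e : Fin 3 → W := fun i => R.mkQ (single (1, i) 1)
  have act_e : ∀ g i, act g (e i) = R.mkQ (single (g, i) 1) := by
    intro g i
    simp only [e]
    rw [act_mk, rr_single, mul_one]
  have rel : ∀ x : G × J, ∑ i, act (pt δ s i x) (e i) = 0 := by
    intro x
    simp only [act_e]
    rw [← map_sum]
    refine (Submodule.Quotient.mk_eq_zero R).2 ?_
    exact ⟨single x 1, by simp [d2]⟩
  have rel0 : e 0 + e 1 + e 2 = 0 := by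
    have := rel (1, o)
    simpa [Fin.sum_univ_three, pt, uu, ho, P.zero, act_one] using this
  have rel1 : ∀ j, act (s 0 (δ 0 j)) (e 0) + act (s 0 (δ 0 j) * s 1 (δ 1 j)) (e 1) + e 2 = 0 := by
    intro j
    have := rel (s 0 (δ 0 j), j)
    simpa [Fin.sum_univ_three, pt, uu, P.neg, act_one] using this
  let v : Fin 3 → W := ![0, e 0, - e 2]
  have hv : ∀ i, v (i + 1) - v i = e i := by
    intro i
    fin_cases i
    · simp [v]
    · simp [v]
      rw [← sub_eq_zero, ← neg_eq_zero, ← rel0]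
      abel
    · simp [v]
  let F : Fin 3 → A → Equiv.Perm W := fun i a =>
    { toFun := fun w => v i + act (s i a) (w - v i)
      invFun := fun w => v i + act (s i (-a)) (w - v i)
      left_inv := fun w => by
        simp only [add_sub_cancel_left, ← act_mul, ← P.add, neg_add_cancel, P.zero, act_one]
        abel
      right_inv := fun w => by
        simp only [add_sub_cancel_left, ← act_mul, ← P.add, add_neg_cancel, P.zero, act_one]
        abel }
  have hF : ∀ i a w, F i a w = v i + act (s i a) (w - v i) := fun _ _ _ => rfl
  obtain ⟨φ, hφ⟩ := P.lift (Equiv.Perm W) F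
    (fun i a b => by
      ext w
      rw [Equiv.Perm.mul_apply, hF, hF, hF, add_sub_cancel_left, P.add, act_mul])
    (fun j => by
      ext w
      rw [Equiv.Perm.mul_apply, Equiv.Perm.mul_apply, hF, hF, hF, Equiv.Perm.one_apply]
      have e0 := hv 0
      have e1 := hv 1
      have e2 := hv 2
      have r := rel1 j
      have hr : act (s 0 (δ 0 j)) (act (s 1 (δ 1 j)) (act (s 2 (δ 2 j)) (w - v 2))) = w - v 2 := by
        rw [← act_mul, ← act_mul, P.rel, act_one]
      have x1 : v 1 + act (s 1 (δ 1 j)) (v 2 + act (s 2 (δ 2 j)) (w - v 2) - v 1) - v 0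
        = e 0 + act (s 1 (δ 1 j)) (e 1) + act (s 1 (δ 1 j)) (act (s 2 (δ 2 j)) (w - v 2)) := by
        have x2 : v 2 + act (s 2 (δ 2 j)) (w - v 2) - v 1 = e 1 + act (s 2 (δ 2 j)) (w - v 2) := by
          rw [← e1]
          change _ = v 2 - v 1 + _
          abel
        rw [x2, map_add, ← e0]
        change _ = v 1 - v 0 + _ + _
        abel
      rw [x1, map_add, map_add, hr, ← act_mul]
      have : v 0 - v 2 = e 2 := e2
      rw [eq_neg_of_add_eq_zero_left r, ← this]
      abel)
  have hφs : ∀ g x y, φ g x - φ g y = act g (x - y) := by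
    let S : Subgroup G :=
      { carrier := {g | ∀ x y, φ g x - φ g y = act g (x - y)}
        one_mem' := by intro x y; simp [act_one]
        mul_mem' := by
          intro a b ha hb x y
          rw [map_mul, Equiv.Perm.mul_apply, Equiv.Perm.mul_apply, ha, hb, act_mul]
        inv_mem' := by
          intro a ha x y
          have h1 := ha (φ a⁻¹ x) (φ a⁻¹ y)
          rw [← Equiv.Perm.mul_apply, ← Equiv.Perm.mul_apply, ← map_mul, mul_inv_cancel, map_one,
            Equiv.Perm.one_apply, Equiv.Perm.one_apply] at h1
          rw [h1, ← act_mul, inv_mul_cancel, act_one] }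
    have hS : S = ⊤ := P.gen S fun i a x y => by
      rw [hφ, hF, hF, add_sub_add_left_eq_sub, ← map_sub]
      congr 1
      abel
    intro g
    have : g ∈ S := by rw [hS]; trivial
    exact this
  let Φ : (G × Fin 3 →₀ ℚ) →ₗ[ℚ] W := linearCombination ℚ (fun p => φ p.1 (v p.2))
  have hΦE : ∀ g i, Φ (EE s (g, i)) = φ g (v i) := by
    intro g i
    simp only [Φ, EE, map_sum, linearCombination_single, map_mul, Equiv.Perm.mul_apply, hφ, hF,
      sub_self, map_zero, add_zero]
    simp [← Nat.cast_smul_eq_nsmul ℚ, smul_smul]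
  have hΦ : Φ ∘ₗ d1 s = R.mkQ := by
    refine Finsupp.lhom_ext fun a b => ?_
    obtain ⟨g, i⟩ := a
    have : d1 s (single (g, i) b) = b • (EE s (g, i + 1) - EE s (g, i)) := by simp [d1]
    rw [LinearMap.comp_apply, this, map_smul, map_sub, hΦE, hΦE, hφs, hv, act_e, ← map_smul, smul_single, smul_eq_mul, mul_one]
  have := DFunLike.congr_fun hΦ u
  rw [LinearMap.comp_apply, h1, map_zero, eq_comm] at this
  exact (Submodule.Quotient.mk_eq_zero R).1 this
end
end

end Stmt7

namespace Stmt7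

section
open Finsupp
section
variable {G : Type} [Group G] {V V' : Type} [AddCommGroup V] [Module ℚ V]
  [AddCommGroup V'] [Module ℚ V']

noncomputable def dd (ρ : Representation ℚ G V) (n : ℕ) :
    ((Fin (n + 1) → G) →₀ V) →ₗ[ℚ] ((Fin n → G) →₀ V) :=
  lsum ℚ fun g => lsingle (fun i => g i.succ) ∘ₗ ρ (g 0)⁻¹ +
    Finset.univ.sum fun j : Fin (n + 1) =>
      (-1 : ℚ) ^ ((j : ℕ) + 1) • lsingle (Fin.contractNth j (· * ·) g)

theorem dd_single (ρ : Representation ℚ G V) (n : ℕ) (g : Fin (n + 1) → G) (a : V) :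
    dd ρ n (single g a) = single (fun i => g i.succ) (ρ (g 0)⁻¹ a) +
      Finset.univ.sum fun j : Fin (n + 1) =>
        (-1 : ℚ) ^ ((j : ℕ) + 1) • single (Fin.contractNth j (· * ·) g) a := by
  simp [dd]

theorem dd_dd (ρ : Representation ℚ G V) (n : ℕ) (x) : dd ρ n (dd ρ (n + 1) x) = 0 := by
  have h := groupHomology.inhomogeneousChains.d_comp_d (Rep.of ρ) n
  have h2 := congrArg (fun f => f.hom x) h
  exact h2

/-- Coefficient change. -/
noncomputable def mr {X : Type} (f : V →ₗ[ℚ] V') : (X →₀ V) →ₗ[ℚ] (X →₀ V') :=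
  Finsupp.mapRange.linearMap f

theorem mr_single {X : Type} (f : V →ₗ[ℚ] V') (x : X) (a : V) :
    mr f (single x a) = single x (f a) := by simp [mr]

theorem mr_apply {X : Type} (f : V →ₗ[ℚ] V') (z : X →₀ V) (x : X) :
    mr f z x = f (z x) := by simp [mr]

theorem dd_mr (ρ : Representation ℚ G V) (ρ' : Representation ℚ G V') (f : V →ₗ[ℚ] V')
    (hf : ∀ g v, f (ρ g v) = ρ' g (f v)) (n : ℕ) (x) :
    dd ρ' n (mr f x) = mr f (dd ρ n x) := by
  have : dd ρ' n ∘ₗ mr f = mr f ∘ₗ dd ρ n := by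
    refine Finsupp.lhom_ext fun g a => ?_
    simp [mr_single, dd_single, hf]
  exact DFunLike.congr_fun this x

/-- pointwise lifting -/
theorem mr_lift {X : Type} (f : V →ₗ[ℚ] V') (z : X →₀ V') (h : ∀ x, ∃ v, f v = z x) :
    ∃ y, mr f y = z := by
  classical
  choose v hv using h
  refine ⟨Finsupp.onFinset z.support (fun x => if z x = 0 then 0 else v x) ?_, ?_⟩
  · intro a ha
    simp at ha
    simpa using ha.1
  · ext x
    rw [mr_apply, Finsupp.onFinset_apply]
    split_ifs with h
    · rw [map_zero, h]
    · exact hv x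

theorem contract_zero {n : ℕ} (a : G) (g : Fin (n + 1) → G) :
    Fin.contractNth 0 (· * ·) (Fin.cons a g : Fin (n + 2) → G) =
      Fin.cons (a * g 0) (fun i => g i.succ) := by
  funext k
  refine Fin.cases ?_ (fun k => ?_) k
  · simp [Fin.contractNth]
  · simp [Fin.contractNth]

theorem contract_succ {n : ℕ} (a : G) (g : Fin (n + 1) → G) (j : Fin (n + 1)) :
    Fin.contractNth j.succ (· * ·) (Fin.cons a g : Fin (n + 2) → G) =
      Fin.cons a (Fin.contractNth j (· * ·) g) := by
  funext k
  refine Fin.cases ?_ (fun k => ?_) k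
  · simp [Fin.contractNth]
  · simp [Fin.contractNth]

variable {X : Type}

noncomputable def hh (n : ℕ) : ((Fin n → G) →₀ (G × X →₀ ℚ)) →ₗ[ℚ]
    ((Fin (n + 1) → G) →₀ (G × X →₀ ℚ)) :=
  lsum ℚ fun g => lsum ℚ fun p => lsingle (Fin.cons p.1⁻¹ g) ∘ₗ lsingle (1, p.2)

theorem hh_single (n : ℕ) (g : Fin n → G) (γ : G) (x : X) (r : ℚ) :
    hh n (single g (single (γ, x) r)) = single (Fin.cons γ⁻¹ g) (single (1, x) r) := by
  rw [hh, lsum_single, lsum_single]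
  rfl

theorem dd_hh (n : ℕ) (z : (Fin (n + 1) → G) →₀ (G × X →₀ ℚ)) :
    dd (rr G X) (n + 1) (hh (n + 1) z) + hh n (dd (rr G X) n z) = z := by
  have : dd (rr G X) (n + 1) ∘ₗ hh (n + 1) + hh n ∘ₗ dd (rr G X) n = LinearMap.id := by
    refine Finsupp.lhom_ext' fun g => Finsupp.lhom_ext fun p r => ?_
    obtain ⟨γ, x⟩ := p
    simp only [LinearMap.comp_apply, LinearMap.add_apply, lsingle_apply, hh_single, dd_single,
      LinearMap.id_apply, map_add, map_sum, map_smul, rr_single]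
    rw [Fin.sum_univ_succ]
    simp only [contract_zero, contract_succ, Fin.cons_succ, Fin.cons_zero, inv_inv, mul_one,
      mul_inv_rev, Fin.val_succ, Fin.val_zero, pow_succ, pow_zero, mul_neg, neg_neg, neg_smul, one_smul,
      Finset.sum_neg_distrib]
    abel
  exact DFunLike.congr_fun this z

theorem vert_exact (n : ℕ) (z : (Fin (n + 1) → G) →₀ (G × X →₀ ℚ))
    (hz : dd (rr G X) n z = 0) : ∃ y, dd (rr G X) (n + 1) y = z := by
  have := dd_hh n z
  rw [hz, map_zero, add_zero] at this
  exact ⟨_, this⟩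

/-- augmentation in degree zero -/
noncomputable def aug : ((Fin 0 → G) →₀ (G × X →₀ ℚ)) →ₗ[ℚ] (X →₀ ℚ) :=
  lsum ℚ fun _ => Finsupp.lmapDomain ℚ ℚ Prod.snd

theorem aug_single (g : Fin 0 → G) (γ : G) (x : X) (r : ℚ) :
    aug (single g (single (γ, x) r)) = single x r := by
  simp [aug, Finsupp.mapDomain_single]

theorem aug_dd (z : (Fin 1 → G) →₀ (G × X →₀ ℚ)) : aug (dd (rr G X) 0 z) = 0 := by
  have : aug ∘ₗ dd (rr G X) 0 = 0 := by
    refine Finsupp.lhom_ext' fun g => Finsupp.lhom_ext fun p r => ?_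
    obtain ⟨γ, x⟩ := p
    simp [dd_single, aug_single]
  exact DFunLike.congr_fun this z

noncomputable def unaug : (X →₀ ℚ) →ₗ[ℚ] ((Fin 0 → G) →₀ (G × X →₀ ℚ)) :=
  lsum ℚ fun x => lsingle default ∘ₗ lsingle (1, x)

theorem aug_unaug (a : X →₀ ℚ) : aug (unaug a : (Fin 0 → G) →₀ (G × X →₀ ℚ)) = a := by
  have : aug ∘ₗ (unaug : _ →ₗ[ℚ] ((Fin 0 → G) →₀ (G × X →₀ ℚ))) = LinearMap.id := by
    refine Finsupp.lhom_ext fun x r => ?_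
    simp [unaug, aug_single]
  exact DFunLike.congr_fun this a

theorem vert_exact0 (z : (Fin 0 → G) →₀ (G × X →₀ ℚ)) (hz : aug z = 0) :
    ∃ y, dd (rr G X) 0 y = z := by
  have : dd (rr G X) 0 ∘ₗ hh 0 = LinearMap.id - unaug ∘ₗ aug := by
    refine Finsupp.lhom_ext' fun g => Finsupp.lhom_ext fun p r => ?_
    obtain ⟨γ, x⟩ := p
    have e : g = default := Subsingleton.elim _ _
    subst e
    simp [dd_single, aug_single, hh_single, unaug, sub_eq_add_neg]
  refine ⟨hh 0 z, ?_⟩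
  have := DFunLike.congr_fun this z
  simpa [hz] using this
end
end

end Stmt7

namespace Stmt7

section
open Finsupp

section
variable {G : Type} [Group G]

variable (G) in
noncomputable abbrev tr : Representation ℚ G ℚ := Representation.trivial ℚ G ℚ

theorem barDiff_single {n : ℕ} (c : Fin (n + 1) → G) (r : ℚ) :
    barDiff ℚ G n (single c r) = r • (Finsupp.single (fun j : Fin n => c j.succ) (1 : ℚ)
      + ∑ i : Fin n, Finsupp.single
          (fun j : Fin n => if (j : ℕ) < (i : ℕ) then c (Fin.castSucc j)
            else if (j : ℕ) = (i : ℕ) then c (Fin.castSucc i) * c i.succ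
            else c j.succ) ((-1 : ℚ) ^ ((i : ℕ) + 1))
      + Finsupp.single (fun j : Fin n => c (Fin.castSucc j)) ((-1 : ℚ) ^ (n + 1))) := by
  rw [barDiff, Finsupp.lift_apply, Finsupp.sum_single_index]
  exact zero_smul _ _

theorem barDiff_eq (n : ℕ) : barDiff ℚ G n = dd (tr G) n := by
  refine Finsupp.lhom_ext fun c r => ?_
  rw [dd_single, Fin.sum_univ_castSucc]
  have e1 : ∀ i : Fin n, (fun j : Fin n => if (j : ℕ) < (i : ℕ) then c (Fin.castSucc j)
            else if (j : ℕ) = (i : ℕ) then c (Fin.castSucc i) * c i.succ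
            else c j.succ) = Fin.contractNth i.castSucc (· * ·) c := by
    intro i
    funext j
    simp only [Fin.contractNth, Fin.val_castSucc]
    split_ifs with h1 h2
    · rfl
    · have : j = i := Fin.ext h2
      rw [this]
    · rfl
  have e2 : (fun j : Fin n => c (Fin.castSucc j)) = Fin.contractNth (Fin.last n) (· * ·) c := by
    funext j
    simp [Fin.contractNth]
  have hb := barDiff_single c r
  simp only [e1, e2] at hb
  rw [hb]
  simp only [smul_add, Finset.smul_sum, smul_single, smul_eq_mul, mul_one, Fin.val_castSucc,
    Fin.val_last, Representation.trivial, mul_comm r]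
  simp [add_assoc]

theorem barHomology_subsingleton (k : ℕ)
    (h : barCycles ℚ G k ≤ barBoundaries ℚ G k) : Subsingleton (barHomology ℚ G k) := by
  have : Submodule.map (barBoundaries ℚ G k).mkQ (barCycles ℚ G k) = ⊥ := by
    rw [eq_bot_iff]
    rintro _ ⟨z, hz, rfl⟩
    exact (Submodule.Quotient.mk_eq_zero _).2 (h hz)
  unfold barHomology
  rw [this]
  infer_instance

theorem H_zero : Nonempty (barHomology ℚ G 0 ≃ₗ[ℚ] ℚ) := by
  have h0 : barDiff ℚ G 0 = 0 := by
    refine Finsupp.lhom_ext fun c r => ?_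
    have : (fun j : Fin 0 => c j.succ) = fun j : Fin 0 => c j.castSucc := Subsingleton.elim _ _
    simp [barDiff, this, ← smul_add, ← single_add]
  have hB : barBoundaries ℚ G 0 = ⊥ := by
    rw [barBoundaries, h0, LinearMap.range_zero]
  have hi : Function.Injective (barBoundaries ℚ G 0).mkQ := by
    rw [← LinearMap.ker_eq_bot, Submodule.ker_mkQ, hB]
  have e : LinearMap.range (barBoundaries ℚ G 0).mkQ =
      Submodule.map (barBoundaries ℚ G 0).mkQ (barCycles ℚ G 0) := by
    rw [barCycles, Submodule.map_top]
  exact ⟨(LinearEquiv.ofEq _ _ e.symm).trans ((LinearEquiv.ofInjective _ hi).symm.trans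
    (Finsupp.uniqueLinearEquiv ℚ ℚ (default : Fin 0 → G)))⟩

end

section
variable {A J : Type} [AddCommGroup A] [Fintype A] {δ : Fin 3 → J → A} {G : Type} [Group G]
  {s : Fin 3 → A → G}

theorem H_one (P : Pres δ s) : Subsingleton (barHomology ℚ G 1) := by
  apply barHomology_subsingleton
  suffices h : barBoundaries ℚ G 1 = ⊤ by rw [h]; exact le_top
  set B := barBoundaries ℚ G 1 with hB
  have hc : ∀ g h : G, B.mkQ (single (fun _ => g * h) 1) =
      B.mkQ (single (fun _ => g) 1) + B.mkQ (single (fun _ => h) 1) := by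
    intro g h
    rw [← map_add, ← sub_eq_zero, ← map_sub]
    refine (Submodule.Quotient.mk_eq_zero B).2 ?_
    refine ⟨single ![g, h] (-1), ?_⟩
    have e0 : ∀ (f : Fin 1 → G), f = fun _ => f 0 := fun f => by
      funext i; rw [Subsingleton.elim i 0]
    rw [barDiff_eq, dd_single, Fin.sum_univ_two]
    rw [e0 (Fin.contractNth 0 _ _), e0 (Fin.contractNth 1 _ _), e0 (fun i : Fin 1 => ![g,h] i.succ)]
    simp [Fin.contractNth]
    abel
  let c : G →* Multiplicative (((Fin 1 → G) →₀ ℚ) ⧸ B) :=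
    MonoidHom.mk' (fun g => Multiplicative.ofAdd (B.mkQ (single (fun _ => g) 1))) (fun g h => by
      rw [hc]; rfl)
  have hk : c.ker = ⊤ := P.gen _ fun i a => by
    rw [MonoidHom.mem_ker]
    have hp : ∀ n : ℕ, s i (n • a) = s i a ^ n := by
      intro n
      induction n with
      | zero => simp [P.zero]
      | succ n ih => rw [succ_nsmul, P.add, ih, pow_succ]
    have h1 := hp (Fintype.card A)
    rw [card_nsmul_eq_zero, P.zero] at h1
    have h2 : (c (s i a)) ^ (Fintype.card A) = 1 := by rw [← map_pow, ← h1, map_one]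
    have h3 : Fintype.card A • (Multiplicative.toAdd (c (s i a))) = 0 := h2
    rw [← Nat.cast_smul_eq_nsmul ℚ, smul_eq_zero] at h3
    rcases h3 with h3 | h3
    · exact absurd h3 card_ne
    · exact h3
  have hz : B.mkQ = 0 := by
    refine Finsupp.lhom_ext fun f r => ?_
    have e0 : f = fun _ => f 0 := by
      funext i; rw [Subsingleton.elim i 0]
    have h1 : f 0 ∈ c.ker := by rw [hk]; trivial
    have h2 : B.mkQ (single (fun _ => f 0) 1) = 0 := h1
    rw [← e0] at h2
    have : single f r = r • single f (1 : ℚ) := by simp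
    rw [this, map_smul, h2, smul_zero, LinearMap.zero_apply]
  rw [← B.ker_mkQ, hz, LinearMap.ker_zero]

variable (δ s) in
/-- Zigzag data -/
structure Zig (n : ℕ) (y0 : (Fin (n + 2) → G) →₀ (G × Fin 3 →₀ ℚ))
    (y1 : (Fin (n + 1) → G) →₀ (G × Fin 3 →₀ ℚ)) (y2 : (Fin n → G) →₀ (G × J →₀ ℚ)) : Prop where
  fix : mr (Ev s) y0 = y0
  e1 : dd (rr G _) (n + 1) y0 = mr (d1 s) y1
  e2 : dd (rr G _) n y1 = mr (d2 δ s) y2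

theorem zig_back (P : Pres δ s) {n : ℕ} {y0 y1 y2} (Z : Zig δ s n y0 y1 y2)
    (x2) (hx : dd (rr G _) n x2 = y2) : ∃ w, dd (tr G) (n + 2) w = mr (ep G) y0 := by
  have c2 : dd (rr G _) n (mr (d2 δ s) x2) = mr (d2 δ s) y2 := by
    rw [dd_mr (rr G _) _ _ d2_rr, hx]
  obtain ⟨x1, h1⟩ := vert_exact n (y1 - mr (d2 δ s) x2) (by rw [map_sub, c2, Z.e2, sub_self])
  have h12 : mr (d1 s) (mr (d2 δ s) x2) = 0 := by
    ext1 x; rw [mr_apply, mr_apply, d1_d2 P]; rfl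
  obtain ⟨x0, h0⟩ := vert_exact (n + 1) (y0 - mr (d1 s) x1) (by
    rw [map_sub, dd_mr (rr G _) _ _ d1_rr, h1, Z.e1, map_sub, h12, sub_zero, sub_self])
  have h01 : mr (ep G) (mr (d1 s) x1) = 0 := by
    ext1 x; rw [mr_apply, mr_apply, ep_d1]; rfl
  refine ⟨mr (ep G) x0, ?_⟩
  rw [dd_mr (rr G _) (tr G) (ep G) ep_rr, h0, map_sub, h01, sub_zero]

theorem lift_fix (P : Pres δ s) {n : ℕ} (z : (Fin n → G) →₀ ℚ) :
    ∃ y, mr (Ev s) y = y ∧ mr (ep G) y = z := by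
  obtain ⟨y, hy⟩ := mr_lift (ep G) z (fun x => ⟨single (1, 0) (z x), by simp [ep]⟩)
  refine ⟨mr (Ev s) y, ?_, ?_⟩
  · ext1 x; rw [mr_apply, mr_apply, Ev_Ev P]
  · ext1 x; rw [mr_apply, mr_apply, ep_Ev, ← hy, mr_apply]

theorem mr_exact0 (P : Pres δ s) {n : ℕ} (y : (Fin n → G) →₀ (G × Fin 3 →₀ ℚ))
    (h1 : mr (Ev s) y = y) (h2 : mr (ep G) y = 0) : ∃ u, mr (d1 s) u = y := by
  refine mr_lift _ _ fun x => exact0 P _ ?_ ?_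
  · rw [← mr_apply, h1]
  · rw [← mr_apply, h2]; rfl

theorem mr_exact1 (o : J) (ho : ∀ i, δ i o = 0) (P : Pres δ s) {n : ℕ}
    (y : (Fin n → G) →₀ (G × Fin 3 →₀ ℚ))
    (h1 : mr (d1 s) y = 0) : ∃ u, mr (d2 δ s) u = y := by
  refine mr_lift _ _ fun x => exact1 o ho P _ ?_
  rw [← mr_apply, h1]; rfl

theorem mr_exact2 (H : DS δ) (o : J) (ho : ∀ i, δ i o = 0) (P : Pres δ s) {n : ℕ}
    (y : (Fin n → G) →₀ (G × J →₀ ℚ)) (h1 : mr (d2 δ s) y = 0) : y = 0 := by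
  ext1 x
  refine d2_inj H o ho P (mk δ []) _ ?_
  rw [← mr_apply, h1]; rfl

theorem zig_forth (o : J) (ho : ∀ i, δ i o = 0) (P : Pres δ s) {n : ℕ}
    (z : (Fin (n + 2) → G) →₀ ℚ) (hz : dd (tr G) (n + 1) z = 0) :
    ∃ y0 y1 y2, Zig δ s n y0 y1 y2 ∧ mr (ep G) y0 = z := by
  obtain ⟨y0, hf, hy⟩ := lift_fix P z
  obtain ⟨y1, h1⟩ := mr_exact0 P (dd (rr G _) (n + 1) y0)
    (by rw [← dd_mr (rr G _) _ _ Ev_rr, hf])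
    (by rw [← dd_mr (rr G _) (tr G) (ep G) ep_rr, hy, hz])
  obtain ⟨y2, h2⟩ := mr_exact1 o ho P (dd (rr G _) n y1)
    (by rw [← dd_mr (rr G _) _ _ d1_rr, h1, dd_dd])
  exact ⟨y0, y1, y2, ⟨hf, h1.symm, h2.symm⟩, hy⟩

theorem H_big (H : DS δ) (o : J) (ho : ∀ i, δ i o = 0) (P : Pres δ s) (n : ℕ) :
    Subsingleton (barHomology ℚ G (n + 3)) := by
  apply barHomology_subsingleton
  intro z hz
  have hz : dd (tr G) (n + 2) z = 0 := by rw [← barDiff_eq]; exact hz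
  obtain ⟨y0, y1, y2, Z, hy⟩ := zig_forth (n := n + 1) o ho P z hz
  have h2 : dd (rr G _) n y2 = 0 := by
    apply mr_exact2 H o ho P
    rw [← dd_mr (rr G _) _ _ d2_rr, ← Z.e2, dd_dd]
  obtain ⟨x2, hx⟩ := vert_exact n y2 h2
  obtain ⟨w, hw⟩ := zig_back P Z x2 hx
  exact ⟨w, by rw [barDiff_eq, hw, hy]⟩

theorem zig_unique (H : DS δ) (o : J) (ho : ∀ i, δ i o = 0) (P : Pres δ s) {y0 y1 y2}
    (Z : Zig δ s 0 y0 y1 y2) (w) (hw : dd (tr G) 2 w = mr (ep G) y0) : aug y2 = 0 := by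
  obtain ⟨v, hf, hv⟩ := lift_fix P w
  obtain ⟨u1, h1⟩ := mr_exact0 P (y0 - dd (rr G _) 2 v)
    (by rw [map_sub, ← dd_mr (rr G _) _ _ Ev_rr, hf, Z.fix])
    (by rw [map_sub, ← dd_mr (rr G _) (tr G) (ep G) ep_rr, hv, hw, sub_self])
  obtain ⟨u2, h2⟩ := mr_exact1 o ho P (y1 - dd (rr G _) 1 u1)
    (by rw [map_sub, ← dd_mr (rr G _) _ _ d1_rr, h1, map_sub, dd_dd, sub_zero, ← Z.e1, sub_self])
  have h3 : y2 - dd (rr G _) 0 u2 = 0 := by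
    apply mr_exact2 H o ho P
    rw [map_sub, ← dd_mr (rr G _) _ _ d2_rr, h2, map_sub, dd_dd, sub_zero, ← Z.e2, sub_self]
  rw [sub_eq_zero.1 h3, aug_dd]

/-- sum of coefficients -/
noncomputable def sm (J : Type) : (J →₀ ℚ) →ₗ[ℚ] ℚ := linearCombination ℚ (fun _ => (1 : ℚ))

theorem aug_d2 (y2 : (Fin 0 → G) →₀ (G × J →₀ ℚ)) :
    aug (mr (d2 δ s) y2) = sm J (aug y2) • (∑ i : Fin 3, single i (1 : ℚ)) := by
  have : aug ∘ₗ mr (d2 δ s) = ((sm J).smulRight (∑ i : Fin 3, single i (1 : ℚ))) ∘ₗ aug := by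
    refine Finsupp.lhom_ext' fun g => Finsupp.lhom_ext fun p r => ?_
    obtain ⟨γ, x⟩ := p
    have h : d2 δ s (single (γ, x) r) = ∑ i : Fin 3, single (pt δ s i (γ, x), i) r := by
      simp [d2, Finset.smul_sum]
    simp only [LinearMap.comp_apply, lsingle_apply, mr_single, aug_single,
      LinearMap.smulRight_apply, h]
    rw [← lsingle_apply (R := ℚ), map_sum, map_sum]
    simp only [lsingle_apply, aug_single]
    simp [sm, Finset.smul_sum]
  exact DFunLike.congr_fun this y2

theorem zig_exists (P : Pres δ s) (y2 : (Fin 0 → G) →₀ (G × J →₀ ℚ))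
    (h : sm J (aug y2) = 0) : ∃ y0 y1, Zig δ s 0 y0 y1 y2 := by
  obtain ⟨y1, h1⟩ := vert_exact0 (mr (d2 δ s) y2) (by rw [aug_d2, h, zero_smul])
  obtain ⟨y0, h0⟩ := vert_exact 0 (mr (d1 s) y1) (by
    rw [dd_mr (rr G _) _ _ d1_rr, h1]
    refine Finsupp.ext fun x => ?_
    rw [mr_apply, mr_apply, d1_d2 P]; rfl)
  refine ⟨mr (Ev s) y0, y1, ⟨?_, ?_, h1⟩⟩
  · ext1 x; rw [mr_apply, mr_apply, Ev_Ev P]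
  · rw [dd_mr (rr G _) _ _ Ev_rr, h0]
    ext1 x; rw [mr_apply, mr_apply, Ev_d1 P]

theorem zig_sum {y0 y1 y2} (Z : Zig δ s 0 y0 y1 y2) : sm J (aug y2) = 0 := by
  have := aug_d2 (δ := δ) (s := s) y2
  rw [← Z.e2, aug_dd] at this
  have h := DFunLike.congr_fun this 0
  simpa [Fin.sum_univ_three] using h.symm

theorem zig_cycle {n : ℕ} {y0 y1 y2} (Z : Zig δ s n y0 y1 y2) : dd (tr G) (n + 1) (mr (ep G) y0) = 0 := by
  rw [dd_mr (rr G _) (tr G) (ep G) ep_rr, Z.e1]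
  ext1 x; rw [mr_apply, mr_apply, ep_d1]; rfl

variable (δ s) in
/-- the space of zigzags -/
def ZZ : Submodule ℚ (((Fin 2 → G) →₀ (G × Fin 3 →₀ ℚ)) ×
    ((Fin 1 → G) →₀ (G × Fin 3 →₀ ℚ)) × ((Fin 0 → G) →₀ (G × J →₀ ℚ))) where
  carrier := {y | Zig δ s 0 y.1 y.2.1 y.2.2}
  zero_mem' := ⟨by simp, by simp, by simp⟩
  add_mem' := fun {a b} ha hb => ⟨by simp [ha.fix, hb.fix], by simp [ha.e1, hb.e1],
    by simp [ha.e2, hb.e2]⟩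
  smul_mem' := fun r a ha => ⟨by simp [ha.fix], by simp [ha.e1], by simp [ha.e2]⟩

theorem range_equiv {M U V : Type} [AddCommGroup M] [Module ℚ M] [AddCommGroup U] [Module ℚ U]
    [AddCommGroup V] [Module ℚ V] (α : M →ₗ[ℚ] U) (β : M →ₗ[ℚ] V)
    (hk : LinearMap.ker α = LinearMap.ker β) :
    Nonempty (LinearMap.range α ≃ₗ[ℚ] LinearMap.range β) :=
  ⟨α.quotKerEquivRange.symm.trans
    ((Submodule.quotEquivOfEq _ _ hk).trans β.quotKerEquivRange)⟩

theorem H_two (H : DS δ) (o : J) (ho : ∀ i, δ i o = 0) (P : Pres δ s) :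
    Nonempty (barHomology ℚ G 2 ≃ₗ[ℚ] LinearMap.ker (sm J)) := by
  let α : ZZ δ s →ₗ[ℚ] ((Fin 2 → G) →₀ ℚ) ⧸ (barBoundaries ℚ G 2) :=
    (barBoundaries ℚ G 2).mkQ ∘ₗ mr (ep G) ∘ₗ LinearMap.fst ℚ _ _ ∘ₗ (ZZ δ s).subtype
  let β : ZZ δ s →ₗ[ℚ] (J →₀ ℚ) :=
    aug ∘ₗ LinearMap.snd ℚ _ _ ∘ₗ LinearMap.snd ℚ _ _ ∘ₗ (ZZ δ s).subtype
  have hα : LinearMap.range α = Submodule.map (barBoundaries ℚ G 2).mkQ (barCycles ℚ G 2) := by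
    apply le_antisymm
    · rintro _ ⟨⟨y, hy⟩, rfl⟩
      refine ⟨mr (ep G) y.1, ?_, rfl⟩
      change barDiff ℚ G 1 _ = 0
      rw [barDiff_eq]
      exact zig_cycle (show Zig δ s 0 _ _ _ from hy)
    · rintro _ ⟨z, hz, rfl⟩
      have hz : dd (tr G) 1 z = 0 := by rw [← barDiff_eq]; exact hz
      obtain ⟨y0, y1, y2, Z, rfl⟩ := zig_forth o ho P z hz
      exact ⟨⟨(y0, y1, y2), Z⟩, rfl⟩
  have hβ : LinearMap.range β = LinearMap.ker (sm J) := by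
    apply le_antisymm
    · rintro _ ⟨⟨y, hy⟩, rfl⟩
      exact zig_sum (show Zig δ s 0 _ _ _ from hy)
    · intro a ha
      obtain ⟨y0, y1, Z⟩ := zig_exists (δ := δ) (s := s) P (unaug a) (by rw [aug_unaug]; exact ha)
      exact ⟨⟨(y0, y1, unaug a), Z⟩, aug_unaug a⟩
  have hk : LinearMap.ker α = LinearMap.ker β := by
    ext ⟨y, hy⟩
    have Z : Zig δ s 0 _ _ _ := hy
    rw [LinearMap.mem_ker, LinearMap.mem_ker]
    constructor
    · intro h
      obtain ⟨w, hw⟩ := (Submodule.Quotient.mk_eq_zero _).1 h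
      rw [barDiff_eq] at hw
      exact zig_unique H o ho P Z w hw
    · intro h
      obtain ⟨x2, hx⟩ := vert_exact0 _ h
      obtain ⟨w, hw⟩ := zig_back P Z x2 hx
      refine (Submodule.Quotient.mk_eq_zero _).2 ⟨w, ?_⟩
      rw [barDiff_eq]
      exact hw
  obtain ⟨E⟩ := range_equiv (M := ↥(ZZ δ s)) α β hk
  have E1 : barHomology ℚ G 2 ≃ₗ[ℚ] LinearMap.range α := LinearEquiv.ofEq _ _ hα.symm
  have E4 : LinearMap.range β ≃ₗ[ℚ] LinearMap.ker (sm J) := LinearEquiv.ofEq _ _ hβ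
  exact ⟨E1.trans (E.trans E4)⟩

theorem sm_ker (q : ℕ) : Nonempty (LinearMap.ker (sm (Fin (q + 1))) ≃ₗ[ℚ] (Fin q → ℚ)) := by
  have h1 := LinearMap.finrank_range_add_finrank_ker (sm (Fin (q + 1)))
  have h2 : LinearMap.range (sm (Fin (q + 1))) = ⊤ := by
    rw [LinearMap.range_eq_top]
    intro r
    exact ⟨single 0 r, by simp [sm]⟩
  rw [h2] at h1
  simp at h1
  refine ⟨LinearEquiv.ofFinrankEq _ _ ?_⟩
  simp
  omega
end
end

end Stmt7

namespace Stmt7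
section
open Finsupp
variable (q : ℕ) (δ : Fin 3 → Fin (q + 1) → ZMod (q ^ 2 + q + 1))

theorem lattice_ds (hinj : ∀ i, Function.Injective (δ i))
    (hpds : ∀ i, IsPlanarDifferenceSet q (Set.range (δ i))) : DS δ where
  ex := by
    intro i a b hab
    obtain ⟨⟨x, y⟩, ⟨⟨⟨j, hj⟩, ⟨j', hj'⟩⟩, h⟩, -⟩ := (hpds i).2 (a - b) (sub_ne_zero.2 hab)
    simp only at hj hj' h
    subst hj hj'
    refine ⟨a - δ i j, j, j', by abel, ?_⟩
    rw [sub_add, h]; abel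
  inj := hinj
  uniq := by
    intro i j j' k k' hne h
    have h0 : δ i j - δ i j' ≠ 0 := sub_ne_zero.2 fun e => hne (hinj i e)
    obtain ⟨p, -, hu⟩ := (hpds i).2 _ h0
    have h1 := hu (δ i j, δ i j') ⟨⟨⟨j, rfl⟩, ⟨j', rfl⟩⟩, rfl⟩
    have h2 := hu (δ i k, δ i k') ⟨⟨⟨k, rfl⟩, ⟨k', rfl⟩⟩, h.symm⟩
    have h3 := h1.trans h2.symm
    rw [Prod.mk.injEq] at h3
    exact ⟨hinj i h3.1, hinj i h3.2⟩

/-- The powers of the generators. -/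
def sg (i : Fin 3) (a : ZMod (q ^ 2 + q + 1)) : PresentedGroup (singerRels q δ) :=
  (PresentedGroup.of (rels := singerRels q δ) i : PresentedGroup (singerRels q δ)) ^ a.val

theorem pres_aux : Pres δ (sg q δ) where
  add := by
    intro i a b
    have h : (PresentedGroup.of (rels := singerRels q δ) i) ^ (q ^ 2 + q + 1) = 1 := by
      have := PresentedGroup.one_of_mem (rels := singerRels q δ)
        (x := FreeGroup.of i ^ (q ^ 2 + q + 1)) (Or.inl ⟨i, rfl⟩)
      rw [map_pow] at this
      exact this
    change (PresentedGroup.of i : PresentedGroup (singerRels q δ)) ^ (a + b).val =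
      PresentedGroup.of i ^ a.val * PresentedGroup.of i ^ b.val
    rw [ZMod.val_add, ← pow_add, ← pow_mod_orderOf, ← pow_mod_orderOf _ (a.val + b.val),
      Nat.mod_mod_of_dvd _ (orderOf_dvd_of_pow_eq_one h)]
  rel := by
    intro j
    have := PresentedGroup.one_of_mem (rels := singerRels q δ)
        (x := FreeGroup.of 0 ^ (δ 0 j).val * FreeGroup.of 1 ^ (δ 1 j).val *
        FreeGroup.of 2 ^ (δ 2 j).val) (Or.inr ⟨j, rfl⟩)
    simp only [map_mul, map_pow] at this
    exact this
  gen := by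
    intro P hP
    have h : ∀ i, (PresentedGroup.of (rels := singerRels q δ) i : PresentedGroup (singerRels q δ)) ∈ P := by
      intro i
      by_cases hq : q = 0
      · have h1 : (PresentedGroup.of (rels := singerRels q δ) i) ^ (q ^ 2 + q + 1) = 1 := by
          have := PresentedGroup.one_of_mem (rels := singerRels q δ)
            (x := FreeGroup.of i ^ (q ^ 2 + q + 1)) (Or.inl ⟨i, rfl⟩)
          rw [map_pow] at this
          exact this
        simp only [hq, zero_pow two_ne_zero, zero_add, pow_one] at h1
        have h2 : (PresentedGroup.of (rels := singerRels q δ) i : PresentedGroup (singerRels q δ)) = 1 := h1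
        rw [h2]
        exact P.one_mem
      · have : Fact (1 < q ^ 2 + q + 1) := ⟨by have := Nat.pos_of_ne_zero hq; nlinarith⟩
        have h1 := hP i 1
        simp only [sg, ZMod.val_one, pow_one] at h1
        exact h1
    have h2 := PresentedGroup.closure_range_of (singerRels q δ)
    rw [eq_top_iff]
    have h3 : Subgroup.closure (Set.range (PresentedGroup.of (rels := singerRels q δ))) ≤
      (P : Subgroup (PresentedGroup (singerRels q δ))) := by
      rw [Subgroup.closure_le]
      rintro _ ⟨i, rfl⟩
      exact h i
    rw [h2] at h3
    exact h3
  lift := by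
    intro K _ f hadd hrel
    have hz : ∀ i, f i 0 = 1 := fun i => by
      have := hadd i 0 0
      simpa using this
    have hp : ∀ i (n : ℕ), f i 1 ^ n = f i (n : ZMod (q ^ 2 + q + 1)) := by
      intro i n
      induction n with
      | zero => simp [hz]
      | succ n ih => rw [pow_succ, ih, Nat.cast_succ, hadd]
    have hv : ∀ i (a : ZMod (q ^ 2 + q + 1)), f i 1 ^ a.val = f i a := by
      intro i a
      rw [hp, ZMod.natCast_zmod_val]
    have hr : ∀ r ∈ singerRels q δ, FreeGroup.lift (fun i => f i 1) r = 1 := by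
      rintro r (⟨i, rfl⟩ | ⟨j, rfl⟩)
      · rw [map_pow, FreeGroup.lift_apply_of, hp, ZMod.natCast_self, hz]
      · simp only [map_mul, map_pow, FreeGroup.lift_apply_of, hv, hrel]
    refine ⟨(PresentedGroup.toGroup hr : PresentedGroup (singerRels q δ) →* K), fun i a => ?_⟩
    change PresentedGroup.toGroup hr ((PresentedGroup.of i) ^ a.val) = _
    rw [map_pow, PresentedGroup.toGroup.of, hv]

theorem lattice_pres : Pres (G := SingerLattice q δ) δ (sg q δ) := pres_aux q δ
end

/-- Let `q ≥ 2` be a prime power, `N = q² + q + 1`, and let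
`δ₁, δ₂, δ₃ : {0, …, q} → ZMod N` be injections with `δᵢ(0) = 0` whose images are planar
difference sets of order `q`, and let `Γ` be the panel-regular lattice presented by
`⟨σ₁, σ₂, σ₃ ∣ σᵢ^N = 1, σ₁^{δ₁(j)} σ₂^{δ₂(j)} σ₃^{δ₃(j)} = 1 for all j⟩`.
Then the rational group homology of `Γ` is:  `H₀(Γ; ℚ) ≅ ℚ`, `H₂(Γ; ℚ) ≅ ℚ^q`, and
`H_j(Γ; ℚ) = 0` for every `j ∉ {0, 2}`. -/
theorem statement7 (q : ℕ) (hq : IsPrimePow q)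
    (δ : Fin 3 → Fin (q + 1) → ZMod (q ^ 2 + q + 1))
    (hinj : ∀ i, Function.Injective (δ i))
    (h0 : ∀ i, δ i 0 = 0)
    (hpds : ∀ i, IsPlanarDifferenceSet q (Set.range (δ i))) :
    Nonempty (barHomology ℚ (SingerLattice q δ) 0 ≃ₗ[ℚ] ℚ) ∧
    Nonempty (barHomology ℚ (SingerLattice q δ) 2 ≃ₗ[ℚ] (Fin q → ℚ)) ∧
    (∀ j : ℕ, j ≠ 0 → j ≠ 2 → Subsingleton (barHomology ℚ (SingerLattice q δ) j)) := by
  have H := lattice_ds q δ hinj hpds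
  have P := lattice_pres q δ
  refine ⟨H_zero, ?_, ?_⟩
  · obtain ⟨e⟩ := H_two H 0 h0 P
    obtain ⟨e'⟩ := sm_ker q
    exact ⟨e.trans e'⟩
  · intro j hj0 hj2
    match j, hj0, hj2 with
    | 0, h, _ => exact absurd rfl h
    | 1, _, _ => exact H_one P
    | 2, _, h => exact absurd rfl h
    | n + 3, _, _ => exact H_big H 0 h0 P n
end Stmt7
end
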